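/- Let H : ℝ^{2n} → ℝ be a smooth compactly supported autonomous Hamiltonian with no non-constant closed trajectory in time less than 1, and let φ be the time-1 map of its Hamiltonian flow. Then the Hofer norm of φ equals the total variation of H: ‖φ‖ = sup_x H(x) − inf_x H(x). -/

import Mathlib

/-!
The infimum is attained by `K = H`, whose Hofer length is `sup H - inf H`. The content is the lower
bound, and for it the one-sided estimate `max H ≤ ∫ sup K_t` suffices (`max_le_integral`): applied
to the conjugates of `-H` and `-K_t` by the swap `(x, y) ↦ (y, x)` it gives `-min H ≤ ∫ -inf K_t`,
and the two estimates add up (`totVar_le_hoferLength`).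

The one-sided estimate is a minimax argument for the Hamiltonian action on closed loops, carried
out in finite dimension. Loops are replaced by chains `z : ZMod (3 * m) → ℝ^{2n}`, with action
`Qact z`, the sum of the `⟨p_j, q_{j+1} - q_j⟩`, plus averages of Hamiltonians over three
consecutive slots of `m` vertices: the rescaled `K` forwards, `-r` times the rescaled `H`, and
`c * H`. Chains at which the gradient is very small are Euler schemes (`chain_step`) and shadow the
Hamiltonian flows (`euler_error`).

* Linking. Gradient steps are bounded perturbations of linear maps that do not decrease `Qact`;
  such maps form the class `Adm`. By Brouwer's theorem, the image under an `Adm` map of the affine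
  positive subspace through a constant chain meets a set where `Qact ≤ 0` (`linking`).
* Deformation. Along a homotopy of actions a superlevel set is carried into a superlevel set by an
  `Adm` map, if the level is compatible with the homotopy at almost critical chains (`push_level`).

At a maximum `p` of `H`, the action with a small coefficient `a` of `H` is at least `a * H p` on the
positive affine subspace (`start`). The coefficient is raised from `a` to almost `1` with almost no
loss: almost critical chains follow trajectories of `H` that almost close up in time less than one,
so by hypothesis they are almost constant and have `Qact ≈ 0` (`tau_stage`). Next `K` forwards and
`H` backwards are turned on by the conformal rescaling `s² K (x / s)`. Up to a factor `2 s`, the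
derivative of the action in `s` is the integral of `K - ½ dK(x)` along the trajectory minus the same
integral for `H`; these agree because the time-one maps agree (`action_eq`), so the level is again
almost preserved (`s_stage`). Finally the two copies of `H` are removed, which conservation of
energy permits (`r_stage`). The action of `K` alone is now at least almost `H p` on a linked family
of chains; at the chain of this family with `Qact ≤ 0` it is at most the Riemann sum of `sup K_t`.
-/

open Set

noncomputable section

/-- `ℝ^{2n}`, written as pairs consisting of the `n` x-coordinates and the `n` y-coordinates. -/
abbrev Esp (n : ℕ) : Type := (Fin n → ℝ) × (Fin n → ℝ)

/-- The standard symplectic form `ω₀ = Σ dxᵢ ∧ dyᵢ` on `ℝ^{2n}`. -/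
def omega0 {n : ℕ} (v w : Esp n) : ℝ := ∑ i, (v.1 i * w.2 i - v.2 i * w.1 i)

/-- The Hamiltonian vector field `X_H = J ∇H`, i.e. `X_H = (-∂H/∂y, ∂H/∂x)`. -/
def hamVF {n : ℕ} (H : Esp n → ℝ) (p : Esp n) : Esp n :=
  (fun i => - (fderiv ℝ H p) (0, Pi.single i 1),
   fun i => (fderiv ℝ H p) (Pi.single i 1, 0))

/-- Total variation `sup H - inf H`. -/
def totVar {n : ℕ} (F : Esp n → ℝ) : ℝ := sSup (Set.range F) - sInf (Set.range F)

/-- Hofer length `L(H) = ∫₀¹ (sup_x H_t - inf_x H_t) dt`. -/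
def hoferLength {n : ℕ} (H : ℝ → Esp n → ℝ) : ℝ := ∫ t in (0:ℝ)..1, totVar (H t)

/-- Support of a time-dependent Hamiltonian lies in a fixed compact set. -/
def IsCompactlySupported {n : ℕ} (H : ℝ → Esp n → ℝ) : Prop :=
  ∃ C : Set (Esp n), IsCompact C ∧ ∀ t x, x ∉ C → H t x = 0

/-- `φ` is the Hamiltonian isotopy generated by `H`. -/
def IsHamIsotopyOf {n : ℕ} (H : ℝ → Esp n → ℝ) (φ : ℝ → Esp n → Esp n) : Prop :=
  (∀ x, φ 0 x = x) ∧ ∀ x t, HasDerivAt (fun s => φ s x) (hamVF (H t) (φ t x)) t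

/-! ### The Brouwer fixed point theorem -/

/-- Euclidean space of dimension `d`. -/
abbrev Eu (d : ℕ) : Type := EuclideanSpace ℝ (Fin d)

/-- `det (1 + A)` is a linear combination, with weights independent of `A`, of the numbers
`det (1 + t i • A)` with arbitrarily small `t i`: Lagrange interpolation for the polynomial
`t ↦ det (1 + t A)` of degree at most `d`. -/
lemma det_one_add_interp (d : ℕ) (t0 : ℝ) (ht0 : 0 < t0) :
    ∃ (w t : Fin (d + 1) → ℝ), (∀ i, 0 < t i ∧ t i ≤ t0) ∧
      ∀ A : Eu d →L[ℝ] Eu d,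
        (1 + A).det = ∑ i, w i * (1 + t i • A).det := by
  classical
  set t : Fin (d + 1) → ℝ := fun i => t0 / (i + 1) with ht
  have htinj : Function.Injective t := by
    intro i j hij
    simp only [ht] at hij
    have hi : (0 : ℝ) < i + 1 := by positivity
    have hj : (0 : ℝ) < j + 1 := by positivity
    rw [div_eq_div_iff hi.ne' hj.ne'] at hij
    have := mul_left_cancel₀ ht0.ne' hij
    have h2 : (j : ℝ) = i := by linarith
    exact Fin.ext (by exact_mod_cast h2.symm)
  refine ⟨fun i => (Lagrange.basis Finset.univ t i).eval 1, t, ?_, ?_⟩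
  · intro i
    refine ⟨by positivity, div_le_self ht0.le ?_⟩
    linarith [(Nat.cast_nonneg i : (0 : ℝ) ≤ (i : ℕ))]
  · intro A
    set b := (EuclideanSpace.basisFun (Fin d) ℝ).toBasis
    set M := LinearMap.toMatrix b b (A : Eu d →ₗ[ℝ] _) with hM
    set f : Polynomial ℝ := Matrix.det ((Polynomial.X : Polynomial ℝ) • M.map Polynomial.C
      + (1 : Matrix (Fin d) (Fin d) ℝ).map Polynomial.C) with hf
    have heval : ∀ s : ℝ, f.eval s = (1 + s • A).det := by
      intro s
      have h1 : (1 + s • A).det = LinearMap.det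
          ((1 + s • A : Eu d →L[ℝ] _) : Eu d →ₗ[ℝ] _) := rfl
      rw [h1, ← LinearMap.det_toMatrix b, hf, ← Polynomial.coe_evalRingHom, RingHom.map_det]
      congr 1
      have h2 : ((1 + s • A : Eu d →L[ℝ] _) :
          Eu d →ₗ[ℝ] _) = LinearMap.id + s • (A : _ →ₗ[ℝ] _) := by
        ext x; simp
      have h4 : LinearMap.toMatrix b b (LinearMap.id + s • (A : Eu d →ₗ[ℝ] Eu d)) = 1 + s • M := by
        simp [hM]
      rw [h2, h4]
      ext i j
      by_cases hij : i = j
      · subst hij; simp [add_comm]; ring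
      · simp [hij]; ring
    have hdeg : f.degree < (Finset.univ : Finset (Fin (d + 1))).card := by
      refine lt_of_le_of_lt Polynomial.degree_le_natDegree ?_
      have := Polynomial.natDegree_det_X_add_C_le M 1
      rw [← hf, Fintype.card_fin] at this
      simp only [Finset.card_univ, Fintype.card_fin]
      exact_mod_cast Nat.lt_succ_of_le this
    have := Lagrange.eq_interpolate (s := Finset.univ) (v := t) (htinj.injOn) hdeg
    have h3 := congrArg (Polynomial.eval 1) this
    rw [heval, Lagrange.interpolate_apply, Polynomial.eval_finsetSum] at h3
    simp only [Polynomial.eval_mul, Polynomial.eval_C, heval, one_smul] at h3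
    rw [h3]
    exact Finset.sum_congr rfl fun i _ => mul_comm _ _

lemma det_one_add_pos {d : ℕ} (A : Eu d →L[ℝ] Eu d)
    (hA : ‖A‖ < 1) : 0 < (1 + A).det := by
  have hne : ∀ s ∈ Icc (0 : ℝ) 1, (1 + s • A).det ≠ 0 := by
    intro s hs h0
    have h1 : LinearMap.det ((1 + s • A : Eu d →L[ℝ] _) :
      Eu d →ₗ[ℝ] _) = 0 := h0
    have hk := LinearMap.bot_lt_ker_of_det_eq_zero h1
    obtain ⟨x, hx, hx0⟩ := (Submodule.ne_bot_iff _).1 hk.ne'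
    have hx1 : x + s • A x = 0 := by simpa using hx
    have h2 : ‖x‖ = s * ‖A x‖ := by
      have h4 := congrArg norm (eq_neg_of_add_eq_zero_left hx1)
      rwa [norm_neg, norm_smul, Real.norm_of_nonneg hs.1] at h4
    have h3 := A.le_opNorm x
    have hxp : 0 < ‖x‖ := norm_pos_iff.2 hx0
    nlinarith [hs.1, hs.2, norm_nonneg (A x)]
  by_contra hneg
  have hcont : ContinuousOn (fun s : ℝ => (1 + s • A).det) (Icc 0 1) := by
    refine Continuous.continuousOn ?_
    exact ContinuousLinearMap.continuous_det.comp (by fun_prop)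
  have h0 : (1 + (0 : ℝ) • A).det = 1 := by simp [ContinuousLinearMap.det]
  have h1 : (1 + (1 : ℝ) • A).det ≤ 0 := by simpa using hneg
  obtain ⟨s, hs, hs0⟩ := intermediate_value_Icc' zero_le_one hcont
    (show (0 : ℝ) ∈ Icc _ _ from ⟨h1, by rw [h0]; exact zero_le_one⟩)
  exact hne s hs hs0

/-- For small `t` the map `x ↦ (1 - t) x + t r(x)` is a diffeomorphism of the open ball onto itself
when `r` maps the ball to itself and fixes the sphere pointwise; the integral of its Jacobian over
the ball is therefore the volume of the ball. -/
lemma integral_det_eq_volume {d : ℕ} {R : ℝ} (hR : 0 < R)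
    {r : Eu d → Eu d}
    {h' : Eu d → Eu d →L[ℝ] Eu d}
    {L : NNReal}
    (hd : ∀ x ∈ Metric.closedBall 0 R, HasFDerivAt (fun x => r x - x) (h' x) x)
    (hL : ∀ x ∈ Metric.closedBall 0 R, ‖h' x‖₊ ≤ L)
    (hS : ∀ x, ‖x‖ = R → r x = x) (hB : ∀ x, ‖x‖ ≤ R → ‖r x‖ ≤ R)
    {t : ℝ} (ht : 0 < t) (ht1 : t < 1) (htL : t * L < 1) :
    ∫ x in Metric.ball 0 R, (1 + t • h' x).det = (MeasureTheory.volume.real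
      (Metric.ball (0 : Eu d) R)) := by
  set f : Eu d → Eu d := fun x => x + t • (r x - x) with hf
  have hfd : ∀ x ∈ Metric.closedBall 0 R, HasFDerivAt f (1 + t • h' x) x := by
    intro x hx
    exact (hasFDerivAt_id x).add ((hd x hx).fun_const_smul t)
  have hlip : LipschitzOnWith L (fun x => r x - x) (Metric.closedBall 0 R) :=
    (convex_closedBall 0 R).lipschitzOnWith_of_nnnorm_hasFDerivWithin_le
      (fun x hx => (hd x hx).hasFDerivWithinAt) hL
  have happ : ApproximatesLinearOn f ((ContinuousLinearEquiv.refl ℝ (Eu d) : Eu d ≃L[ℝ] Eu d) : Eu d →L[ℝ] Eu d)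
      (Metric.ball 0 R) (t.toNNReal * L) := by
    intro x hx y hy
    have := hlip.dist_le_mul x (Metric.ball_subset_closedBall hx) y
      (Metric.ball_subset_closedBall hy)
    rw [dist_eq_norm, dist_eq_norm] at this
    have h2 : f x - f y - ((ContinuousLinearEquiv.refl ℝ (Eu d) : Eu d ≃L[ℝ] Eu d) : Eu d →L[ℝ] Eu d) (x - y)
      = t • ((r x - x) - (r y - y)) := by
      simp only [hf, ContinuousLinearEquiv.coe_refl, ContinuousLinearMap.coe_id', id_eq]
      rw [smul_sub t (r x - x)]; abel
    rw [h2, norm_smul, Real.norm_of_nonneg ht.le]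
    calc t * _ ≤ t * (L * ‖x - y‖) := by gcongr
      _ = _ := by rw [NNReal.coe_mul, mul_assoc, Real.coe_toNNReal _ ht.le]
  have hc : Subsingleton (Eu d) ∨ (t.toNNReal * L : NNReal) <
      ‖(((ContinuousLinearEquiv.refl ℝ (Eu d) : Eu d ≃L[ℝ] Eu d).symm : Eu d ≃L[ℝ] Eu d) : Eu d →L[ℝ] Eu d)‖₊⁻¹ := by
    rcases subsingleton_or_nontrivial (Eu d) with h | h
    · exact Or.inl h
    · right
      have : ‖(((ContinuousLinearEquiv.refl ℝ (Eu d) : Eu d ≃L[ℝ] Eu d).symm : Eu d ≃L[ℝ] Eu d) : Eu d →L[ℝ] Eu d)‖₊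
        = 1 := by
        ext; simp
      rw [this, inv_one]
      exact_mod_cast (show (((t.toNNReal * L : NNReal)) : ℝ) < 1 from by
        rw [NNReal.coe_mul, Real.coe_toNNReal _ ht.le]; exact htL)
  have hinj : InjOn f (Metric.ball 0 R) := happ.injOn hc
  have hopen : IsOpen (f '' Metric.ball 0 R) :=
    (happ.toOpenPartialHomeomorph f _ hc Metric.isOpen_ball).open_target
  have hcontf : ContinuousOn f (Metric.closedBall 0 R) :=
    fun x hx => (hfd x hx).continuousAt.continuousWithinAt
  have hmaps : ∀ x ∈ Metric.ball (0 : Eu d) R, f x ∈ Metric.ball (0 : Eu d) R := by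
    intro x hx
    rw [mem_ball_zero_iff] at *
    have h1 : f x = (1 - t) • x + t • r x := by
      simp only [hf]; rw [smul_sub, sub_smul, one_smul]; abel
    have h2 := hB x hx.le
    calc ‖f x‖ ≤ (1 - t) * ‖x‖ + t * ‖r x‖ := by
          rw [h1]
          refine (norm_add_le _ _).trans_eq ?_
          rw [norm_smul, norm_smul, Real.norm_of_nonneg ht.le, Real.norm_of_nonneg (by linarith)]
      _ < R := by nlinarith
  have hsurj : Metric.ball (0 : Eu d) R ⊆ f '' Metric.ball 0 R := by
    refine (convex_ball (0 : Eu d) R).isPreconnected.subset_of_closure_inter_subset hopen ?_ ?_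
    · have h0 : (0 : Eu d) ∈ Metric.ball 0 R := Metric.mem_ball_self hR
      exact ⟨f 0, hmaps 0 h0, mem_image_of_mem _ h0⟩
    · rintro y ⟨hy, hyb⟩
      have hcl : IsClosed (f '' Metric.closedBall 0 R) :=
        ((isCompact_closedBall 0 R).image_of_continuousOn hcontf).isClosed
      have := closure_minimal (image_mono Metric.ball_subset_closedBall) hcl hy
      obtain ⟨x, hx, rfl⟩ := this
      rw [mem_closedBall_zero_iff] at hx
      rcases hx.lt_or_eq with h | h
      · exact mem_image_of_mem _ (mem_ball_zero_iff.2 h)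
      · exfalso
        have : f x = x := by simp [hf, hS x h]
        rw [this, mem_ball_zero_iff] at hyb
        linarith
  have himg : f '' Metric.ball 0 R = Metric.ball 0 R :=
    Subset.antisymm (by rintro _ ⟨x, hx, rfl⟩; exact hmaps x hx) hsurj
  have hJ := MeasureTheory.integral_image_eq_integral_abs_det_fderiv_smul (E := Eu d) (F := ℝ)
    MeasureTheory.volume (s := Metric.ball 0 R) (f := f) (f' := fun x => 1 + t • h' x)
    measurableSet_ball
    (fun x hx => (hfd x (Metric.ball_subset_closedBall hx)).hasFDerivWithinAt) hinj (fun _ => 1)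
  rw [himg] at hJ
  have h4 : ∫ x in Metric.ball (0 : Eu d) R, (1 + t • h' x).det =
      ∫ x in Metric.ball (0 : Eu d) R, |(1 + t • h' x).det| • (1 : ℝ) := by
    refine MeasureTheory.setIntegral_congr_fun measurableSet_ball fun x hx => ?_
    have hx' := hL x (Metric.ball_subset_closedBall hx)
    have hx'' : ‖h' x‖ ≤ L := hx'
    have : 0 < (1 + t • h' x).det := by
      apply det_one_add_pos
      rw [norm_smul, Real.norm_of_nonneg ht.le]
      nlinarith
    simp [abs_of_pos this]
  rw [h4, ← hJ]
  simp

/-- No-retraction theorem for the Euclidean ball, in `C¹` form. The determinant of `Dr`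
vanishes on the ball because `r` takes values in the sphere, whereas `integral_det_eq_volume` and
`det_one_add_interp` identify its integral with the volume of the ball. -/
lemma no_retraction {d : ℕ} {R : ℝ} (hR : 0 < R) {U : Set (Eu d)}
    (hU : IsOpen U) (hRU : Metric.closedBall 0 R ⊆ U)
    {r : Eu d → Eu d} (hr : ContDiffOn ℝ 1 r U)
    (hS : ∀ x, ‖x‖ = R → r x = x) (hB : ∀ x, ‖x‖ ≤ R → ‖r x‖ = R) : False := by
  set h' : Eu d → Eu d →L[ℝ] Eu d := fun x => fderiv ℝ r x - 1 with hh'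
  have hrd : ∀ x ∈ Metric.closedBall 0 R, HasFDerivAt r (fderiv ℝ r x) x := fun x hx =>
    ((hr.differentiableOn one_ne_zero).differentiableAt (hU.mem_nhds (hRU hx))).hasFDerivAt
  have hd : ∀ x ∈ Metric.closedBall 0 R, HasFDerivAt (fun x => r x - x) (h' x) x := fun x hx =>
    (hrd x hx).sub (hasFDerivAt_id x)
  have hcont : ContinuousOn h' (Metric.closedBall 0 R) :=
    ((hr.continuousOn_fderiv_of_isOpen hU le_rfl).mono hRU).sub continuousOn_const
  obtain ⟨L, hL⟩ := (isCompact_closedBall (0 : Eu d) R).exists_bound_of_continuousOn hcont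
  set L' : NNReal := ⟨max L 0, le_max_right _ _⟩ with hL'
  have hL2 : ∀ x ∈ Metric.closedBall 0 R, ‖h' x‖₊ ≤ L' := fun x hx =>
    (hL x hx).trans (le_max_left _ _)
  have hLpos : (0 : ℝ) ≤ L' := L'.2
  obtain ⟨w, t, ht, hwt⟩ := det_one_add_interp d (1 / (L' + 2)) (by positivity)
  have ht' : ∀ i, t i < 1 ∧ t i * L' < 1 := by
    intro i
    have h1 := (ht i).2
    have h2 : t i * (L' + 2) ≤ 1 := by rwa [le_div_iff₀ (by positivity)] at h1
    have := (ht i).1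
    constructor <;> nlinarith
  have hintv : ∀ i, ∫ x in Metric.ball (0 : Eu d) R, (1 + t i • h' x).det =
      MeasureTheory.volume.real (Metric.ball (0 : Eu d) R) := fun i =>
    integral_det_eq_volume hR hd hL2 hS (fun x hx => (hB x hx).le) (ht i).1 (ht' i).1 (ht' i).2
  have hw1 : ∑ i, w i = 1 := by
    have := hwt 0
    simpa [ContinuousLinearMap.det] using this.symm
  have hzero : ∀ x ∈ Metric.ball (0 : Eu d) R, (1 + h' x).det = 0 := by
    intro x hx
    have h1 : 1 + h' x = fderiv ℝ r x := by simp [hh']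
    rw [h1]
    by_contra hne
    have hne' : LinearMap.det (fderiv ℝ r x : Eu d →ₗ[ℝ] Eu d) ≠ 0 := hne
    -- The constant function `‖r‖ ^ 2` would have derivative `2 ‖r x‖ ^ 2` in the direction `v` with
    -- `Dr v = r x`.
    obtain ⟨v, hv⟩ := (LinearMap.equivOfDetNeZero _ hne').surjective (r x)
    have hv' : fderiv ℝ r x v = r x := hv
    have hder : HasFDerivAt (fun y => ‖r y‖ ^ 2) (2 • (innerSL ℝ (r x)).comp (fderiv ℝ r x)) x :=
      (hrd x (Metric.ball_subset_closedBall hx)).norm_sq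
    have hder2 : HasFDerivAt (fun y => ‖r y‖ ^ 2) (0 : Eu d →L[ℝ] ℝ) x := by
      refine (hasFDerivAt_const (R ^ 2) x).congr_of_eventuallyEq ?_
      filter_upwards [Metric.isOpen_ball.mem_nhds hx] with y hy
      rw [hB y (mem_ball_zero_iff.1 hy).le]
    have := DFunLike.congr_fun (hder.unique hder2) v
    simp [hv'] at this
    have h3 := hB x (mem_ball_zero_iff.1 hx).le
    rw [this, norm_zero] at h3
    exact hR.ne h3
  have hintg : ∀ i, MeasureTheory.IntegrableOn (fun x => (1 + t i • h' x).det)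
      (Metric.ball (0 : Eu d) R) := by
    intro i
    have : ContinuousOn (fun x => (1 + t i • h' x).det) (Metric.closedBall (0 : Eu d) R) :=
      ContinuousLinearMap.continuous_det.comp_continuousOn
        (continuousOn_const.add (ContinuousOn.fun_const_smul hcont (t i)))
    exact (this.integrableOn_compact (isCompact_closedBall 0 R)).mono_set
      Metric.ball_subset_closedBall
  have h0 : ∫ x in Metric.ball (0 : Eu d) R, (1 + h' x).det = 0 := by
    rw [MeasureTheory.setIntegral_congr_fun measurableSet_ball (g := fun _ => (0 : ℝ)) hzero]
    simp
  have h1 : ∫ x in Metric.ball (0 : Eu d) R, (1 + h' x).det =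
      MeasureTheory.volume.real (Metric.ball (0 : Eu d) R) := by
    have hw2 : (fun x => (1 + h' x).det) = fun x => ∑ i, w i * (1 + t i • h' x).det :=
      funext fun x => hwt _
    rw [hw2, MeasureTheory.integral_finsetSum _ (fun i _ => (hintg i).const_mul _)]
    simp_rw [MeasureTheory.integral_const_mul, hintv]
    rw [← Finset.sum_mul, hw1, one_mul]
  have hpos : 0 < MeasureTheory.volume.real (Metric.ball (0 : Eu d) R) :=
    ENNReal.toReal_pos (Metric.measure_ball_pos _ _ hR).ne' MeasureTheory.measure_ball_lt_top.ne
  linarith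

/-- Brouwer's theorem in the form used below: a bounded `C¹` perturbation of the identity has
a zero. After cutting `b` off, `x + b x` is the identity near a large sphere, and without zeros its
radial projection to that sphere would be a retraction. -/
lemma exists_zero_id_add_bounded {d : ℕ}
    (b : Eu d → Eu d) (hb : ContDiff ℝ 1 b) (C : ℝ)
    (hC : ∀ x, ‖b x‖ ≤ C) : ∃ x, x + b x = 0 := by
  by_contra hno
  push Not at hno
  have hC0 : 0 ≤ C := (norm_nonneg _).trans (hC 0)
  let χ : ContDiffBump (0 : Eu d) := ⟨C + 1, C + 2, by linarith, by linarith⟩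
  set G : Eu d → Eu d := fun x => x + χ x • b x with hG
  have hGd : ContDiff ℝ 1 G := contDiff_id.add (χ.contDiff.smul hb)
  have hG0 : ∀ x, G x ≠ 0 := by
    intro x hx
    have h1 : ‖x‖ ≤ C := by
      rw [eq_neg_of_add_eq_zero_left hx, norm_neg, norm_smul, Real.norm_of_nonneg χ.nonneg]
      calc _ ≤ 1 * C := mul_le_mul χ.le_one (hC x) (norm_nonneg _) zero_le_one
        _ = C := one_mul C
    have h2 : χ x = 1 := χ.one_of_mem_closedBall (by
      rw [mem_closedBall_zero_iff]; exact h1.trans (by simp [χ]))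
    have h3 : x + χ x • b x = 0 := hx
    rw [h2, one_smul] at h3
    exact hno x h3
  have hR : (0 : ℝ) < C + 2 := by linarith
  refine no_retraction (R := C + 2) hR isOpen_univ (subset_univ _)
    (r := fun x => ((C + 2) / ‖G x‖) • G x) ?_ ?_ ?_
  · refine ContDiff.contDiffOn ?_
    exact (contDiff_const.div (hGd.norm ℝ hG0) (fun x => norm_ne_zero_iff.2 (hG0 x))).smul hGd
  · intro x hx
    have h1 : χ x = 0 := χ.zero_of_le_dist (by simp [hx, χ])
    have h2 : G x = x := by simp [hG, h1]
    rw [h2, hx, div_self hR.ne', one_smul]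
  · intro x _
    have := norm_pos_iff.2 (hG0 x)
    rw [norm_smul, Real.norm_of_nonneg (by positivity)]
    field_simp

/-- Bounded `C¹` perturbations of an injective endomorphism `S` have zeros: compose with the inverse
of `S` to reduce to `exists_zero_id_add_bounded`. -/
lemma exists_zero_linear_add_bounded {Y : Type*} [NormedAddCommGroup Y] [NormedSpace ℝ Y]
    [FiniteDimensional ℝ Y] (S : Y →ₗ[ℝ] Y) (hS : Function.Injective S)
    (b : Y → Y) (hb : ContDiff ℝ 1 b) (C : ℝ) (hC : ∀ x, ‖b x‖ ≤ C) :
    ∃ u, S u + b u = 0 := by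
  let e : Y ≃L[ℝ] Eu (Module.finrank ℝ Y) := toEuclidean
  let Si : Y ≃L[ℝ] Y := (LinearEquiv.ofInjectiveEndo S hS).toContinuousLinearEquiv
  let T : Y →L[ℝ] Eu (Module.finrank ℝ Y) :=
    (e : Y →L[ℝ] _).comp (Si.symm : Y →L[ℝ] Y)
  obtain ⟨x, hx⟩ := exists_zero_id_add_bounded (fun x => T (b (e.symm x)))
    (T.contDiff.comp (hb.comp e.symm.contDiff)) (‖T‖ * C)
    (fun x => (T.le_opNorm _).trans (by gcongr; exact hC _))
  refine ⟨e.symm x, ?_⟩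
  have h1 : e (e.symm x + Si.symm (b (e.symm x))) = 0 := by
    rw [map_add, e.apply_symm_apply]; exact hx
  have h2 : e.symm x + Si.symm (b (e.symm x)) = 0 :=
    e.map_eq_zero_iff.1 h1
  have h3 := congrArg Si h2
  rw [map_add, Si.apply_symm_apply, map_zero] at h3
  exact h3

/-! ### Discrete action, gradient steps and linking -/

/-- The Euclidean inner product on `ℝ^{2n}`. -/
def dot {n : ℕ} (a b : Esp n) : ℝ := ∑ i, (a.1 i * b.1 i + a.2 i * b.2 i)

/-- The Euclidean gradient of `f`. -/
def egrad {n : ℕ} (f : Esp n → ℝ) (p : Esp n) : Esp n :=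
  (fun i => fderiv ℝ f p (Pi.single i 1, 0), fun i => fderiv ℝ f p (0, Pi.single i 1))

lemma dot_self_nonneg {n : ℕ} (a : Esp n) : 0 ≤ dot a a :=
  Finset.sum_nonneg fun i _ => by nlinarith [sq_nonneg (a.1 i), sq_nonneg (a.2 i)]

lemma norm_sq_le_dot {n : ℕ} (a : Esp n) : ‖a‖ ^ 2 ≤ dot a a := by
  have key : ‖a‖ ≤ √(dot a a) := by
    have h : ∀ i, a.1 i ^ 2 + a.2 i ^ 2 ≤ dot a a := fun i => by
      have := Finset.single_le_sum (f := fun i => a.1 i * a.1 i + a.2 i * a.2 i)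
        (fun i _ => by nlinarith [sq_nonneg (a.1 i), sq_nonneg (a.2 i)]) (Finset.mem_univ i)
      simp only [dot]
      nlinarith
    rw [Prod.norm_def, max_le_iff, pi_norm_le_iff_of_nonneg (Real.sqrt_nonneg _),
      pi_norm_le_iff_of_nonneg (Real.sqrt_nonneg _)]
    exact ⟨fun i => Real.abs_le_sqrt (by nlinarith [h i, sq_nonneg (a.2 i)]),
      fun i => Real.abs_le_sqrt (by nlinarith [h i, sq_nonneg (a.1 i)])⟩
  calc ‖a‖ ^ 2 ≤ √(dot a a) ^ 2 := by gcongr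
    _ = dot a a := Real.sq_sqrt (dot_self_nonneg a)

lemma esp_eq_sum {n : ℕ} (v : Esp n) :
    v = ∑ i, (v.1 i • ((Pi.single i 1, 0) : Esp n) + v.2 i • ((0, Pi.single i 1) : Esp n)) := by
  ext j
  · simp [Prod.fst_sum, Finset.sum_apply, Pi.single_apply]
  · simp [Prod.snd_sum, Finset.sum_apply, Pi.single_apply]

lemma linear_eq_dot {n : ℕ} (l : Esp n →L[ℝ] ℝ) (v : Esp n) :
    l v = dot (fun i => l (Pi.single i 1, 0), fun i => l (0, Pi.single i 1)) v := by
  conv_lhs => rw [esp_eq_sum v]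
  simp only [map_sum, map_add, map_smul, smul_eq_mul, dot]
  exact Finset.sum_congr rfl fun i _ => by ring

lemma fderiv_eq_dot {n : ℕ} (f : Esp n → ℝ) (p v : Esp n) :
    fderiv ℝ f p v = dot (egrad f p) v := linear_eq_dot _ v

lemma norm_single_fst {n : ℕ} (i : Fin n) : ‖((Pi.single i 1, 0) : Esp n)‖ = 1 := by
  simp [Prod.norm_def, Pi.norm_single]

lemma norm_single_snd {n : ℕ} (i : Fin n) : ‖((0, Pi.single i 1) : Esp n)‖ = 1 := by
  simp [Prod.norm_def, Pi.norm_single]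

lemma norm_egrad_le {n : ℕ} (f : Esp n → ℝ) (p : Esp n) : ‖egrad f p‖ ≤ ‖fderiv ℝ f p‖ := by
  rw [Prod.norm_def, max_le_iff, pi_norm_le_iff_of_nonneg (norm_nonneg _),
      pi_norm_le_iff_of_nonneg (norm_nonneg _)]
  refine ⟨fun i => ?_, fun i => ?_⟩
  · have h := (fderiv ℝ f p).le_opNorm (Pi.single i 1, 0)
    rwa [norm_single_fst, mul_one] at h
  · have h := (fderiv ℝ f p).le_opNorm (0, Pi.single i 1)
    rwa [norm_single_snd, mul_one] at h

/-- The linear part of the gradient of the discrete action. -/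
def Aop (N n : ℕ) : (ZMod N → Esp n) →ₗ[ℝ] (ZMod N → Esp n) where
  toFun z := fun j => ((z (j - 1)).2 - (z j).2, (z (j + 1)).1 - (z j).1)
  map_add' z w := by ext j i <;> simp <;> ring
  map_smul' c z := by ext j i <;> simp <;> ring

section action

variable {N n : ℕ} [NeZero N]

/-- The quadratic part `∑ ⟨p_j, q_{j+1} - q_j⟩` of the discrete action of a closed chain. -/
def Qact (z : ZMod N → Esp n) : ℝ :=
  ∑ j, ∑ i, (z j).2 i * ((z (j + 1)).1 i - (z j).1 i)

/-- Discrete Hamiltonian action with Hamiltonian `f j` at the `j`-th vertex. -/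
def dAct (f : ZMod N → Esp n → ℝ) (z : ZMod N → Esp n) : ℝ := Qact z + ∑ j, f j (z j)

/-- Gradient of the discrete action. -/
def gradF (f : ZMod N → Esp n → ℝ) (z : ZMod N → Esp n) : ZMod N → Esp n :=
  fun j => Aop N n z j + egrad (f j) (z j)

/-- Squared Euclidean norm of the gradient of the discrete action. -/
def NF (f : ZMod N → Esp n → ℝ) (z : ZMod N → Esp n) : ℝ := ∑ j, dot (gradF f z j) (gradF f z j)

lemma sum_shift {M : Type*} [AddCommMonoid M] (g : ZMod N → M) : ∑ j, g (j + 1) = ∑ j, g j :=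
  Fintype.sum_equiv (Equiv.addRight 1) _ _ fun _ => rfl

lemma dot_add_left (a b c : Esp n) : dot (a + b) c = dot a c + dot b c := by
  simp only [dot, ← Finset.sum_add_distrib]
  exact Finset.sum_congr rfl fun i _ => by simp; ring

lemma dot_smul_right (t : ℝ) (a c : Esp n) : dot a (t • c) = t * dot a c := by
  simp only [dot, Finset.mul_sum]
  exact Finset.sum_congr rfl fun i _ => by simp; ring

lemma dot_smul_left (t : ℝ) (a c : Esp n) : dot (t • a) c = t * dot a c := by
  simp only [dot, Finset.mul_sum]
  exact Finset.sum_congr rfl fun i _ => by simp; ring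

lemma Qact_add (z v : ZMod N → Esp n) :
    Qact (z + v) = Qact z + ∑ j, dot (Aop N n z j) (v j) + Qact v := by
  have h : ∑ j, ∑ i, (z (j - 1)).2 i * (v j).1 i = ∑ j, ∑ i, (z j).2 i * (v (j + 1)).1 i := by
    rw [← sum_shift (fun j => ∑ i, (z (j - 1)).2 i * (v j).1 i)]
    simp
  have h2 : ∑ j, dot (Aop N n z j) (v j) = (∑ j, ∑ i, (z (j - 1)).2 i * (v j).1 i) +
      ∑ j, ∑ i, (- (z j).2 i * (v j).1 i + ((z (j + 1)).1 i - (z j).1 i) * (v j).2 i) := by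
    simp only [← Finset.sum_add_distrib, dot]
    refine Finset.sum_congr rfl fun j _ => Finset.sum_congr rfl fun i _ => ?_
    simp [Aop]; ring
  rw [h2, h]
  simp only [Qact, ← Finset.sum_add_distrib]
  refine Finset.sum_congr rfl fun j _ => Finset.sum_congr rfl fun i _ => ?_
  simp; ring

lemma neg_sum_dot_le_Qact (v : ZMod N → Esp n) : - ∑ j, dot (v j) (v j) ≤ Qact v := by
  have h : ∑ j, dot (v j) (v j) = ∑ j, ∑ i, ((v j).2 i ^ 2 + (v j).1 i ^ 2 / 2)
      + ∑ j, ∑ i, (v (j + 1)).1 i ^ 2 / 2 := by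
    rw [sum_shift (fun j => ∑ i, (v j).1 i ^ 2 / 2)]
    simp only [← Finset.sum_add_distrib, dot]
    exact Finset.sum_congr rfl fun j _ => Finset.sum_congr rfl fun i _ => by ring
  rw [h, neg_le_iff_add_nonneg, Qact]
  simp only [← Finset.sum_add_distrib]
  refine Finset.sum_nonneg fun j _ => Finset.sum_nonneg fun i _ => ?_
  nlinarith [sq_nonneg ((v j).2 i + (v (j + 1)).1 i), sq_nonneg ((v j).2 i - (v j).1 i)]

/-- Quadratic lower Taylor bound for a function with Lipschitz derivative. -/
lemma taylor_bound {E : Type*} [NormedAddCommGroup E] [NormedSpace ℝ E] {f : E → ℝ}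
    (hf : Differentiable ℝ f) {L : ℝ} (hL : ∀ x y, ‖fderiv ℝ f x - fderiv ℝ f y‖ ≤ L * ‖x - y‖)
    (x v : E) : |f (x + v) - f x - fderiv ℝ f x v| ≤ L * ‖v‖ ^ 2 := by
  rcases eq_or_ne v 0 with rfl | hv
  · simp
  have hL0 : 0 ≤ L := by
    have h1 := (norm_nonneg _).trans (hL v 0)
    rw [sub_zero] at h1
    exact nonneg_of_mul_nonneg_left h1 (norm_pos_iff.2 hv)
  have := Convex.norm_image_sub_le_of_norm_fderiv_le' (𝕜 := ℝ) (f := f) (C := L * ‖v‖)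
    (s := Metric.closedBall x ‖v‖) (x := x) (y := x + v) (φ := fderiv ℝ f x)
    (fun y _ => hf y) (fun y hy => (hL y x).trans (by
      rw [Metric.mem_closedBall, dist_eq_norm] at hy; gcongr))
    (convex_closedBall _ _) (by simp) (by simp)
  rw [Real.norm_eq_abs, add_sub_cancel_left] at this
  linarith [this, sq ‖v‖, mul_assoc L ‖v‖ ‖v‖]

/-- A small gradient step increases the discrete action by a multiple of the squared gradient. -/
lemma dAct_gain {f : ZMod N → Esp n → ℝ} (hf : ∀ j, Differentiable ℝ (f j)) {L κ : ℝ}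
    (hL : ∀ j x y, ‖fderiv ℝ (f j) x - fderiv ℝ (f j) y‖ ≤ L * ‖x - y‖)
    (hκ : 0 ≤ κ) (hκL : κ * (1 + L) ≤ 1 / 2) (hL0 : 0 ≤ L) (z : ZMod N → Esp n) :
    dAct f z + κ / 2 * NF f z ≤ dAct f (z + κ • gradF f z) := by
  set g := gradF f z with hg
  have h1 : ∀ j, f j (z j) + κ * dot (egrad (f j) (z j)) (g j) - L * κ ^ 2 * dot (g j) (g j)
      ≤ f j ((z + κ • g) j) := by
    intro j
    have h2 := (abs_le.1 (taylor_bound (hf j) (hL j) (z j) (κ • g j))).1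
    have h3 := norm_sq_le_dot (κ • g j)
    rw [dot_smul_left, dot_smul_right] at h3
    rw [fderiv_eq_dot, dot_smul_right] at h2
    have h4 : (z + κ • g) j = z j + κ • g j := rfl
    rw [h4]
    nlinarith
  have h5 := Finset.sum_le_sum fun j (_ : j ∈ Finset.univ) => h1 j
  have h6 := Qact_add z (κ • g)
  have h7 := neg_sum_dot_le_Qact (κ • g)
  have h8 : ∑ j, dot ((κ • g) j) ((κ • g) j) = κ ^ 2 * NF f z := by
    rw [NF, Finset.mul_sum]
    refine Finset.sum_congr rfl fun j _ => ?_
    rw [Pi.smul_apply, dot_smul_left, dot_smul_right, ← hg]; ring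
  have h9 : ∑ j, dot (Aop N n z j) ((κ • g) j) = κ * ∑ j, dot (Aop N n z j) (g j) := by
    rw [Finset.mul_sum]
    exact Finset.sum_congr rfl fun j _ => by rw [Pi.smul_apply, dot_smul_right]
  have h10 : NF f z = ∑ j, dot (Aop N n z j) (g j) + ∑ j, dot (egrad (f j) (z j)) (g j) := by
    rw [NF, ← Finset.sum_add_distrib]
    refine Finset.sum_congr rfl fun j _ => ?_
    rw [← dot_add_left]; rfl
  have hN : 0 ≤ NF f z := Finset.sum_nonneg fun j _ => dot_self_nonneg _
  rw [Finset.sum_sub_distrib, Finset.sum_add_distrib, ← Finset.mul_sum, ← Finset.mul_sum] at h5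
  have h11 : ∑ j, dot (g j) (g j) = NF f z := rfl
  rw [h11] at h5
  rw [h9] at h6
  rw [h8] at h7
  simp only [dAct]
  have h12 : κ * (κ * (1 + L)) * NF f z ≤ κ * (1 / 2) * NF f z := by gcongr
  nlinarith

/-- Maps at bounded distance from a linear map that does not decrease the quadratic form `Qact`. -/
def Adm (Θ : (ZMod N → Esp n) → (ZMod N → Esp n)) : Prop :=
  ContDiff ℝ 1 Θ ∧ ∃ T : (ZMod N → Esp n) →L[ℝ] (ZMod N → Esp n),
    (∀ z, Qact z ≤ Qact (T z)) ∧ ∃ C, ∀ z, ‖Θ z - T z‖ ≤ C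

lemma Adm.id : Adm (fun z : ZMod N → Esp n => z) :=
  ⟨contDiff_id, ContinuousLinearMap.id ℝ _, fun _ => le_rfl, 0, fun z => by simp⟩

lemma Adm.comp {Θ₂ Θ₁ : (ZMod N → Esp n) → (ZMod N → Esp n)} (h₂ : Adm Θ₂) (h₁ : Adm Θ₁) :
    Adm (fun z => Θ₂ (Θ₁ z)) := by
  obtain ⟨hc₁, T₁, hT₁, C₁, hC₁⟩ := h₁
  obtain ⟨hc₂, T₂, hT₂, C₂, hC₂⟩ := h₂
  refine ⟨hc₂.comp hc₁, T₂.comp T₁, fun z => (hT₁ z).trans (hT₂ _), C₂ + ‖T₂‖ * C₁, fun z => ?_⟩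
  have h : Θ₂ (Θ₁ z) - (T₂.comp T₁) z = (Θ₂ (Θ₁ z) - T₂ (Θ₁ z)) + T₂ (Θ₁ z - T₁ z) := by
    rw [map_sub, ContinuousLinearMap.comp_apply]; abel
  rw [h]
  refine (norm_add_le _ _).trans (add_le_add (hC₂ _) ((T₂.le_opNorm _).trans ?_))
  gcongr; exact hC₁ z

lemma contDiff_egrad {f : Esp n → ℝ} (hf : ContDiff ℝ 2 f) : ContDiff ℝ 1 (egrad f) := by
  have h : ContDiff ℝ 1 (fderiv ℝ f) := hf.fderiv_right (by norm_num)
  exact (contDiff_pi.2 fun i => h.clm_apply contDiff_const).prodMk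
    (contDiff_pi.2 fun i => h.clm_apply contDiff_const)

/-- Gradient steps are of class `Adm`: the linear part is `z ↦ z + κ A z`, a gradient step for `Qact`
itself, and the gradients of the `f j` are bounded. -/
lemma Adm_step {f : ZMod N → Esp n → ℝ} (hf : ∀ j, ContDiff ℝ 2 (f j)) {κ C : ℝ} (hκ : 0 ≤ κ)
    (hκ2 : κ ≤ 1 / 2) (hC : ∀ j x, ‖fderiv ℝ (f j) x‖ ≤ C) :
    Adm (fun z => z + κ • gradF f z) := by
  refine ⟨?_, ContinuousLinearMap.id ℝ _ + κ • (Aop N n).toContinuousLinearMap, ?_, κ * C, ?_⟩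
  · refine contDiff_id.add (ContDiff.const_smul κ (contDiff_pi.2 fun j => ?_))
    refine ContDiff.add ?_ ((contDiff_egrad (hf j)).comp (contDiff_apply ℝ _ j))
    exact (contDiff_apply ℝ _ j).comp (Aop N n).toContinuousLinearMap.contDiff
  · intro z
    have h := dAct_gain (f := fun (_ : ZMod N) (_ : Esp n) => (0 : ℝ)) (L := 0) (κ := κ)
      (fun j => by fun_prop) (fun j x y => by simp) hκ (by linarith) le_rfl z
    have h0 : gradF (fun (_ : ZMod N) (_ : Esp n) => (0 : ℝ)) z = Aop N n z := by
      funext j; ext i <;> simp [gradF, egrad]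
    have hN : 0 ≤ NF (fun (_ : ZMod N) (_ : Esp n) => (0 : ℝ)) z :=
      Finset.sum_nonneg fun j _ => dot_self_nonneg _
    rw [h0] at h
    simp only [dAct, Finset.sum_const_zero, add_zero] at h
    have h3 : (ContinuousLinearMap.id ℝ (ZMod N → Esp n) + κ • (Aop N n).toContinuousLinearMap) z
      = z + κ • Aop N n z := by simp
    rw [h3]
    nlinarith
  · intro z
    have h3 : z + κ • gradF f z -
        (ContinuousLinearMap.id ℝ (ZMod N → Esp n) + κ • (Aop N n).toContinuousLinearMap) z
        = κ • fun j => egrad (f j) (z j) := by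
      ext j i <;> simp [gradF]
    have hC0 : 0 ≤ C := (norm_nonneg _).trans (hC 0 0)
    rw [h3, norm_smul, Real.norm_of_nonneg hκ]
    gcongr
    rw [pi_norm_le_iff_of_nonneg hC0]
    exact fun j => (norm_egrad_le _ _).trans (hC j _)

/-- Superlevel sets are carried along a homotopy of functions by a map of class `Adm`, provided the
level `ℓ` respects the homotopy at almost critical points. Here `P σ` is a gradient step for `F σ`
and `G σ` its squared gradient; the parameter advances by short steps, each followed by one gradient
step. -/
lemma push_level {a b : ℝ} {F G : ℝ → (ZMod N → Esp n) → ℝ}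
    {P : ℝ → (ZMod N → Esp n) → (ZMod N → Esp n)} {ℓ : ℝ → ℝ} {ν C η κ₁ : ℝ} (hab : a ≤ b)
    (hν : 0 < ν) (hC : 0 ≤ C) (hη : 0 < η) (hκ₁ : 0 < κ₁) (hG : ∀ σ z, 0 ≤ G σ z)
    (hgain : ∀ σ ∈ Icc a b, ∀ z, F σ z + ν * G σ z ≤ F σ (P σ z))
    (hadm : ∀ σ ∈ Icc a b, Adm (P σ))
    (hF : ∀ σ ∈ Icc a b, ∀ σ' ∈ Icc a b, σ ≤ σ' → ∀ z, F σ z - C * (σ' - σ) ≤ F σ' z)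
    (hℓ : ∀ σ ∈ Icc a b, ∀ σ' ∈ Icc a b, σ ≤ σ' → ℓ σ' ≤ ℓ σ + C * (σ' - σ))
    (hstar : ∀ σ ∈ Icc a b, ∀ σ' ∈ Icc a b, σ ≤ σ' → σ' ≤ σ + κ₁ → ∀ z, G σ' z ≤ η →
      ℓ σ ≤ F σ z → ℓ σ' ≤ F σ' z) :
    ∃ Θ : (ZMod N → Esp n) → (ZMod N → Esp n), Adm Θ ∧ ∀ z, ℓ a ≤ F a z → ℓ b ≤ F b (Θ z) := by
  obtain ⟨δ, hδ, hδ1, hδ2⟩ : ∃ δ > 0, δ ≤ κ₁ ∧ 2 * C * δ ≤ ν * η := by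
    refine ⟨min κ₁ (ν * η / (2 * C + 1)), by positivity, min_le_left _ _, ?_⟩
    have h1 : min κ₁ (ν * η / (2 * C + 1)) ≤ ν * η / (2 * C + 1) := min_le_right _ _
    rw [le_div_iff₀ (by positivity)] at h1
    have : 0 < min κ₁ (ν * η / (2 * C + 1)) := by positivity
    nlinarith
  have key : ∀ k : ℕ, ∀ σ ∈ Icc a b, σ ≤ a + k * δ → ∃ Θ : (ZMod N → Esp n) → (ZMod N → Esp n),
      Adm Θ ∧ ∀ z, ℓ a ≤ F a z → ℓ σ ≤ F σ (Θ z) := by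
    intro k
    induction k with
    | zero =>
      intro σ hσ hk
      have : σ = a := le_antisymm (by simpa using hk) hσ.1
      exact ⟨_, Adm.id, fun z hz => by rw [this]; exact hz⟩
    | succ k ih =>
      intro σ hσ hk
      push_cast at hk
      have hm : max a (σ - δ) ∈ Icc a b := ⟨le_max_left _ _, max_le hab (by linarith [hσ.2])⟩
      have hkδ : 0 ≤ k * δ := by positivity
      obtain ⟨Θ, hΘ, h⟩ := ih (max a (σ - δ)) hm (max_le (by linarith) (by linarith))
      set σ₀ := max a (σ - δ) with hσ₀
      have h1 : σ₀ ≤ σ := max_le hσ.1 (by linarith)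
      have h2 : σ - δ ≤ σ₀ := le_max_right _ _
      refine ⟨_, (hadm σ hσ).comp hΘ, fun z hz => ?_⟩
      have h3 := h z hz
      have h4 := hgain σ hσ (Θ z)
      -- Either the point is almost critical and `hstar` applies, or the gain `ν η` of the gradient
      -- step outweighs the drift `2 C δ` of the function and of the level.
      by_cases h5 : G σ (Θ z) ≤ η
      · have h6 := hstar σ₀ hm σ hσ h1 (by linarith) _ h5 h3
        have := mul_nonneg hν.le (hG σ (Θ z))
        linarith
      · have h6 := hF σ₀ hm σ hσ h1 (Θ z)
        have h7 := hℓ σ₀ hm σ hσ h1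
        have h8 : ν * η ≤ ν * G σ (Θ z) := by gcongr; exact (not_le.1 h5).le
        have h9 : C * (σ - σ₀) ≤ C * δ := by gcongr; linarith
        linarith
  obtain ⟨k, hk⟩ := exists_nat_ge ((b - a) / δ)
  rw [div_le_iff₀ hδ] at hk
  exact key k b ⟨hab, le_rfl⟩ (by linarith)

/-- The linear embedding `q ↦ (q, m Δq)` onto a subspace on which `Qact` is nonnegative, and positive away from
constant `q`. -/
def iotaL (N n : ℕ) (m : ℝ) : (ZMod N → Fin n → ℝ) →ₗ[ℝ] (ZMod N → Esp n) where
  toFun q := fun j => (q j, m • (q (j + 1) - q j))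
  map_add' z w := by ext j i <;> simp; ring
  map_smul' c z := by ext j i <;> simp; ring

/-- A linear map whose kernel is a nonpositive subspace of `Qact`. -/
def piL (N n : ℕ) [NeZero N] (m : ℝ) : (ZMod N → Esp n) →ₗ[ℝ] (ZMod N → Fin n → ℝ) where
  toFun z := fun j => (z j).2 + m • ((z (j + 1)).1 - (z j).1) - (N : ℝ)⁻¹ • ∑ k, (z k).2
  map_add' z w := by ext j i; simp [Finset.sum_add_distrib]; ring
  map_smul' c z := by ext j i; simp [← Finset.mul_sum]; ring

lemma sum_diff_eq_zero (z : ZMod N → ℝ) : ∑ j, (z (j + 1) - z j) = 0 := by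
  rw [Finset.sum_sub_distrib, sum_shift, sub_self]

lemma sum_piL (m : ℝ) (z : ZMod N → Esp n) : ∑ j, piL N n m z j = 0 := by
  ext i
  have h := sum_diff_eq_zero fun j => (z j).1 i
  have hN : (N : ℝ) ≠ 0 := NeZero.ne _
  simp only [piL, LinearMap.coe_mk, AddHom.coe_mk, Finset.sum_apply, Pi.sub_apply, Pi.add_apply,
    Pi.smul_apply, smul_eq_mul, Finset.sum_sub_distrib, Finset.sum_add_distrib, ← Finset.mul_sum,
    Finset.sum_const, Finset.card_univ, ZMod.card, nsmul_eq_mul, Pi.zero_apply] at h ⊢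
  rw [h]
  field_simp
  ring

lemma Qact_nonpos_of_piL {m : ℝ} (hm : 0 ≤ m) {z : ZMod N → Esp n} (hz : piL N n m z = 0) :
    Qact z ≤ 0 := by
  have h1 : ∀ j i, (z j).2 i = (N : ℝ)⁻¹ * (∑ k, (z k).2 i) - m * ((z (j + 1)).1 i - (z j).1 i) := by
    intro j i
    have := congrFun (congrFun hz j) i
    simp [piL] at this
    linarith
  have h2 : Qact z = ∑ i, ∑ j, ((N : ℝ)⁻¹ * (∑ k, (z k).2 i)) * ((z (j + 1)).1 i - (z j).1 i)
      - ∑ i, ∑ j, m * ((z (j + 1)).1 i - (z j).1 i) ^ 2 := by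
    rw [Qact, Finset.sum_comm, ← Finset.sum_sub_distrib]
    refine Finset.sum_congr rfl fun i _ => ?_
    rw [← Finset.sum_sub_distrib]
    refine Finset.sum_congr rfl fun j _ => ?_
    rw [h1 j i]; ring
  have h3 : ∀ i, ∑ j, ((N : ℝ)⁻¹ * (∑ k, (z k).2 i)) * ((z (j + 1)).1 i - (z j).1 i) = 0 := by
    intro i
    rw [← Finset.mul_sum, sum_diff_eq_zero fun j => (z j).1 i, mul_zero]
  rw [h2, Finset.sum_congr rfl fun i _ => h3 i]
  have : 0 ≤ ∑ i, ∑ j, m * ((z (j + 1)).1 i - (z j).1 i) ^ 2 :=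
    Finset.sum_nonneg fun i _ => Finset.sum_nonneg fun j _ => by positivity
  simpa using this

lemma Qact_iotaL (m : ℝ) (q : ZMod N → Fin n → ℝ) :
    Qact (iotaL N n m q) = m * ∑ j, ∑ i, (q (j + 1) i - q j i) ^ 2 := by
  simp only [Qact, Finset.mul_sum]
  exact Finset.sum_congr rfl fun j _ => Finset.sum_congr rfl fun i _ => by simp [iotaL]; ring

lemma const_of_diff {α : Type*} (q : ZMod N → α) (h : ∀ j, q (j + 1) = q j) (j : ZMod N) :
    q j = q 0 := by
  have : ∀ k : ℕ, q (k : ZMod N) = q 0 := by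
    intro k
    induction k with
    | zero => simp
    | succ k ih => push_cast; rw [h, ih]
  rw [← ZMod.natCast_zmod_val j]; exact this _

/-- Linking: the image under an `Adm` map of the affine positive subspace through a constant loop
meets the set where `Qact` is nonpositive. -/
lemma linking {Θ : (ZMod N → Esp n) → (ZMod N → Esp n)} (hΘ : Adm Θ) (p : Esp n) {m : ℝ}
    (hm : 0 < m) : ∃ q : ZMod N → Fin n → ℝ, q 0 = 0 ∧
      Qact (Θ (fun j => p + iotaL N n m q j)) ≤ 0 := by
  obtain ⟨hc, T, hT, C, hC⟩ := hΘ
  let ι := (iotaL N n m).toContinuousLinearMap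
  let π := (piL N n m).toContinuousLinearMap
  let c0 : (ZMod N → Fin n → ℝ) →ₗ[ℝ] (ZMod N → Fin n → ℝ) :=
    { toFun := fun q _ => q 0
      map_add' := fun _ _ => rfl
      map_smul' := fun _ _ => rfl }
  have hmean : ∀ (z : ZMod N → Esp n) (q : ZMod N → Fin n → ℝ), π z + c0 q = 0 → q 0 = 0 := by
    intro z q h
    have h1 : ∑ j, (π z + c0 q) j = 0 := by rw [h]; simp
    have h2 : ∑ j, π z j = 0 := sum_piL m z
    simp only [Pi.add_apply, Finset.sum_add_distrib, h2, zero_add] at h1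
    have h3 : (N : ℝ) • q 0 = 0 := by
      simpa [c0, Finset.card_univ, ZMod.card, Nat.cast_smul_eq_nsmul] using h1
    exact (smul_eq_zero.1 h3).resolve_left (NeZero.ne _)
  -- Values of `π` have zero sum, and `π ∘ T ∘ ι` may be singular on the constant chains, where
  -- `Qact ∘ ι` vanishes; adding `c0` makes it injective, and a zero of the sum has `q 0 = 0`.
  let S : (ZMod N → Fin n → ℝ) →ₗ[ℝ] (ZMod N → Fin n → ℝ) :=
    (π.comp (T.comp ι) : (ZMod N → Fin n → ℝ) →L[ℝ] _).toLinearMap + c0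
  have hS : Function.Injective S := by
    rw [injective_iff_map_eq_zero]
    intro q hq
    have hq1 : π (T (ι q)) + c0 q = 0 := hq
    have hq0 := hmean _ _ hq1
    have hc0 : c0 q = 0 := by funext j; exact hq0
    rw [hc0, add_zero] at hq1
    -- Positivity of `Qact` on the image of `ι`, which `T` does not decrease, against nonpositivity
    -- on the kernel of `π`.
    have h1 : Qact (T (ι q)) ≤ 0 := Qact_nonpos_of_piL hm.le hq1
    have h2 : m * ∑ j, ∑ i, (q (j + 1) i - q j i) ^ 2 ≤ 0 := by
      rw [← Qact_iotaL]; exact (hT _).trans h1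
    have h3 : ∑ j, ∑ i, (q (j + 1) i - q j i) ^ 2 = 0 :=
      le_antisymm (nonpos_of_mul_nonpos_right h2 hm)
        (Finset.sum_nonneg fun j _ => Finset.sum_nonneg fun i _ => sq_nonneg _)
    have h4 : ∀ j, q (j + 1) = q j := by
      intro j
      have h5 := (Finset.sum_eq_zero_iff_of_nonneg fun j _ =>
        Finset.sum_nonneg fun i _ => sq_nonneg _).1 h3 j (Finset.mem_univ _)
      funext i
      have h6 := (Finset.sum_eq_zero_iff_of_nonneg fun i _ => sq_nonneg _).1 h5 i
        (Finset.mem_univ _)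
      nlinarith [pow_eq_zero_iff (two_ne_zero) |>.1 h6]
    funext j
    rw [const_of_diff q h4 j, hq0]; rfl
  let z0 : ZMod N → Esp n := fun _ => p
  obtain ⟨q, hq⟩ := exists_zero_linear_add_bounded S hS
    (fun q => π (Θ (z0 + ι q)) - π (T (ι q)))
    ((π.contDiff.comp (hc.comp (contDiff_const.add ι.contDiff))).sub
      (π.contDiff.comp (T.contDiff.comp ι.contDiff))) (‖π‖ * (C + ‖T z0‖)) (fun q => by
      rw [← map_sub]
      refine (π.le_opNorm _).trans ?_
      gcongr
      have h1 : Θ (z0 + ι q) - T (ι q) = (Θ (z0 + ι q) - T (z0 + ι q)) + T z0 := by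
        rw [map_add]; abel
      rw [h1]
      exact (norm_add_le _ _).trans (add_le_add (hC _) le_rfl))
  have hq1 : π (Θ (z0 + ι q)) + c0 q = 0 := by
    have h1 : S q = π (T (ι q)) + c0 q := rfl
    rw [h1] at hq
    rw [← hq]; abel
  have hq0 := hmean _ _ hq1
  have hc0 : c0 q = 0 := by funext j; exact hq0
  rw [hc0, add_zero] at hq1
  exact ⟨q, hq0, Qact_nonpos_of_piL hm.le hq1⟩

end action

/-! ### Riemann sums and the Euler scheme -/

lemma riemann_sum {u : ℝ → ℝ} {L : ℝ} (hu : ∀ s ∈ Icc (0 : ℝ) 1, ∀ t ∈ Icc (0 : ℝ) 1,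
    |u s - u t| ≤ L * |s - t|) {m : ℕ} (hm : 0 < m) :
    |(1 / m : ℝ) * ∑ k ∈ Finset.range m, u (k * (1 / m)) - ∫ t in (0 : ℝ)..1, u t| ≤ L * (1 / m) := by
  have hm' : (0 : ℝ) < m := by exact_mod_cast hm
  set h : ℝ := 1 / m with hh
  have hpos : 0 < h := by positivity
  have hmh : m * h = 1 := by rw [hh]; field_simp
  have hL : 0 ≤ L := by
    have := (abs_nonneg _).trans (hu 0 ⟨le_rfl, zero_le_one⟩ 1 ⟨zero_le_one, le_rfl⟩)
    simpa using this
  have hcont : ContinuousOn u (Icc 0 1) := by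
    refine (LipschitzOnWith.of_dist_le_mul (K := L.toNNReal) fun s hs t ht => ?_).continuousOn
    rw [Real.coe_toNNReal _ hL, Real.dist_eq, Real.dist_eq]
    exact hu s hs t ht
  have hsub : ∀ k < m, (k : ℝ) * h ∈ Icc (0 : ℝ) 1 ∧ ((k + 1 : ℕ) : ℝ) * h ∈ Icc (0 : ℝ) 1 := by
    intro k hk
    have hk' : ((k + 1 : ℕ) : ℝ) ≤ m := by exact_mod_cast hk
    have h2 : ((k + 1 : ℕ) : ℝ) * h ≤ 1 := by rw [← hmh]; gcongr
    have h3 : (k : ℝ) * h ≤ ((k + 1 : ℕ) : ℝ) * h := by gcongr; simp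
    exact ⟨⟨by positivity, h3.trans h2⟩, ⟨by positivity, h2⟩⟩
  have hle : ∀ k : ℕ, (k : ℝ) * h ≤ ((k + 1 : ℕ) : ℝ) * h := fun k => by gcongr; simp
  have hintv : ∀ k < m, IntervalIntegrable u MeasureTheory.volume (k * h) ((k + 1 : ℕ) * h) := by
    intro k hk
    refine ContinuousOn.intervalIntegrable (hcont.mono ?_)
    rw [uIcc_of_le (hle k)]
    exact Icc_subset_Icc (hsub k hk).1.1 (hsub k hk).2.2
  have hsum := intervalIntegral.sum_integral_adjacent_intervals (f := u) (μ := MeasureTheory.volume)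
    (a := fun k : ℕ => (k : ℝ) * h) hintv
  simp only [Nat.cast_zero, zero_mul, hmh] at hsum
  rw [← hsum, Finset.mul_sum, ← Finset.sum_sub_distrib]
  have hterm : ∀ k ∈ Finset.range m,
      |h * u (k * h) - ∫ t in (k * h)..((k + 1 : ℕ) * h), u t| ≤ L * h * h := by
    intro k hk
    rw [Finset.mem_range] at hk
    have h1 : ∫ t in (k * h)..((k + 1 : ℕ) * h), u (k * h) = h * u (k * h) := by
      rw [intervalIntegral.integral_const, smul_eq_mul]; push_cast; ring
    rw [← h1, ← intervalIntegral.integral_sub (by simp) (hintv k hk)]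
    have h2 := intervalIntegral.norm_integral_le_of_norm_le_const (a := k * h)
      (b := (k + 1 : ℕ) * h) (f := fun t => u (k * h) - u t) (C := L * h) (fun t ht => by
      rw [uIoc_of_le (hle k)] at ht
      refine (hu _ (hsub k hk).1 t ⟨(hsub k hk).1.1.trans ht.1.le, ht.2.trans (hsub k hk).2.2⟩).trans ?_
      gcongr
      rw [abs_sub_comm, abs_of_pos (by linarith [ht.1])]
      have := ht.2
      push_cast at this; linarith)
    refine h2.trans_eq ?_
    have : ((k + 1 : ℕ) : ℝ) * h - k * h = h := by push_cast; ring
    rw [this, abs_of_pos hpos]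
  calc _ ≤ ∑ k ∈ Finset.range m, L * h * h := (Finset.abs_sum_le_sum_abs _ _).trans
        (Finset.sum_le_sum hterm)
    _ = L * h := by rw [Finset.sum_const, Finset.card_range, nsmul_eq_mul]; linear_combination (L * h) * hmh

/-- Convergence of the Euler scheme, uniformly over approximate discrete trajectories. The last step
only has to be accurate to first order, because a slot of a chain ends where the Hamiltonian
changes. -/
lemma euler_error {E : Type*} [NormedAddCommGroup E] [NormedSpace ℝ E] {X : ℝ → E → E} {B D : ℝ}
    (hB1 : 1 ≤ B) (hX : ∀ t ∈ Icc (0 : ℝ) 1, ∀ x, ‖X t x‖ ≤ B)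
    (hXL : ∀ t ∈ Icc (0 : ℝ) 1, ∀ t' ∈ Icc (0 : ℝ) 1, ∀ x x', ‖X t x - X t' x'‖ ≤ B * (|t - t'| + ‖x - x'‖))
    {γ : ℝ → E} (hγ : ∀ t ∈ Icc (0 : ℝ) 1, HasDerivAt γ (X t (γ t)) t) {m : ℕ} (hm : 0 < m) {y : ℕ → E}
    {h : ℝ} (hmh : m * h = 1) (hD : 0 ≤ D)
    (h0 : ‖y 0 - γ 0‖ ≤ D * h)
    (hstep : ∀ k, k + 1 < m → ‖y (k + 1) - y k - h • X (k * h) (y k)‖ ≤ D * h ^ 2)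
    (hlast : ‖y m - y (m - 1)‖ ≤ D * h) :
    ∀ k ≤ m, ‖y k - γ (k * h)‖ ≤ (Real.exp B * (2 * D + 2 * B ^ 2) + D + B) * h := by
  have hm' : (0 : ℝ) < m := by exact_mod_cast hm
  have hh : 0 < h := by
    by_contra hneg
    nlinarith
  have hkI : ∀ k ≤ m, (k : ℝ) * h ∈ Icc (0 : ℝ) 1 := by
    intro k hk
    have hk' : (k : ℝ) ≤ m := by exact_mod_cast hk
    exact ⟨by positivity, by rw [← hmh]; gcongr⟩
  have hspeed : ∀ s ∈ Icc (0 : ℝ) 1, ∀ t ∈ Icc (0 : ℝ) 1, ‖γ s - γ t‖ ≤ B * |s - t| := by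
    intro s hs t ht
    exact (convex_Icc (0 : ℝ) 1).norm_image_sub_le_of_norm_hasDerivWithin_le
      (fun x hx => (hγ x hx).hasDerivWithinAt) (fun x hx => hX x hx _) ht hs
  have htrunc : ∀ k, k + 1 ≤ m → ‖γ ((k + 1 : ℕ) * h) - γ (k * h) - h • X (k * h) (γ (k * h))‖
      ≤ 2 * B ^ 2 * h ^ 2 := by
    intro k hk
    have hk1 := hkI k (by omega)
    have hk2 := hkI (k + 1) hk
    have hlen : ((k + 1 : ℕ) : ℝ) * h - k * h = h := by push_cast; ring
    set t := (k : ℝ) * h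
    set t' := ((k + 1 : ℕ) : ℝ) * h
    have hsub : ∀ s ∈ Icc t t', s ∈ Icc (0 : ℝ) 1 := fun s hs => ⟨hk1.1.trans hs.1, hs.2.trans hk2.2⟩
    have := (convex_Icc t t').norm_image_sub_le_of_norm_hasDerivWithin_le
      (f := fun s => γ s - s • X t (γ t)) (f' := fun s => X s (γ s) - X t (γ t))
      (C := 2 * B ^ 2 * h) (x := t) (y := t')
      (fun s hs => ((hγ s (hsub s hs)).sub (by
        simpa using (hasDerivAt_id s).smul_const (X t (γ t)))).hasDerivWithinAt)
      (fun s hs => by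
        refine (hXL s (hsub s hs) t hk1 _ _).trans ?_
        have h1 := hspeed s (hsub s hs) t hk1
        have h2 : |s - t| ≤ h := by rw [abs_of_nonneg (by linarith [hs.1])]; linarith [hs.2]
        have h3 : B * |s - t| ≤ B * h := by gcongr
        have h4 : |s - t| + ‖γ s - γ t‖ ≤ 2 * B * h := by nlinarith
        calc _ ≤ B * (2 * B * h) := by gcongr
          _ = _ := by ring)
      ⟨le_rfl, by linarith⟩ ⟨by linarith, le_rfl⟩
    have h5 : γ t' - t' • X t (γ t) - (γ t - t • X t (γ t)) = γ t' - γ t - h • X t (γ t) := by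
      rw [← hlen, sub_smul]; abel
    have h6 : ‖t' - t‖ = h := by rw [hlen, Real.norm_of_nonneg hh.le]
    simp only [h5, h6] at this
    linarith
  have key : ∀ k, k + 1 ≤ m → ‖y k - γ (k * h)‖ ≤
      (1 + h * B) ^ k * (D * h + k * ((D + 2 * B ^ 2) * h ^ 2)) := by
    intro k
    induction k with
    | zero => intro _; simpa using h0
    | succ k ih =>
      intro hk
      have ih' := ih (by omega)
      have h1 := hstep k (by omega)
      have h2 := htrunc k (by omega)
      have hk1 := hkI k (by omega)
      have h3 := hXL _ hk1 _ hk1 (y k) (γ (k * h))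
      rw [sub_self, abs_zero, zero_add] at h3
      have hdec : y (k + 1) - γ ((k + 1 : ℕ) * h) = (y k - γ (k * h))
          + h • (X (k * h) (y k) - X (k * h) (γ (k * h)))
          + (y (k + 1) - y k - h • X (k * h) (y k))
          - (γ ((k + 1 : ℕ) * h) - γ (k * h) - h • X (k * h) (γ (k * h))) := by
        rw [smul_sub]; abel
      have h4 : ‖y (k + 1) - γ ((k + 1 : ℕ) * h)‖ ≤ (1 + h * B) * ‖y k - γ (k * h)‖
          + (D + 2 * B ^ 2) * h ^ 2 := by
        rw [hdec]
        refine (norm_sub_le _ _).trans ?_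
        refine (add_le_add_left ((norm_add_le _ _).trans (add_le_add_left (norm_add_le _ _) _)) _).trans ?_
        rw [norm_smul, Real.norm_of_nonneg hh.le]
        have : h * ‖X (k * h) (y k) - X (k * h) (γ (k * h))‖ ≤ h * (B * ‖y k - γ (k * h)‖) := by
          gcongr
        nlinarith
      refine h4.trans ?_
      have h5 : (1 : ℝ) ≤ (1 + h * B) ^ (k + 1) := one_le_pow₀ (by nlinarith)
      have h6 : 0 ≤ (D + 2 * B ^ 2) * h ^ 2 := by positivity
      have h7 : (1 + h * B) * ‖y k - γ (k * h)‖ ≤ (1 + h * B) *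
        ((1 + h * B) ^ k * (D * h + k * ((D + 2 * B ^ 2) * h ^ 2))) := by gcongr
      push_cast
      calc _ ≤ (1 + h * B) * ((1 + h * B) ^ k * (D * h + k * ((D + 2 * B ^ 2) * h ^ 2)))
            + (1 + h * B) ^ (k + 1) * ((D + 2 * B ^ 2) * h ^ 2) := by
              refine add_le_add h7 (le_mul_of_one_le_left h6 h5)
        _ = _ := by ring
  have key2 : ∀ k, k + 1 ≤ m → ‖y k - γ (k * h)‖ ≤ (Real.exp B * (2 * D + 2 * B ^ 2)) * h := by
    intro k hk
    refine (key k hk).trans ?_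
    have hk1 := (hkI k (by omega)).2
    have h1 : (1 + h * B) ^ k ≤ Real.exp B := by
      calc (1 + h * B) ^ k ≤ Real.exp (h * B) ^ k := by
            gcongr; linarith [Real.add_one_le_exp (h * B)]
        _ = Real.exp (k * h * B) := by rw [← Real.exp_nat_mul]; ring_nf
        _ ≤ Real.exp B := Real.exp_le_exp.2 (by nlinarith)
    have h2 : D * h + k * ((D + 2 * B ^ 2) * h ^ 2) ≤ (2 * D + 2 * B ^ 2) * h := by
      have : (k * h) * ((D + 2 * B ^ 2) * h) ≤ 1 * ((D + 2 * B ^ 2) * h) := by gcongr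
      nlinarith
    rw [mul_assoc]
    gcongr
  intro k hk
  rcases hk.lt_or_eq with hk | rfl
  · refine (key2 k hk).trans ?_
    gcongr
    linarith
  · have h1 := key2 (k - 1) (by omega)
    have h2 := hspeed ((k - 1 : ℕ) * h) (hkI _ (by omega)) (k * h) (hkI _ le_rfl)
    have h3 : ((k - 1 : ℕ) : ℝ) * h - k * h = -h := by
      rw [Nat.cast_sub (by omega)]; push_cast; ring
    rw [h3, abs_neg, abs_of_pos hh] at h2
    have hdec : y k - γ (k * h) = (y k - y (k - 1)) + (y (k - 1) - γ ((k - 1 : ℕ) * h))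
      + (γ ((k - 1 : ℕ) * h) - γ (k * h)) := by abel
    rw [hdec]
    refine (norm_add_le _ _).trans ((add_le_add_left (norm_add_le _ _) _).trans ?_)
    linarith

/-! ### Uniform bounds and the action function of a time-one map -/

/-- `f - ½ df(x)`: half the derivative at `s = 1` of the conformal rescaling `s² f(x / s)`. -/
def eact {n : ℕ} (f : Esp n → ℝ) (x : Esp n) : ℝ := f x - 1 / 2 * fderiv ℝ f x x

/-- Uniform bounds for a time-dependent Hamiltonian on the time interval `[0, 1]`. -/
structure HB {n : ℕ} (K : ℝ → Esp n → ℝ) (B : ℝ) : Prop where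
  one_le : 1 ≤ B
  smooth : ∀ t, ContDiff ℝ 2 (K t)
  bdd : ∀ t ∈ Icc (0 : ℝ) 1, ∀ x, |K t x| ≤ B
  lip : ∀ t ∈ Icc (0 : ℝ) 1, ∀ t' ∈ Icc (0 : ℝ) 1, ∀ x x',
    |K t x - K t' x'| ≤ B * (|t - t'| + ‖x - x'‖)
  dbdd : ∀ t ∈ Icc (0 : ℝ) 1, ∀ x, ‖fderiv ℝ (K t) x‖ ≤ B
  dlip : ∀ t ∈ Icc (0 : ℝ) 1, ∀ t' ∈ Icc (0 : ℝ) 1, ∀ x x',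
    ‖fderiv ℝ (K t) x - fderiv ℝ (K t') x'‖ ≤ B * (|t - t'| + ‖x - x'‖)
  ebdd : ∀ t ∈ Icc (0 : ℝ) 1, ∀ x, |eact (K t) x| ≤ B
  elip : ∀ t ∈ Icc (0 : ℝ) 1, ∀ t' ∈ Icc (0 : ℝ) 1, ∀ x x',
    |eact (K t) x - eact (K t') x'| ≤ B * (|t - t'| + ‖x - x'‖)
  far : ∀ t ∈ Icc (0 : ℝ) 1, ∀ x, B < ‖x‖ → K t x = 0
  efar : ∀ t ∈ Icc (0 : ℝ) 1, ∀ x, B < ‖x‖ → eact (K t) x = 0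
  dfar : ∀ t ∈ Icc (0 : ℝ) 1, ∀ x, B < ‖x‖ → fderiv ℝ (K t) x = 0

lemma bounds_of_support {n : ℕ} {F : Type*} [NormedAddCommGroup F] [NormedSpace ℝ F]
    {g : ℝ × Esp n → F} (hg : ContDiff ℝ 1 g) {C : Set (Esp n)} (hC : IsCompact C)
    (h0 : ∀ t x, x ∉ C → g (t, x) = 0) :
    ∃ B : ℝ, 0 ≤ B ∧ ∀ t ∈ Icc (0 : ℝ) 1, ∀ x, ‖g (t, x)‖ ≤ B ∧ ∀ t' ∈ Icc (0 : ℝ) 1, ∀ x',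
      ‖g (t, x) - g (t', x')‖ ≤ B * (|t - t'| + ‖x - x'‖) := by
  let χ : ContDiffBump (0 : ℝ) := ⟨1, 2, zero_lt_one, one_lt_two⟩
  have hχ : ∀ t ∈ Icc (0 : ℝ) 1, χ t = 1 := fun t ht => χ.one_of_mem_closedBall (by
    rw [mem_closedBall_zero_iff, Real.norm_eq_abs, abs_of_nonneg ht.1]; exact ht.2)
  set G : ℝ × Esp n → F := fun q => χ q.1 • g q with hG
  have hGd : ContDiff ℝ 1 G := (χ.contDiff.comp contDiff_fst).smul hg
  have hGs : HasCompactSupport G := by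
    refine HasCompactSupport.intro ((isCompact_closedBall (0 : ℝ) 2).prod hC) fun q hq => ?_
    by_cases h1 : q.2 ∈ C
    · have h2 : q.1 ∉ Metric.closedBall (0 : ℝ) 2 := fun h2 => hq ⟨h2, h1⟩
      have h3 : χ q.1 = 0 := χ.zero_of_le_dist (by
        rw [Metric.mem_closedBall, not_le] at h2; exact h2.le)
      simp [hG, h3]
    · simp [hG, h0 q.1 q.2 h1]
  obtain ⟨L, hL⟩ := hGd.lipschitzWith_of_hasCompactSupport hGs one_ne_zero
  obtain ⟨M, hM⟩ := hGs.exists_bound_of_continuous hGd.continuous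
  have hGg : ∀ t ∈ Icc (0 : ℝ) 1, ∀ x, G (t, x) = g (t, x) := fun t ht x => by
    simp [hG, hχ t ht]
  refine ⟨max M L, le_max_of_le_right L.2, fun t ht x => ⟨?_, fun t' ht' x' => ?_⟩⟩
  · rw [← hGg t ht x]; exact (hM _).trans (le_max_left _ _)
  · rw [← hGg t ht x, ← hGg t' ht' x', ← dist_eq_norm]
    refine (hL.dist_le_mul _ _).trans ?_
    gcongr
    · exact le_max_right _ _
    · rw [Prod.dist_eq, dist_eq_norm, dist_eq_norm]
      exact max_le (by simp [Real.norm_eq_abs]) (by simp)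

lemma fderiv_zero_off {n : ℕ} {f : Esp n → ℝ} {C : Set (Esp n)} (hC : IsClosed C)
    (h0 : ∀ x, x ∉ C → f x = 0) {x : Esp n} (hx : x ∉ C) : fderiv ℝ f x = 0 := by
  have h : f =ᶠ[nhds x] fun _ => (0 : ℝ) := by
    filter_upwards [hC.isOpen_compl.mem_nhds hx] with y hy using h0 y hy
  rw [h.fderiv_eq]; simp

lemma exists_HB {n : ℕ} {K : ℝ → Esp n → ℝ}
    (hK : ContDiff ℝ (⊤ : ℕ∞) fun q : ℝ × Esp n => K q.1 q.2) (hs : IsCompactlySupported K) :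
    ∃ B, ∀ B', B ≤ B' → HB K B' := by
  obtain ⟨C, hC, h0⟩ := hs
  have hK1 : ContDiff ℝ 1 fun q : ℝ × Esp n => K q.1 q.2 := hK.of_le (by exact_mod_cast le_top)
  have hK2 : ContDiff ℝ 2 fun q : ℝ × Esp n => K q.1 q.2 :=
    hK.of_le (WithTop.coe_le_coe.2 (le_top : (2 : ℕ∞) ≤ ⊤))
  have hD : ContDiff ℝ 1 fun q : ℝ × Esp n => fderiv ℝ (K q.1) q.2 := by
    refine ContDiff.fderiv (m := 2) (f := fun (q : ℝ × Esp n) (x : Esp n) => K q.1 x) ?_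
      contDiff_snd (by norm_num)
    exact hK2.comp ((contDiff_fst.comp contDiff_fst).prodMk contDiff_snd)
  have hE : ContDiff ℝ 1 fun q : ℝ × Esp n => eact (K q.1) q.2 :=
    hK1.sub (contDiff_const.mul (hD.clm_apply contDiff_snd))
  have hD0 : ∀ t x, x ∉ C → fderiv ℝ (K t) x = 0 := fun t x hx =>
    fderiv_zero_off hC.isClosed (h0 t) hx
  have hE0 : ∀ t x, x ∉ C → eact (K t) x = 0 := fun t x hx => by
    simp [eact, h0 t x hx, hD0 t x hx]
  obtain ⟨B₁, hB₁, h₁⟩ := bounds_of_support hK1 hC h0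
  obtain ⟨B₂, hB₂, h₂⟩ := bounds_of_support hD hC hD0
  obtain ⟨B₃, hB₃, h₃⟩ := bounds_of_support hE hC hE0
  obtain ⟨B₄, h₄⟩ := hC.isBounded.exists_norm_le
  have hfar : ∀ x, B₄ < ‖x‖ → x ∉ C := fun x hx hxC => absurd (h₄ x hxC) (not_le.2 hx)
  refine ⟨1 + B₁ + B₂ + B₃ + |B₄|, fun B' hB' => ?_⟩
  have a4 := le_abs_self B₄
  have a4' := abs_nonneg B₄
  have up : ∀ {b x y : ℝ}, b ≤ B' → 0 ≤ y → x ≤ b * y → x ≤ B' * y := fun h1 h2 h3 =>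
    h3.trans (mul_le_mul_of_nonneg_right h1 h2)
  have i1 : B₁ ≤ B' := by linarith
  have i2 : B₂ ≤ B' := by linarith
  have i3 : B₃ ≤ B' := by linarith
  exact {
    one_le := by linarith
    smooth := fun t => hK2.comp (contDiff_const.prodMk contDiff_id)
    bdd := fun t ht x => ((h₁ t ht x).1).trans i1
    lip := fun t ht t' ht' x x' => up i1 (by positivity) ((h₁ t ht x).2 t' ht' x')
    dbdd := fun t ht x => ((h₂ t ht x).1).trans i2
    dlip := fun t ht t' ht' x x' => up i2 (by positivity) ((h₂ t ht x).2 t' ht' x')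
    ebdd := fun t ht x => ((h₃ t ht x).1).trans i3
    elip := fun t ht t' ht' x x' => up i3 (by positivity) ((h₃ t ht x).2 t' ht' x')
    far := fun t _ x hx => h0 t x (hfar x (by linarith))
    efar := fun t _ x hx => hE0 t x (hfar x (by linarith))
    dfar := fun t _ x hx => hD0 t x (hfar x (by linarith)) }

/-- The symplectic gradient of a linear functional. -/
def Jop {n : ℕ} (l : Esp n →L[ℝ] ℝ) : Esp n :=
  (fun i => - l (0, Pi.single i 1), fun i => l (Pi.single i 1, 0))

lemma hamVF_eq_Jop {n : ℕ} (f : Esp n → ℝ) (p : Esp n) : hamVF f p = Jop (fderiv ℝ f p) := rfl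

lemma Jop_sub {n : ℕ} (l l' : Esp n →L[ℝ] ℝ) : Jop l - Jop l' = Jop (l - l') := by
  ext i <;> simp [Jop]; ring

lemma Jop_smul {n : ℕ} (c : ℝ) (l : Esp n →L[ℝ] ℝ) : Jop (c • l) = c • Jop l := by
  ext i <;> simp [Jop]

lemma norm_Jop_le {n : ℕ} (l : Esp n →L[ℝ] ℝ) : ‖Jop l‖ ≤ ‖l‖ := by
  rw [Prod.norm_def, max_le_iff, pi_norm_le_iff_of_nonneg (norm_nonneg _),
      pi_norm_le_iff_of_nonneg (norm_nonneg _)]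
  refine ⟨fun i => ?_, fun i => ?_⟩
  · have h := l.le_opNorm (0, Pi.single i 1)
    rw [norm_single_snd, mul_one] at h
    simpa [Jop] using h
  · have h := l.le_opNorm (Pi.single i 1, 0)
    rwa [norm_single_fst, mul_one] at h

lemma fderiv_eq_omega {n : ℕ} (f : Esp n → ℝ) (p v : Esp n) :
    fderiv ℝ f p v = omega0 v (hamVF f p) := by
  rw [fderiv_eq_dot]
  simp only [dot, egrad, omega0, hamVF]
  exact Finset.sum_congr rfl fun i _ => by ring

lemma omega0_self {n : ℕ} (v : Esp n) : omega0 v v = 0 := by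
  simp only [omega0]; exact Finset.sum_eq_zero fun i _ => by ring

lemma abs_omega0_le {n : ℕ} (v w : Esp n) : |omega0 v w| ≤ 2 * n * (‖v‖ * ‖w‖) := by
  refine (Finset.abs_sum_le_sum_abs _ _).trans ?_
  have h : ∀ i ∈ (Finset.univ : Finset (Fin n)), |v.1 i * w.2 i - v.2 i * w.1 i| ≤ 2 * (‖v‖ * ‖w‖) := by
    intro i _
    have h1 : |v.1 i| ≤ ‖v‖ := (norm_le_pi_norm v.1 i).trans (norm_fst_le v)
    have h2 : |v.2 i| ≤ ‖v‖ := (norm_le_pi_norm v.2 i).trans (norm_snd_le v)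
    have h3 : |w.1 i| ≤ ‖w‖ := (norm_le_pi_norm w.1 i).trans (norm_fst_le w)
    have h4 : |w.2 i| ≤ ‖w‖ := (norm_le_pi_norm w.2 i).trans (norm_snd_le w)
    calc _ ≤ |v.1 i| * |w.2 i| + |v.2 i| * |w.1 i| := by
          rw [← abs_mul, ← abs_mul]; exact abs_sub _ _
      _ ≤ ‖v‖ * ‖w‖ + ‖v‖ * ‖w‖ := by gcongr
      _ = _ := by ring
  refine (Finset.sum_le_sum h).trans_eq ?_
  simp; ring

lemma continuous_omega0 {n : ℕ} : Continuous fun p : Esp n × Esp n => omega0 p.1 p.2 := by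
  unfold omega0
  fun_prop

lemma hasDerivAt_omega0 {n : ℕ} {a b : ℝ → Esp n} {a' b' : Esp n} {t : ℝ} (ha : HasDerivAt a a' t)
    (hb : HasDerivAt b b' t) :
    HasDerivAt (fun s => omega0 (a s) (b s)) (omega0 a' (b t) + omega0 (a t) b') t := by
  have ha1 := fun i => (hasDerivAt_pi.1 ha.fst) i
  have ha2 := fun i => (hasDerivAt_pi.1 ha.snd) i
  have hb1 := fun i => (hasDerivAt_pi.1 hb.fst) i
  have hb2 := fun i => (hasDerivAt_pi.1 hb.snd) i
  have h := HasDerivAt.fun_sum (u := Finset.univ) fun i _ =>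
    ((ha1 i).mul (hb2 i)).sub ((ha2 i).mul (hb1 i))
  refine h.congr_deriv ?_
  simp only [omega0, ← Finset.sum_add_distrib]
  exact Finset.sum_congr rfl fun i _ => by ring

section

variable {n : ℕ} {K : ℝ → Esp n → ℝ} {B : ℝ}

lemma HB.X_le (hK : HB K B) {t : ℝ} (ht : t ∈ Icc (0 : ℝ) 1) (x : Esp n) : ‖hamVF (K t) x‖ ≤ B :=
  (norm_Jop_le _).trans (hK.dbdd t ht x)

lemma HB.X_lip (hK : HB K B) {t : ℝ} (ht : t ∈ Icc (0 : ℝ) 1) {t' : ℝ} (ht' : t' ∈ Icc (0 : ℝ) 1)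
    (x x' : Esp n) : ‖hamVF (K t) x - hamVF (K t') x'‖ ≤ B * (|t - t'| + ‖x - x'‖) := by
  rw [hamVF_eq_Jop, hamVF_eq_Jop, Jop_sub]
  exact (norm_Jop_le _).trans (hK.dlip t ht t' ht' x x')

lemma HB.speed (hK : HB K B) {ψ : ℝ → Esp n → Esp n} (hψ : IsHamIsotopyOf K ψ) (x : Esp n) {s : ℝ}
    (hs : s ∈ Icc (0 : ℝ) 1) {t : ℝ} (ht : t ∈ Icc (0 : ℝ) 1) : ‖ψ s x - ψ t x‖ ≤ B * |s - t| :=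
  (convex_Icc (0 : ℝ) 1).norm_image_sub_le_of_norm_hasDerivWithin_le
    (fun r _ => (hψ.2 x r).hasDerivWithinAt) (fun _ hr => hK.X_le hr _) ht hs

lemma lip_comp {F : Type*} [NormedAddCommGroup F] {g : ℝ → Esp n → F} {γ : ℝ → Esp n}
    (hB : 1 ≤ B) (hg : ∀ t ∈ Icc (0 : ℝ) 1, ∀ t' ∈ Icc (0 : ℝ) 1, ∀ x x',
      ‖g t x - g t' x'‖ ≤ B * (|t - t'| + ‖x - x'‖))
    (hγ : ∀ s ∈ Icc (0 : ℝ) 1, ∀ t ∈ Icc (0 : ℝ) 1, ‖γ s - γ t‖ ≤ B * |s - t|) :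
    ∀ s ∈ Icc (0 : ℝ) 1, ∀ t ∈ Icc (0 : ℝ) 1, ‖g s (γ s) - g t (γ t)‖ ≤ 2 * B ^ 2 * |s - t| := by
  intro s hs t ht
  have h1 := hg s hs t ht (γ s) (γ t)
  have h2 := hγ s hs t ht
  have h3 : |s - t| + ‖γ s - γ t‖ ≤ 2 * B * |s - t| := by nlinarith [abs_nonneg (s - t)]
  calc _ ≤ B * (2 * B * |s - t|) := h1.trans (by gcongr)
    _ = _ := by ring

lemma continuousOn_of_lip {F : Type*} [NormedAddCommGroup F] {u : ℝ → F} {L : ℝ}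
    (h : ∀ s ∈ Icc (0 : ℝ) 1, ∀ t ∈ Icc (0 : ℝ) 1, ‖u s - u t‖ ≤ L * |s - t|) :
    ContinuousOn u (Icc 0 1) := by
  have hL : 0 ≤ L := by
    have := (norm_nonneg _).trans (h 0 ⟨le_rfl, zero_le_one⟩ 1 ⟨zero_le_one, le_rfl⟩)
    simpa using this
  refine (LipschitzOnWith.of_dist_le_mul (K := L.toNNReal) fun s hs t ht => ?_).continuousOn
  rw [Real.coe_toNNReal _ hL, dist_eq_norm, Real.dist_eq]
  exact h s hs t ht

lemma HB.e_lip (hK : HB K B) {ψ : ℝ → Esp n → Esp n} (hψ : IsHamIsotopyOf K ψ) (x : Esp n) :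
    ∀ s ∈ Icc (0 : ℝ) 1, ∀ t ∈ Icc (0 : ℝ) 1,
      |eact (K s) (ψ s x) - eact (K t) (ψ t x)| ≤ 2 * B ^ 2 * |s - t| :=
  lip_comp (g := fun t x => eact (K t) x) (γ := fun t => ψ t x) hK.one_le hK.elip
    fun _ hs _ ht => hK.speed hψ x hs ht

/-- The flow is Lipschitz on `[0, 1]`. -/
lemma HB.flow_lip (hK : HB K B) {ψ : ℝ → Esp n → Esp n} (hψ : IsHamIsotopyOf K ψ) (x x' : Esp n)
    {t : ℝ} (ht : t ∈ Icc (0 : ℝ) 1) : ‖ψ t x' - ψ t x‖ ≤ Real.exp B * ‖x' - x‖ := by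
  have hB0 : 0 ≤ B := zero_le_one.trans hK.one_le
  have := dist_le_of_trajectories_ODE_of_mem (v := fun t x => hamVF (K t) x) (s := fun _ => univ)
    (K := B.toNNReal) (f := fun t => ψ t x') (g := fun t => ψ t x) (a := 0) (b := 1)
    (δ := ‖x' - x‖)
    (fun t ht => LipschitzOnWith.of_dist_le_mul fun y _ y' _ => by
      have h := hK.X_lip (Ico_subset_Icc_self ht) (Ico_subset_Icc_self ht) y y'
      rw [Real.coe_toNNReal _ hB0, dist_eq_norm, dist_eq_norm]
      simpa using h)
    (fun s _ => (hψ.2 x' s).continuousAt.continuousWithinAt)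
    (fun s _ => (hψ.2 x' s).hasDerivWithinAt) (fun _ _ => mem_univ _)
    (fun s _ => (hψ.2 x s).continuousAt.continuousWithinAt)
    (fun s _ => (hψ.2 x s).hasDerivWithinAt) (fun _ _ => mem_univ _)
    (by rw [hψ.1, hψ.1, dist_eq_norm]) t ht
  rw [dist_eq_norm, Real.coe_toNNReal _ hB0, sub_zero, mul_comm] at this
  refine this.trans ?_
  gcongr
  nlinarith [ht.2]

/-- First variation of the action `∫ e`, up to a quadratic error. -/
lemma HB.action_variation (hK : HB K B) {ψ : ℝ → Esp n → Esp n} (hψ : IsHamIsotopyOf K ψ) :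
    ∃ C : ℝ, ∀ x x' : Esp n, |((∫ t in (0 : ℝ)..1, eact (K t) (ψ t x')) -
      ∫ t in (0 : ℝ)..1, eact (K t) (ψ t x)) -
        (1 / 2 * omega0 (ψ 1 x') (ψ 1 x) - 1 / 2 * omega0 x' x)| ≤ C * ‖x' - x‖ ^ 2 := by
  refine ⟨(n * B + B) * Real.exp B ^ 2, fun x x' => ?_⟩
  have hB0 : 0 ≤ B := zero_le_one.trans hK.one_le
  set X : ℝ → Esp n := fun t => hamVF (K t) (ψ t x)
  set X' : ℝ → Esp n := fun t => hamVF (K t) (ψ t x')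
  set a : ℝ → ℝ := fun t => eact (K t) (ψ t x') - eact (K t) (ψ t x) with ha
  set b' : ℝ → ℝ := fun t => 1 / 2 * (omega0 (X' t) (ψ t x) + omega0 (ψ t x') (X t)) with hb'
  have hInt : ∀ y, IntervalIntegrable (fun t => eact (K t) (ψ t y)) MeasureTheory.volume 0 1 :=
    fun y => ContinuousOn.intervalIntegrable (by
      rw [uIcc_of_le zero_le_one]; exact continuousOn_of_lip (hK.e_lip hψ y))
  have hXc : ∀ y, ContinuousOn (fun t => hamVF (K t) (ψ t y)) (Icc 0 1) := fun y =>
    continuousOn_of_lip (lip_comp (g := fun t x => hamVF (K t) x) (γ := fun t => ψ t y) hK.one_le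
      (fun _ ht _ ht' x x' => hK.X_lip ht ht' x x') fun _ hs _ ht => hK.speed hψ y hs ht)
  have hψc : ∀ y, ContinuousOn (fun t => ψ t y) (Icc 0 1) := fun y s _ =>
    (hψ.2 y s).continuousAt.continuousWithinAt
  have hb'c : ContinuousOn b' (Icc 0 1) := by
    have h1 := hXc x
    have h2 := hXc x'
    have h3 := hψc x
    have h4 := hψc x'
    exact continuousOn_const.mul
      (((continuous_omega0.comp_continuousOn (h2.prodMk h3))).add
        (continuous_omega0.comp_continuousOn (h4.prodMk h1)))
  have hb'Int : IntervalIntegrable b' MeasureTheory.volume 0 1 :=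
    ContinuousOn.intervalIntegrable (by rw [uIcc_of_le zero_le_one]; exact hb'c)
  have hb := intervalIntegral.integral_eq_sub_of_hasDerivAt (a := 0) (b := 1)
    (f := fun t => 1 / 2 * omega0 (ψ t x') (ψ t x)) (f' := b')
    (fun t _ => (hasDerivAt_omega0 (hψ.2 x' t) (hψ.2 x t)).const_mul _) hb'Int
  simp only [hψ.1] at hb
  rw [← hb, ← intervalIntegral.integral_sub (hInt x') (hInt x),
    ← intervalIntegral.integral_sub ((hInt x').sub (hInt x)) hb'Int]
  have hbound := intervalIntegral.norm_integral_le_of_norm_le_const (a := 0) (b := 1)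
    (f := fun t => a t - b' t) (C := (n * B + B) * Real.exp B ^ 2 * ‖x' - x‖ ^ 2) (fun t ht => by
    rw [uIoc_of_le zero_le_one] at ht
    have ht' : t ∈ Icc (0 : ℝ) 1 := ⟨ht.1.le, ht.2⟩
    have h1 := taylor_bound ((hK.smooth t).differentiable two_ne_zero) (L := B) (fun y y' => by
      simpa using hK.dlip t ht' t ht' y y') (ψ t x) (ψ t x' - ψ t x)
    rw [add_sub_cancel, fderiv_eq_omega] at h1
    have h2 : a t - b' t = (K t (ψ t x') - K t (ψ t x) - omega0 (ψ t x' - ψ t x) (X t))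
        + 1 / 2 * omega0 (ψ t x' - ψ t x) (X t - X' t) := by
      simp only [ha, hb', eact, fderiv_eq_omega, X, X']
      have : omega0 (ψ t x' - ψ t x) (hamVF (K t) (ψ t x)) = omega0 (ψ t x') (hamVF (K t) (ψ t x))
        - omega0 (ψ t x) (hamVF (K t) (ψ t x)) := by
        simp only [omega0, ← Finset.sum_sub_distrib]
        exact Finset.sum_congr rfl fun i _ => by simp; ring
      rw [this]
      have : omega0 (ψ t x' - ψ t x) (hamVF (K t) (ψ t x) - hamVF (K t) (ψ t x')) =
        omega0 (ψ t x') (hamVF (K t) (ψ t x)) - omega0 (ψ t x) (hamVF (K t) (ψ t x))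
        - omega0 (ψ t x') (hamVF (K t) (ψ t x')) - omega0 (hamVF (K t) (ψ t x')) (ψ t x) := by
        simp only [omega0, ← Finset.sum_sub_distrib]
        exact Finset.sum_congr rfl fun i _ => by simp; ring
      rw [this]
      ring
    have h3 := abs_omega0_le (ψ t x' - ψ t x) (X t - X' t)
    have h4 := hK.X_lip ht' ht' (ψ t x) (ψ t x')
    rw [sub_self, abs_zero, zero_add, norm_sub_rev (ψ t x)] at h4
    have h5 := hK.flow_lip hψ x x' ht'
    set u := ‖ψ t x' - ψ t x‖ with hu
    have hu0 : 0 ≤ u := norm_nonneg _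
    rw [Real.norm_eq_abs, h2]
    calc _ ≤ B * u ^ 2 + 1 / 2 * (2 * n * (u * (B * u))) := by
          refine (abs_add_le _ _).trans (add_le_add h1 ?_)
          rw [abs_mul, abs_of_pos (by norm_num : (0 : ℝ) < 1 / 2)]
          gcongr
          refine h3.trans ?_
          gcongr
      _ = (n * B + B) * u ^ 2 := by ring
      _ ≤ (n * B + B) * (Real.exp B * ‖x' - x‖) ^ 2 := by gcongr
      _ = _ := by ring)
  simpa using hbound

/-- Two compactly supported Hamiltonians with the same time-one map have the same action function:
the difference has vanishing derivative and vanishes far away. -/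
lemma action_eq {K' : ℝ → Esp n → ℝ} (hn : 0 < n) (hK : HB K B) (hK' : HB K' B)
    {ψ ψ' : ℝ → Esp n → Esp n} (hψ : IsHamIsotopyOf K ψ) (hψ' : IsHamIsotopyOf K' ψ')
    (h1 : ∀ x, ψ 1 x = ψ' 1 x) (x : Esp n) :
    ∫ t in (0 : ℝ)..1, eact (K t) (ψ t x) = ∫ t in (0 : ℝ)..1, eact (K' t) (ψ' t x) := by
  obtain ⟨C, hC⟩ := hK.action_variation hψ
  obtain ⟨C', hC'⟩ := hK'.action_variation hψ'
  set g : Esp n → ℝ := fun x => (∫ t in (0 : ℝ)..1, eact (K t) (ψ t x)) -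
    ∫ t in (0 : ℝ)..1, eact (K' t) (ψ' t x) with hg
  have hgb : ∀ x x', |g x' - g x| ≤ (C + C') * ‖x' - x‖ ^ 2 := by
    intro x x'
    have a1 := abs_le.1 (hC x x')
    have a2 := abs_le.1 (hC' x x')
    rw [h1, h1] at a1
    rw [abs_le]
    simp only [hg]
    constructor <;> linarith [a1.1, a1.2, a2.1, a2.2]
  have hder : ∀ x, HasFDerivAt g (0 : Esp n →L[ℝ] ℝ) x := by
    intro x
    rw [hasFDerivAt_iff_isLittleO]
    have h2 : (fun x' => g x' - g x - (0 : Esp n →L[ℝ] ℝ) (x' - x)) =O[nhds x]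
        fun x' => ‖x' - x‖ ^ 2 :=
      Asymptotics.IsBigO.of_bound (C + C') (Filter.Eventually.of_forall fun x' => by
        simpa using hgb x x')
    refine h2.trans_isLittleO ?_
    have h3 : (fun x' : Esp n => x' - x) =o[nhds x] fun _ => (1 : ℝ) := by
      rw [Asymptotics.isLittleO_one_iff]
      have : Filter.Tendsto (fun x' : Esp n => x' - x) (nhds x) (nhds (x - x)) :=
        (continuous_id.sub continuous_const).tendsto x
      simpa using this
    have h4 := h3.norm_left.mul_isBigO (Asymptotics.isBigO_refl (fun x' : Esp n => ‖x' - x‖) (nhds x))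
    refine (Asymptotics.isLittleO_norm_right).1 ?_
    simpa [sq] using h4
  have hconst := is_const_of_fderiv_eq_zero (𝕜 := ℝ) (f := g)
    (fun x => (hder x).differentiableAt) (fun x => (hder x).fderiv)
  have hB1 := hK.one_le
  set x₀ : Esp n := (fun _ => 2 * B + 1, 0) with hx₀
  have hx₀n : 2 * B + 1 ≤ ‖x₀‖ := by
    refine le_trans ?_ (norm_fst_le x₀)
    refine le_trans ?_ (norm_le_pi_norm x₀.1 ⟨0, hn⟩)
    exact le_abs_self _
  have hz : ∀ (L : ℝ → Esp n → ℝ) (χ : ℝ → Esp n → Esp n), HB L B → IsHamIsotopyOf L χ →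
      ∫ t in (0 : ℝ)..1, eact (L t) (χ t x₀) = 0 := by
    intro L χ hL hχ
    rw [intervalIntegral.integral_congr (g := fun _ => (0 : ℝ))]
    · simp
    · intro t ht
      rw [uIcc_of_le zero_le_one] at ht
      refine hL.efar t ht _ ?_
      have h2 := hL.speed hχ x₀ ht (show (0 : ℝ) ∈ Icc (0 : ℝ) 1 from ⟨le_rfl, zero_le_one⟩)
      rw [hχ.1, sub_zero, abs_of_nonneg ht.1] at h2
      have h3 := norm_sub_norm_le x₀ (χ t x₀)
      rw [norm_sub_rev] at h3
      have h4 : B * t ≤ B * 1 := by gcongr; exact ht.2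
      linarith
  have h0 : g x₀ = 0 := by simp only [hg]; rw [hz K ψ hK hψ, hz K' ψ' hK' hψ', sub_zero]
  have := hconst x x₀
  rw [h0] at this
  simp only [hg] at this
  linarith

end

/-! ### Chains with three slots -/

/-- Bounds for an autonomous Hamiltonian. -/
structure GB {n : ℕ} (f : Esp n → ℝ) (B : ℝ) : Prop where
  smooth : ContDiff ℝ 2 f
  bdd : ∀ x, |f x| ≤ B
  dbdd : ∀ x, ‖fderiv ℝ f x‖ ≤ B
  dlip : ∀ x x', ‖fderiv ℝ f x - fderiv ℝ f x'‖ ≤ B * ‖x - x'‖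

/-- The conformal rescaling `s² f(x / s)`, which is `0` for `s = 0`. -/
def sc {n : ℕ} (s : ℝ) (f : Esp n → ℝ) (x : Esp n) : ℝ := s ^ 2 * f (s⁻¹ • x)

section

variable {n : ℕ} {f : Esp n → ℝ} {B : ℝ}

lemma sc_zero : sc 0 f = fun _ => 0 := by funext x; simp [sc]

lemma sc_one : sc 1 f = f := by funext x; simp [sc]

lemma fderiv_const_mul' (hf : Differentiable ℝ f) (c : ℝ) (x : Esp n) :
    fderiv ℝ (fun x => c * f x) x = c • fderiv ℝ f x :=
  ((hf x).hasFDerivAt.const_mul c).fderiv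

lemma fderiv_sc (hf : Differentiable ℝ f) (s : ℝ) (x : Esp n) :
    fderiv ℝ (sc s f) x = s • fderiv ℝ f (s⁻¹ • x) := by
  rcases eq_or_ne s 0 with rfl | hs
  · rw [sc_zero]; simp
  have h1 : HasFDerivAt (fun x : Esp n => s⁻¹ • x) (s⁻¹ • ContinuousLinearMap.id ℝ (Esp n)) x :=
    (s⁻¹ • ContinuousLinearMap.id ℝ (Esp n)).hasFDerivAt
  have h2 := ((hf (s⁻¹ • x)).hasFDerivAt.comp x h1).const_mul (s ^ 2)
  refine h2.fderiv.trans ?_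
  ext v <;> simp <;> field_simp

lemma hamVF_sc (hf : Differentiable ℝ f) (s : ℝ) (x : Esp n) :
    hamVF (sc s f) x = s • hamVF f (s⁻¹ • x) := by
  rw [hamVF_eq_Jop, fderiv_sc hf, Jop_smul]; rfl

lemma hamVF_const_mul (hf : Differentiable ℝ f) (c : ℝ) (x : Esp n) :
    hamVF (fun x => c * f x) x = c • hamVF f x := by
  rw [hamVF_eq_Jop, fderiv_const_mul' hf, Jop_smul]; rfl

lemma GB.diff (hf : GB f B) : Differentiable ℝ f := hf.smooth.differentiable two_ne_zero

lemma GB.nonneg (hf : GB f B) : 0 ≤ B := (abs_nonneg _).trans (hf.bdd 0)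

lemma GB.const_mul (hf : GB f B) {c : ℝ} (hc : |c| ≤ 1) : GB (fun x => c * f x) B where
  smooth := contDiff_const.mul hf.smooth
  bdd x := by
    rw [abs_mul]
    exact (mul_le_mul hc (hf.bdd x) (abs_nonneg _) zero_le_one).trans_eq (one_mul B)
  dbdd x := by
    rw [fderiv_const_mul' hf.diff, norm_smul]
    exact (mul_le_mul hc (hf.dbdd x) (norm_nonneg _) zero_le_one).trans_eq (one_mul B)
  dlip x x' := by
    rw [fderiv_const_mul' hf.diff, fderiv_const_mul' hf.diff, show c • fderiv ℝ f x - c • fderiv ℝ f x' = c • (fderiv ℝ f x - fderiv ℝ f x') by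
      ext v <;> simp [mul_sub], norm_smul]
    exact (mul_le_mul hc (hf.dlip x x') (norm_nonneg _) zero_le_one).trans_eq (one_mul _)

lemma GB.sc (hf : GB f B) {s : ℝ} (hs : s ∈ Icc (0 : ℝ) 1) : GB (sc s f) B where
  smooth := contDiff_const.mul (hf.smooth.comp (contDiff_id.const_smul s⁻¹))
  bdd x := by
    rw [_root_.sc, abs_mul]
    have h : |s ^ 2| ≤ 1 := by rw [abs_of_nonneg (sq_nonneg s)]; nlinarith [hs.1, hs.2]
    exact (mul_le_mul h (hf.bdd _) (abs_nonneg _) zero_le_one).trans_eq (one_mul B)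
  dbdd x := by
    rw [fderiv_sc hf.diff, norm_smul, Real.norm_of_nonneg hs.1]
    exact (mul_le_mul hs.2 (hf.dbdd _) (norm_nonneg _) zero_le_one).trans_eq (one_mul B)
  dlip x x' := by
    rw [fderiv_sc hf.diff, fderiv_sc hf.diff, show s • fderiv ℝ f (s⁻¹ • x) - s • fderiv ℝ f (s⁻¹ • x')
      = s • (fderiv ℝ f (s⁻¹ • x) - fderiv ℝ f (s⁻¹ • x')) by ext v <;> simp [mul_sub],
      norm_smul, Real.norm_of_nonneg hs.1]
    have h := hf.dlip (s⁻¹ • x) (s⁻¹ • x')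
    rw [← smul_sub, norm_smul, norm_inv, Real.norm_of_nonneg hs.1] at h
    rcases hs.1.eq_or_lt with h0 | h0
    · rw [← h0, zero_mul]; exact mul_nonneg hf.nonneg (norm_nonneg _)
    · calc s * _ ≤ s * (B * (s⁻¹ * ‖x - x'‖)) := by gcongr
        _ = _ := by field_simp

lemma HB.gb {K : ℝ → Esp n → ℝ} (hK : HB K B) {t : ℝ} (ht : t ∈ Icc (0 : ℝ) 1) : GB (K t) B where
  smooth := hK.smooth t
  bdd := hK.bdd t ht
  dbdd := hK.dbdd t ht
  dlip x x' := by simpa using hK.dlip t ht t ht x x'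

end

section chain

variable {N n : ℕ} [NeZero N] {G : ZMod N → Esp n → ℝ} {B h : ℝ} {z : ZMod N → Esp n}

lemma norm_gradF_le (hz : NF (fun j x => h * G j x) z ≤ h ^ 4) (j : ZMod N) :
    ‖gradF (fun j x => h * G j x) z j‖ ≤ h ^ 2 := by
  have h1 := norm_sq_le_dot (gradF (fun j x => h * G j x) z j)
  have h2 := Finset.single_le_sum (f := fun j => dot (gradF (fun j x => h * G j x) z j)
    (gradF (fun j x => h * G j x) z j)) (fun j _ => dot_self_nonneg _) (Finset.mem_univ j)
  have h3 : ‖gradF (fun j x => h * G j x) z j‖ ^ 2 ≤ (h ^ 2) ^ 2 := by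
    calc _ ≤ h ^ 4 := h1.trans (h2.trans hz)
      _ = _ := by ring
  exact le_of_sq_le_sq h3 (by positivity)

lemma chain_fst (hG : ∀ j, GB (G j) B) (hz : NF (fun j x => h * G j x) z ≤ h ^ 4) (j : ZMod N) :
    ‖(z (j + 1)).1 - (z j).1 - h • (hamVF (G j) (z j)).1‖ ≤ h ^ 2 := by
  have h1 := (norm_snd_le _).trans (norm_gradF_le hz j)
  have e : (z (j + 1)).1 - (z j).1 - h • (hamVF (G j) (z j)).1
      = (gradF (fun j x => h * G j x) z j).2 := by
    funext i
    simp [gradF, Aop, egrad, fderiv_const_mul' (hG j).diff, hamVF]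
  rwa [e]

lemma chain_snd (hG : ∀ j, GB (G j) B) (hz : NF (fun j x => h * G j x) z ≤ h ^ 4) (j : ZMod N) :
    ‖(z (j + 1)).2 - (z j).2 - h • (hamVF (G (j + 1)) (z (j + 1))).2‖ ≤ h ^ 2 := by
  have h1 := (norm_fst_le _).trans (norm_gradF_le hz (j + 1))
  rw [← norm_neg] at h1
  have e : (z (j + 1)).2 - (z j).2 - h • (hamVF (G (j + 1)) (z (j + 1))).2
      = -(gradF (fun j x => h * G j x) z (j + 1)).1 := by
    funext i
    simp [gradF, Aop, egrad, fderiv_const_mul' (hG (j + 1)).diff, hamVF]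
    ring
  rwa [e]

/-- Consecutive vertices of an almost critical chain are close. -/
lemma chain_close (hB : 1 ≤ B) (hG : ∀ j, GB (G j) B) (hh : 0 < h) (hh1 : h ≤ 1)
    (hz : NF (fun j x => h * G j x) z ≤ h ^ 4) (j : ZMod N) : ‖z (j + 1) - z j‖ ≤ 2 * B * h := by
  have hX : ∀ j, ‖hamVF (G j) (z j)‖ ≤ B := fun j => (norm_Jop_le _).trans ((hG j).dbdd _)
  have key : ∀ a b : Fin n → ℝ, ‖a - h • b‖ ≤ h ^ 2 → ‖b‖ ≤ B → ‖a‖ ≤ 2 * B * h := by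
    intro a b h1 h2
    have h3 : ‖h • b‖ ≤ h * B := by rw [norm_smul, Real.norm_of_nonneg hh.le]; gcongr
    have h4 := norm_add_le (a - h • b) (h • b)
    rw [sub_add_cancel] at h4
    nlinarith
  rw [Prod.norm_def, max_le_iff]
  exact ⟨key _ _ (chain_fst hG hz j) ((norm_fst_le _).trans (hX _)),
    key _ _ (chain_snd hG hz j) ((norm_snd_le _).trans (hX _))⟩

/-- An almost critical chain is an approximate Euler scheme as long as the Hamiltonian varies
slowly with the index. -/
lemma chain_step (hB : 1 ≤ B) (hG : ∀ j, GB (G j) B) (hh : 0 < h) (hh1 : h ≤ 1)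
    (hz : NF (fun j x => h * G j x) z ≤ h ^ 4) {j : ZMod N}
    (hj : ∀ x x', ‖fderiv ℝ (G (j + 1)) x - fderiv ℝ (G j) x'‖ ≤ B * (h + ‖x - x'‖)) :
    ‖z (j + 1) - z j - h • hamVF (G j) (z j)‖ ≤ 4 * B ^ 2 * h ^ 2 := by
  have h1 : ‖hamVF (G (j + 1)) (z (j + 1)) - hamVF (G j) (z j)‖ ≤ 3 * B ^ 2 * h := by
    rw [hamVF_eq_Jop, hamVF_eq_Jop, Jop_sub]
    refine (norm_Jop_le _).trans ((hj _ _).trans ?_)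
    have := chain_close hB hG hh hh1 hz j
    calc _ ≤ B * (h + 2 * B * h) := by gcongr
      _ ≤ _ := by nlinarith [mul_le_mul_of_nonneg_left hB (by positivity : 0 ≤ B * h)]
  have hBB : 1 ≤ B ^ 2 := one_le_pow₀ hB
  rw [Prod.norm_def, max_le_iff]
  refine ⟨(chain_fst hG hz j).trans (by nlinarith [sq_nonneg h]), ?_⟩
  have h2 := (norm_snd_le _).trans h1
  have h3 : (z (j + 1) - z j - h • hamVF (G j) (z j)).2 =
      ((z (j + 1)).2 - (z j).2 - h • (hamVF (G (j + 1)) (z (j + 1))).2)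
      + h • (hamVF (G (j + 1)) (z (j + 1)) - hamVF (G j) (z j)).2 := by
    simp only [Prod.snd_sub, Prod.smul_snd, smul_sub]; abel
  rw [h3]
  refine (norm_add_le _ _).trans ?_
  rw [norm_smul, Real.norm_of_nonneg hh.le]
  have h4 : h * ‖(hamVF (G (j + 1)) (z (j + 1)) - hamVF (G j) (z j)).2‖ ≤ h * (3 * B ^ 2 * h) := by
    gcongr
  have := chain_snd hG hz j
  nlinarith [sq_nonneg h]

end chain

/-- Hamiltonians at the vertices of a chain with three slots of length `m`: the rescaled `K`
forwards, the rescaled `r H` backwards, and `c H` forwards. -/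
def Gs {n : ℕ} (K : ℝ → Esp n → ℝ) (H : Esp n → ℝ) (m : ℕ) (s r c : ℝ) (k : ℕ) : Esp n → ℝ :=
  if k < m then sc s (K (k * (1 / m))) else
    if k < 2 * m then fun x => -r * sc s H x else fun x => c * H x

/-- The three-slot discrete action. -/
def Act {n : ℕ} (K : ℝ → Esp n → ℝ) (H : Esp n → ℝ) (m : ℕ) [NeZero (3 * m)] (s r c : ℝ)
    (z : ZMod (3 * m) → Esp n) : ℝ :=
  dAct (fun j x => (1 / m) * Gs K H m s r c j.val x) z

/-- The squared gradient of the three-slot discrete action. -/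
def NAct {n : ℕ} (K : ℝ → Esp n → ℝ) (H : Esp n → ℝ) (m : ℕ) [NeZero (3 * m)] (s r c : ℝ)
    (z : ZMod (3 * m) → Esp n) : ℝ :=
  NF (fun j x => (1 / m) * Gs K H m s r c j.val x) z

section slots

variable {n : ℕ} {K : ℝ → Esp n → ℝ} {H : Esp n → ℝ} {B : ℝ} {m : ℕ} [NeZero (3 * m)]
  {s r c : ℝ}

lemma mpos (m : ℕ) [NeZero (3 * m)] : 0 < m := Nat.pos_of_ne_zero fun h => NeZero.ne (3 * m) (by simp [h])

lemma kh_mem {k : ℕ} (hk : k ≤ m) : (k : ℝ) * (1 / m) ∈ Icc (0 : ℝ) 1 := by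
  have hm : (0 : ℝ) < m := by exact_mod_cast mpos m
  have hk' : (k : ℝ) ≤ m := by exact_mod_cast hk
  refine ⟨by positivity, ?_⟩
  rw [mul_one_div, div_le_one hm]
  exact hk'

lemma Gs_one {k : ℕ} (hk : k < m) : Gs K H m s r c k = sc s (K (k * (1 / m))) := by
  rw [Gs, if_pos hk]

lemma Gs_two {k : ℕ} (hk : k < m) : Gs K H m s r c (m + k) = fun x => -r * sc s H x := by
  rw [Gs, if_neg (by omega), if_pos (by omega)]

lemma Gs_three {k : ℕ} : Gs K H m s r c (2 * m + k) = fun x => c * H x := by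
  rw [Gs, if_neg (by omega), if_neg (by omega)]

lemma Gs_GB (hK : HB K B) (hH : HB (fun _ => H) B) (hs : s ∈ Icc (0 : ℝ) 1)
    (hr : r ∈ Icc (0 : ℝ) 1) (hc : c ∈ Icc (0 : ℝ) 1) (k : ℕ) : GB (Gs K H m s r c k) B := by
  have hH0 : GB H B := hH.gb (t := 0) ⟨le_rfl, zero_le_one⟩
  rw [Gs]
  split_ifs with h1 h2
  · exact (hK.gb (kh_mem h1.le)).sc hs
  · exact (hH0.sc hs).const_mul (by rw [abs_neg, abs_of_nonneg hr.1]; exact hr.2)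
  · exact hH0.const_mul (by rw [abs_of_nonneg hc.1]; exact hc.2)

lemma sum_zmod {N : ℕ} [NeZero N] (g : ZMod N → ℝ) : ∑ j, g j = ∑ k ∈ Finset.range N, g (k : ZMod N) := by
  symm
  refine Finset.sum_bij (fun k _ => (k : ZMod N)) (fun _ _ => Finset.mem_univ _) ?_ ?_ ?_
  · intro a ha b hb hab
    have := congrArg ZMod.val hab
    rwa [ZMod.val_natCast_of_lt (Finset.mem_range.1 ha),
      ZMod.val_natCast_of_lt (Finset.mem_range.1 hb)] at this
  · intro j _
    exact ⟨j.val, Finset.mem_range.2 (ZMod.val_lt j), ZMod.natCast_zmod_val j⟩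
  · intro _ _; rfl

lemma Act_eq (z : ZMod (3 * m) → Esp n) : Act K H m s r c z = Qact z
    + (1 / m) * ∑ k ∈ Finset.range m, sc s (K (k * (1 / m))) (z (k : ℕ))
    - r * ((1 / m) * ∑ k ∈ Finset.range m, sc s H (z ((m + k : ℕ))))
    + c * ((1 / m) * ∑ k ∈ Finset.range m, H (z ((2 * m + k : ℕ)))) := by
  have h1 : ∀ k ∈ Finset.range (3 * m), (1 / m : ℝ) * Gs K H m s r c
      (k : ZMod (3 * m)).val (z (k : ZMod (3 * m))) = (1 / m) * Gs K H m s r c k (z (k : ℕ)) := by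
    intro k hk
    rw [ZMod.val_natCast_of_lt (Finset.mem_range.1 hk)]
  rw [Act, dAct, sum_zmod, Finset.sum_congr rfl h1]
  have h2 : Finset.range (3 * m) = Finset.range (m + m + m) := by congr 1; ring
  rw [h2, Finset.sum_range_add, Finset.sum_range_add]
  have e1 : ∑ k ∈ Finset.range m, (1 / m : ℝ) * Gs K H m s r c k (z (k : ℕ)) =
      (1 / m) * ∑ k ∈ Finset.range m, sc s (K (k * (1 / m))) (z (k : ℕ)) := by
    rw [Finset.mul_sum]
    exact Finset.sum_congr rfl fun k hk => by rw [Gs_one (Finset.mem_range.1 hk)]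
  have e2 : ∑ k ∈ Finset.range m, (1 / m : ℝ) * Gs K H m s r c (m + k) (z (m + k : ℕ)) =
      - (r * ((1 / m) * ∑ k ∈ Finset.range m, sc s H (z ((m + k : ℕ))))) := by
    rw [Finset.mul_sum, Finset.mul_sum, ← Finset.sum_neg_distrib]
    exact Finset.sum_congr rfl fun k hk => by rw [Gs_two (Finset.mem_range.1 hk)]; ring
  have e3 : ∑ k ∈ Finset.range m, (1 / m : ℝ) * Gs K H m s r c (m + m + k) (z (m + m + k : ℕ)) =
      c * ((1 / m) * ∑ k ∈ Finset.range m, H (z ((2 * m + k : ℕ)))) := by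
    rw [Finset.mul_sum, Finset.mul_sum, ← two_mul]
    exact Finset.sum_congr rfl fun k hk => by rw [Gs_three]; ring
  rw [e1, e2, e3]
  ring

/-- `push_level` for a path of three-slot actions. -/
lemma push_slots (hK : HB K B) (hH : HB (fun _ => H) B) {a b : ℝ} (hab : a ≤ b) {S R C : ℝ → ℝ}
    (hS : ∀ σ ∈ Icc a b, S σ ∈ Icc (0 : ℝ) 1) (hR : ∀ σ ∈ Icc a b, R σ ∈ Icc (0 : ℝ) 1)
    (hC : ∀ σ ∈ Icc a b, C σ ∈ Icc (0 : ℝ) 1) {ℓ : ℝ → ℝ} {c κ₁ : ℝ} (hc : 0 ≤ c) (hκ₁ : 0 < κ₁)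
    (hF : ∀ σ ∈ Icc a b, ∀ σ' ∈ Icc a b, σ ≤ σ' → ∀ z,
      Act K H m (S σ) (R σ) (C σ) z - c * (σ' - σ) ≤ Act K H m (S σ') (R σ') (C σ') z)
    (hℓ : ∀ σ ∈ Icc a b, ∀ σ' ∈ Icc a b, σ ≤ σ' → ℓ σ' ≤ ℓ σ + c * (σ' - σ))
    (hstar : ∀ σ ∈ Icc a b, ∀ σ' ∈ Icc a b, σ ≤ σ' → σ' ≤ σ + κ₁ → ∀ z,
      NAct K H m (S σ') (R σ') (C σ') z ≤ (1 / m) ^ 4 →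
      ℓ σ ≤ Act K H m (S σ) (R σ) (C σ) z → ℓ σ' ≤ Act K H m (S σ') (R σ') (C σ') z) :
    ∃ Θ : (ZMod (3 * m) → Esp n) → (ZMod (3 * m) → Esp n), Adm Θ ∧
      ∀ z, ℓ a ≤ Act K H m (S a) (R a) (C a) z → ℓ b ≤ Act K H m (S b) (R b) (C b) (Θ z) := by
  have hm : (0 : ℝ) < m := by exact_mod_cast mpos m
  have hm1 : (1 : ℝ) ≤ m := by exact_mod_cast mpos m
  have hB : 0 ≤ B := zero_le_one.trans hK.one_le
  have hh1 : (1 / m : ℝ) ≤ 1 := by rw [div_le_one hm]; exact hm1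
  have hgb : ∀ σ ∈ Icc a b, ∀ k, GB (fun x => (1 / m : ℝ) * Gs K H m (S σ) (R σ) (C σ) k x) B :=
    fun σ hσ k => (Gs_GB hK hH (hS σ hσ) (hR σ hσ) (hC σ hσ) k).const_mul
      (by rw [abs_of_nonneg (by positivity)]; exact hh1)
  have hκ : (1 / (2 * (1 + B))) * (1 + B) ≤ 1 / 2 := by
    apply le_of_eq; field_simp
  refine push_level (N := 3 * m) (n := n) (F := fun σ => Act K H m (S σ) (R σ) (C σ))
    (G := fun σ => NAct K H m (S σ) (R σ) (C σ)) (ν := 1 / (2 * (1 + B)) / 2) (C := c)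
    (P := fun σ z => z + (1 / (2 * (1 + B))) • gradF (fun j x => (1 / m : ℝ) *
      Gs K H m (S σ) (R σ) (C σ) j.val x) z)
    (η := (1 / m) ^ 4) (κ₁ := κ₁) hab (by positivity) hc (by positivity) hκ₁
    (fun σ z => Finset.sum_nonneg fun j _ => dot_self_nonneg _) ?_ ?_ hF hℓ hstar
  · intro σ hσ z
    exact dAct_gain (fun j => (hgb σ hσ j.val).diff) (L := B) (fun j => (hgb σ hσ j.val).dlip)
      (by positivity) hκ hB z
  · intro σ hσ
    refine Adm_step (C := B) (fun j => (hgb σ hσ j.val).smooth) (by positivity) ?_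
      (fun j => (hgb σ hσ j.val).dbdd)
    rw [div_le_div_iff₀ (by positivity) (by norm_num)]
    nlinarith

end slots

/-! ### Almost critical chains and short closed trajectories -/

section steps

variable {n : ℕ} {K : ℝ → Esp n → ℝ} {H : Esp n → ℝ} {B : ℝ} {m : ℕ} [NeZero (3 * m)]
  {s r c : ℝ} {z : ZMod (3 * m) → Esp n}

lemma hpos (m : ℕ) [NeZero (3 * m)] : (0 : ℝ) < 1 / m := by
  have : (0 : ℝ) < m := by exact_mod_cast mpos m
  positivity

lemma hle (m : ℕ) [NeZero (3 * m)] : (1 : ℝ) / m ≤ 1 := by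
  have : (1 : ℝ) ≤ m := by exact_mod_cast mpos m
  rw [div_le_one (by linarith)]; exact this

lemma mh (m : ℕ) [NeZero (3 * m)] : (m : ℝ) * (1 / m) = 1 := by
  have : (0 : ℝ) < m := by exact_mod_cast mpos m
  field_simp

lemma near_close (hK : HB K B) (hH : HB (fun _ => H) B) (hs : s ∈ Icc (0 : ℝ) 1)
    (hr : r ∈ Icc (0 : ℝ) 1) (hc : c ∈ Icc (0 : ℝ) 1) (hz : NAct K H m s r c z ≤ (1 / m) ^ 4)
    (j : ZMod (3 * m)) : ‖z (j + 1) - z j‖ ≤ 2 * B * (1 / m) :=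
  chain_close (G := fun j => Gs K H m s r c j.val) hK.one_le
    (fun j => Gs_GB hK hH hs hr hc j.val) (hpos m) (hle m) hz j

lemma near_close_nat (hK : HB K B) (hH : HB (fun _ => H) B) (hs : s ∈ Icc (0 : ℝ) 1)
    (hr : r ∈ Icc (0 : ℝ) 1) (hc : c ∈ Icc (0 : ℝ) 1) (hz : NAct K H m s r c z ≤ (1 / m) ^ 4)
    (k : ℕ) : ‖z ((k + 1 : ℕ)) - z ((k : ℕ))‖ ≤ 2 * B * (1 / m) := by
  push_cast
  exact near_close hK hH hs hr hc hz _

lemma near_step (hK : HB K B) (hH : HB (fun _ => H) B) (hs : s ∈ Icc (0 : ℝ) 1)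
    (hr : r ∈ Icc (0 : ℝ) 1) (hc : c ∈ Icc (0 : ℝ) 1) (hz : NAct K H m s r c z ≤ (1 / m) ^ 4)
    {k : ℕ} (hk : k + 1 < 3 * m) (hj : ∀ x x', ‖fderiv ℝ (Gs K H m s r c (k + 1)) x
      - fderiv ℝ (Gs K H m s r c k) x'‖ ≤ B * (1 / m + ‖x - x'‖)) :
    ‖z ((k + 1 : ℕ)) - z ((k : ℕ)) - (1 / m : ℝ) • hamVF (Gs K H m s r c k) (z (k : ℕ))‖
      ≤ 4 * B ^ 2 * (1 / m) ^ 2 := by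
  have h1 : ((k : ℕ) : ZMod (3 * m)).val = k := ZMod.val_natCast_of_lt (by omega)
  have h2 : ((k : ℕ) + 1 : ZMod (3 * m)).val = k + 1 := by
    have := ZMod.val_natCast_of_lt hk
    push_cast at this; exact this
  have := chain_step (G := fun j => Gs K H m s r c j.val) hK.one_le
    (fun j => Gs_GB hK hH hs hr hc j.val) (hpos m) (hle m) hz (j := (k : ℕ)) (by
      simp only [h1, h2]; exact hj)
  simp only [h1] at this
  push_cast
  exact this

lemma step_one (hK : HB K B) (hH : HB (fun _ => H) B) (hs : s ∈ Icc (0 : ℝ) 1)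
    (hr : r ∈ Icc (0 : ℝ) 1) (hc : c ∈ Icc (0 : ℝ) 1) (hz : NAct K H m s r c z ≤ (1 / m) ^ 4)
    {k : ℕ} (hk : k + 1 < m) :
    ‖z ((k + 1 : ℕ)) - z ((k : ℕ)) - (1 / m : ℝ) • s • hamVF (K (k * (1 / m))) (s⁻¹ • z (k : ℕ))‖
      ≤ 4 * B ^ 2 * (1 / m) ^ 2 := by
  have hB := hK.one_le
  have t1 := kh_mem (m := m) (show k ≤ m by omega)
  have t2 := kh_mem (m := m) (show k + 1 ≤ m by omega)
  have d1 := (hK.gb t1).diff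
  have d2 := (hK.gb t2).diff
  have := near_step hK hH hs hr hc hz (k := k) (by omega) (fun x x' => by
    rw [Gs_one hk, Gs_one (by omega), fderiv_sc d2, fderiv_sc d1,
      show s • fderiv ℝ (K ((k + 1 : ℕ) * (1 / m))) (s⁻¹ • x) - s • fderiv ℝ (K (k * (1 / m)))
        (s⁻¹ • x') = s • (fderiv ℝ (K ((k + 1 : ℕ) * (1 / m))) (s⁻¹ • x)
        - fderiv ℝ (K (k * (1 / m))) (s⁻¹ • x')) by ext v <;> simp [mul_sub], norm_smul,
        Real.norm_of_nonneg hs.1]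
    have h := hK.dlip _ t2 _ t1 (s⁻¹ • x) (s⁻¹ • x')
    have e : |((k + 1 : ℕ) : ℝ) * (1 / m) - k * (1 / m)| = 1 / m := by
      rw [← sub_mul]; push_cast; rw [add_sub_cancel_left, one_mul, abs_of_pos (hpos m)]
    rw [← smul_sub, norm_smul, norm_inv, Real.norm_of_nonneg hs.1, e] at h
    have hh := hpos m
    rcases hs.1.eq_or_lt with h0 | h0
    · rw [← h0, zero_mul]; positivity
    · calc s * _ ≤ s * (B * (1 / m + s⁻¹ * ‖x - x'‖)) := by gcongr
        _ = B * (s * (1 / m) + ‖x - x'‖) := by field_simp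
        _ ≤ B * (1 / m + ‖x - x'‖) := by
          gcongr
          exact mul_le_of_le_one_left hh.le hs.2)
  rwa [Gs_one (by omega), hamVF_sc d1] at this

lemma step_two (hK : HB K B) (hH : HB (fun _ => H) B) (hs : s ∈ Icc (0 : ℝ) 1)
    (hr : r ∈ Icc (0 : ℝ) 1) (hc : c ∈ Icc (0 : ℝ) 1) (hz : NAct K H m s r c z ≤ (1 / m) ^ 4)
    {k : ℕ} (hk : k + 1 < m) :
    ‖z ((m + (k + 1) : ℕ)) - z ((m + k : ℕ)) - (1 / m : ℝ) • (-r) • s • hamVF H (s⁻¹ • z (m + k : ℕ))‖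
      ≤ 4 * B ^ 2 * (1 / m) ^ 2 := by
  have hB := hK.one_le
  have hH0 : GB H B := hH.gb (t := 0) ⟨le_rfl, zero_le_one⟩
  have hg := (hH0.sc hs).const_mul (c := -r) (by rw [abs_neg, abs_of_nonneg hr.1]; exact hr.2)
  have hh := hpos m
  have := near_step hK hH hs hr hc hz (k := m + k) (by omega) (fun x x' => by
    rw [add_assoc, Gs_two hk, Gs_two (by omega)]
    exact (hg.dlip x x').trans (by gcongr; linarith))
  rwa [Gs_two (by omega), hamVF_const_mul (hH0.sc hs).diff, hamVF_sc hH0.diff] at this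

lemma step_three (hK : HB K B) (hH : HB (fun _ => H) B) (hs : s ∈ Icc (0 : ℝ) 1)
    (hr : r ∈ Icc (0 : ℝ) 1) (hc : c ∈ Icc (0 : ℝ) 1) (hz : NAct K H m s r c z ≤ (1 / m) ^ 4)
    {k : ℕ} (hk : k + 1 < m) :
    ‖z ((2 * m + (k + 1) : ℕ)) - z ((2 * m + k : ℕ)) - (1 / m : ℝ) • c • hamVF H (z (2 * m + k : ℕ))‖
      ≤ 4 * B ^ 2 * (1 / m) ^ 2 := by
  have hB := hK.one_le
  have hH0 : GB H B := hH.gb (t := 0) ⟨le_rfl, zero_le_one⟩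
  have hg := hH0.const_mul (c := c) (by rw [abs_of_nonneg hc.1]; exact hc.2)
  have hh := hpos m
  have := near_step hK hH hs hr hc hz (k := 2 * m + k) (by omega) (fun x x' => by
    rw [add_assoc, Gs_three, Gs_three]
    exact (hg.dlip x x').trans (by gcongr; linarith))
  rwa [Gs_three, hamVF_const_mul hH0.diff] at this

end steps

/-- Quantitative absence of short closed trajectories: if the flow almost closes up after time
`τ ∈ [a, b] ⊂ (0, 1)`, then the Hamiltonian vector field is small along the trajectory. -/
lemma small_of_almost_closed {n : ℕ} {H : Esp n → ℝ} {B : ℝ} (hH : HB (fun _ => H) B)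
    (hno : ∀ γ : ℝ → Esp n, (∀ t, HasDerivAt γ (hamVF H (γ t)) t) →
      ∀ T, 0 < T → T < 1 → γ T = γ 0 → ∀ t, γ t = γ 0)
    {φ : ℝ → Esp n → Esp n} (hφ : IsHamIsotopyOf (fun _ => H) φ) {a b κ : ℝ} (ha : 0 < a)
    (hb : b < 1) (hκ : 0 < κ) :
    ∃ ρ > 0, ∀ τ ∈ Icc a b, ∀ w, ‖φ τ w - w‖ ≤ ρ → ∀ t ∈ Icc (0 : ℝ) 1, ‖hamVF H (φ t w)‖ ≤ κ := by
  have hB := hH.one_le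
  have hB0 : 0 ≤ B := by linarith
  have hI : Icc a b ⊆ Icc (0 : ℝ) 1 := Icc_subset_Icc ha.le hb.le
  have hcont : ContinuousOn (fun p : ℝ × Esp n => φ p.1 p.2) (Icc (0 : ℝ) 1 ×ˢ univ) := by
    refine (LipschitzOnWith.of_dist_le_mul (K := (B + Real.exp B).toNNReal) ?_).continuousOn
    rintro ⟨t, x⟩ ⟨ht, -⟩ ⟨t', x'⟩ ⟨ht', -⟩
    rw [Real.coe_toNNReal _ (by positivity), dist_eq_norm, dist_eq_norm]
    have h1 := hH.speed hφ x ht ht'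
    have h2 := hH.flow_lip hφ x' x ht'
    have h3 : ‖x - x'‖ ≤ max ‖t - t'‖ ‖x - x'‖ := le_max_right _ _
    have h4 : |t - t'| ≤ max ‖t - t'‖ ‖x - x'‖ := le_max_left _ _
    calc ‖φ t x - φ t' x'‖ ≤ ‖φ t x - φ t' x‖ + ‖φ t' x - φ t' x'‖ := norm_sub_le_norm_sub_add_norm_sub _ _ _
      _ ≤ B * max ‖t - t'‖ ‖x - x'‖ + Real.exp B * max ‖t - t'‖ ‖x - x'‖ :=
        add_le_add (h1.trans (by gcongr)) (h2.trans (by gcongr))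
      _ = _ := by rw [← add_mul]; rfl
  have hX : Continuous (hamVF H) := by
    refine (LipschitzWith.of_dist_le_mul (K := B.toNNReal) fun x x' => ?_).continuous
    rw [Real.coe_toNNReal _ hB0, dist_eq_norm, dist_eq_norm]
    simpa using hH.X_lip (t := 0) ⟨le_rfl, zero_le_one⟩ (t' := 0) ⟨le_rfl, zero_le_one⟩ x x'
  let A : Set (ℝ × Esp n × ℝ) := Icc a b ×ˢ (Metric.closedBall (0 : Esp n) (3 * B) ×ˢ Icc (0 : ℝ) 1)
  have hA : IsCompact A := isCompact_Icc.prod ((isCompact_closedBall _ _).prod isCompact_Icc)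
  have hc1 : ContinuousOn (fun p : ℝ × Esp n × ℝ => ‖hamVF H (φ p.2.2 p.2.1)‖) A := by
    refine (hX.comp_continuousOn (hcont.comp (f := fun p : ℝ × Esp n × ℝ => (p.2.2, p.2.1))
      (by fun_prop) ?_)).norm
    rintro ⟨τ, w, t⟩ ⟨_, _, ht⟩
    exact ⟨ht, trivial⟩
  have hc2 : ContinuousOn (fun p : ℝ × Esp n × ℝ => ‖φ p.1 p.2.1 - p.2.1‖) A := by
    refine ((hcont.comp (f := fun p : ℝ × Esp n × ℝ => (p.1, p.2.1)) (by fun_prop) ?_).sub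
      (by fun_prop)).norm
    rintro ⟨τ, w, t⟩ ⟨hτ, _, ht⟩
    exact ⟨hI hτ, trivial⟩
  -- On the compact set of `(τ, w, t)` where the field is not small, the displacement `φ τ w - w` has
  -- a positive minimum, since a zero would give a short closed trajectory.
  let S : Set (ℝ × Esp n × ℝ) := A ∩ (fun p : ℝ × Esp n × ℝ => ‖hamVF H (φ p.2.2 p.2.1)‖) ⁻¹' Ici κ
  have hS : IsCompact S := hA.of_isClosed_subset
    (hc1.preimage_isClosed_of_isClosed hA.isClosed isClosed_Ici) inter_subset_left
  have hmain : ∃ ρ > 0, ∀ p ∈ S, ρ < ‖φ p.1 p.2.1 - p.2.1‖ := by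
    rcases S.eq_empty_or_nonempty with h0 | h0
    · exact ⟨1, one_pos, by simp [h0]⟩
    obtain ⟨p, hp, hmin⟩ := hS.exists_isMinOn h0 (hc2.mono inter_subset_left)
    have hpos : 0 < ‖φ p.1 p.2.1 - p.2.1‖ := by
      rw [norm_pos_iff, sub_ne_zero]
      intro he
      obtain ⟨⟨hτ, -, ht⟩, hκp⟩ := hp
      have hcst := hno (fun t => φ t p.2.1) (hφ.2 _) p.1 (ha.trans_le hτ.1) (hτ.2.trans_lt hb)
        (by simp only [hφ.1]; exact he)
      have hd := hφ.2 p.2.1 p.2.2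
      have hd' : HasDerivAt (fun s => φ s p.2.1) 0 p.2.2 := by
        rw [show (fun s => φ s p.2.1) = fun _ => φ 0 p.2.1 from funext hcst]
        exact hasDerivAt_const _ _
      have := hd.unique hd'
      simp only [mem_preimage, mem_Ici] at hκp
      rw [this, norm_zero] at hκp
      linarith
    exact ⟨_, half_pos hpos, fun q hq => (half_lt_self hpos).trans_le (hmin hq)⟩
  obtain ⟨ρ, hρ, hρ'⟩ := hmain
  refine ⟨ρ, hρ, fun τ hτ w hw t ht => ?_⟩
  by_contra! hlt
  by_cases hwB : ‖w‖ ≤ 3 * B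
  · exact absurd hw (not_le.2 (hρ' (τ, w, t) ⟨⟨hτ, mem_closedBall_zero_iff.2 hwB, ht⟩, hlt.le⟩))
  -- Trajectories starting far away stay where the field vanishes.
  · have h1 := hH.speed hφ w (s := 0) ⟨le_rfl, zero_le_one⟩ ht
    rw [hφ.1, zero_sub, abs_neg, abs_of_nonneg ht.1] at h1
    have h2 : ‖w‖ ≤ ‖w - φ t w‖ + ‖φ t w‖ := by
      simpa using norm_add_le (w - φ t w) (φ t w)
    have h3 : B < ‖φ t w‖ := by nlinarith [ht.2]
    have h4 : hamVF H (φ t w) = 0 := by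
      rw [hamVF_eq_Jop, hH.dfar 0 ⟨le_rfl, zero_le_one⟩ _ h3]
      ext i <;> simp [Jop]
    rw [h4, norm_zero] at hlt
    linarith

/-! ### Almost critical chains with small quadratic part -/

lemma telescope {E : Type*} [NormedAddCommGroup E] {y : ℕ → E} {N : ℕ} {c : ℝ}
    (h : ∀ k < N, ‖y (k + 1) - y k‖ ≤ c) : ∀ k ≤ N, ‖y k - y 0‖ ≤ k * c := by
  intro k
  induction k with
  | zero => simp
  | succ k ih =>
    intro hk
    have h1 := norm_sub_le_norm_sub_add_norm_sub (y (k + 1)) (y k) (y 0)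
    have h2 := h k (by omega)
    have h3 := ih (by omega)
    push_cast
    linarith

/-- A bound for the quadratic part of the action by the total displacement and the size of the
steps of the `x`-coordinates. -/
lemma abs_Qact_le {N n : ℕ} [NeZero N] {z : ZMod N → Esp n} {R e : ℝ} (hR : ∀ j, ‖z j - z 0‖ ≤ R)
    (he : ∀ j, ‖(z (j + 1)).1 - (z j).1‖ ≤ e) : |Qact z| ≤ N * (n * (R * e)) := by
  have hR0 : 0 ≤ R := (norm_nonneg _).trans (hR 0)
  have h1 : Qact z = ∑ j, ∑ i, ((z j).2 i - (z 0).2 i) * ((z (j + 1)).1 i - (z j).1 i) := by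
    have h2 : ∑ j, ∑ i, (z 0).2 i * ((z (j + 1)).1 i - (z j).1 i) = 0 := by
      rw [Finset.sum_comm]
      refine Finset.sum_eq_zero fun i _ => ?_
      rw [← Finset.mul_sum, sum_diff_eq_zero fun j => (z j).1 i, mul_zero]
    rw [Qact, ← sub_zero (∑ j, ∑ i, (z j).2 i * ((z (j + 1)).1 i - (z j).1 i)), ← h2,
      ← Finset.sum_sub_distrib]
    refine Finset.sum_congr rfl fun j _ => ?_
    rw [← Finset.sum_sub_distrib]
    exact Finset.sum_congr rfl fun i _ => by ring
  rw [h1]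
  have h3 : ∀ j, |∑ i, ((z j).2 i - (z 0).2 i) * ((z (j + 1)).1 i - (z j).1 i)| ≤ n * (R * e) := by
    intro j
    refine (Finset.abs_sum_le_sum_abs _ _).trans ((Finset.sum_le_sum (g := fun _ => R * e)
      fun i _ => ?_).trans_eq (by simp))
    rw [abs_mul]
    have a1 : |(z j).2 i - (z 0).2 i| ≤ R :=
      (norm_le_pi_norm (z j - z 0).2 i).trans ((norm_snd_le _).trans (hR j))
    have a2 : |(z (j + 1)).1 i - (z j).1 i| ≤ e :=
      (norm_le_pi_norm ((z (j + 1)).1 - (z j).1) i).trans (he j)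
    exact mul_le_mul a1 a2 (abs_nonneg _) hR0
  refine (Finset.abs_sum_le_sum_abs _ _).trans ((Finset.sum_le_sum fun j _ => h3 j).trans_eq ?_)
  simp

/-- The constant of `euler_error` for steps of local error `A * h ^ 2`. -/
def eulC (B A : ℝ) : ℝ := Real.exp B * (2 * A + 2 * B ^ 2) + A + B

lemma eulC_pos {B A : ℝ} (hB : 1 ≤ B) (hA : 0 ≤ A) : 0 < eulC B A := by
  unfold eulC; positivity

section tau

variable {n : ℕ} {K : ℝ → Esp n → ℝ} {H : Esp n → ℝ} {B : ℝ}

/-- Along the path where only a multiple of `H` survives, almost critical chains have small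
quadratic part: they follow an almost closed trajectory of `H` of period less than one, which is
then almost constant. -/
lemma Q_small (hK : HB K B) (hH : HB (fun _ => H) B)
    (hno : ∀ γ : ℝ → Esp n, (∀ t, HasDerivAt γ (hamVF H (γ t)) t) →
      ∀ T, 0 < T → T < 1 → γ T = γ 0 → ∀ t, γ t = γ 0)
    {φ : ℝ → Esp n → Esp n} (hφ : IsHamIsotopyOf (fun _ => H) φ) {a b ε : ℝ} (ha : 0 < a)
    (hb : b < 1) (hε : 0 < ε) :
    ∃ h₀ > 0, ∀ m : ℕ, ∀ [NeZero (3 * m)], (1 / m : ℝ) ≤ h₀ → ∀ τ ∈ Icc a b,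
      ∀ z : ZMod (3 * m) → Esp n, NAct K H m 0 1 τ z ≤ (1 / m) ^ 4 → |Qact z| ≤ ε := by
  have hB := hK.one_le
  set C₀ := eulC B (4 * B ^ 2) with hC₀
  have hC₀p : 0 < C₀ := eulC_pos hB (by positivity)
  set W : ℝ := 18 * n * B + 1 with hW
  have hWp : 0 < W := by positivity
  obtain ⟨ρ, hρ, hsmall⟩ := small_of_almost_closed hH hno hφ ha hb
    (κ := ε / (2 * W)) (by positivity)
  refine ⟨min (ρ / (C₀ + 4 * B)) (ε / (2 * W * (1 + B * C₀))), by positivity, ?_⟩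
  intro m _ hh τ hτ z hz
  have h1 := hh.trans (min_le_left _ _)
  have h2 := hh.trans (min_le_right _ _)
  rw [le_div_iff₀ (by positivity)] at h1 h2
  have mh' := mh m
  have hp := hpos m
  have hl := hle m
  have hmp := mpos m
  set h : ℝ := 1 / m with hhdef
  have hs0 : (0 : ℝ) ∈ Icc (0 : ℝ) 1 := ⟨le_rfl, zero_le_one⟩
  have hr1 : (1 : ℝ) ∈ Icc (0 : ℝ) 1 := ⟨zero_le_one, le_rfl⟩
  have hτ1 : τ ∈ Icc (0 : ℝ) 1 := ⟨(ha.trans_le hτ.1).le, hτ.2.trans hb.le⟩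
  have hGB : ∀ j : ZMod (3 * m), GB (Gs K H m 0 1 τ j.val) B :=
    fun j => Gs_GB hK hH hs0 hr1 hτ1 j.val
  have hfst := fun j => chain_fst (G := fun j : ZMod (3 * m) => Gs K H m 0 1 τ j.val) hGB hz j
  have hsnd := fun j => chain_snd (G := fun j : ZMod (3 * m) => Gs K H m 0 1 τ j.val) hGB hz j
  have hX0 : ∀ k < 2 * m, ∀ x, hamVF (Gs K H m 0 1 τ k) x = 0 := by
    intro k hk x
    have : Gs K H m 0 1 τ k = fun _ => 0 := by
      rw [Gs]; split_ifs <;> simp [sc_zero]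
    rw [this, hamVF_eq_Jop]
    ext i <;> simp [Jop]
  have hclose := near_close_nat hK hH hs0 hr1 hτ1 hz
  simp only [← hhdef] at hfst hsnd hclose
  -- the first two slots are almost constant
  have hA : ‖z (2 * m : ℕ) - z 0‖ ≤ 4 * B * h := by
    have f1 : ∀ k < 2 * m, ‖(z ((k + 1 : ℕ))).1 - (z (k : ℕ)).1‖ ≤ h ^ 2 := by
      intro k hk
      have := hfst (k : ℕ)
      rw [ZMod.val_natCast_of_lt (by omega), hX0 k hk, Prod.fst_zero, smul_zero, sub_zero] at this
      push_cast
      exact this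
    have f2 : ∀ k < 2 * m - 1, ‖(z ((k + 1 : ℕ))).2 - (z (k : ℕ)).2‖ ≤ h ^ 2 := by
      intro k hk
      have := hsnd (k : ℕ)
      rw [show ((k : ℕ) + 1 : ZMod (3 * m)) = ((k + 1 : ℕ) : ZMod (3 * m)) by push_cast; rfl,
        ZMod.val_natCast_of_lt (by omega), hX0 (k + 1) (by omega),
        Prod.snd_zero, smul_zero, sub_zero] at this
      exact this
    have g1 := telescope (y := fun k : ℕ => (z (k : ℕ)).1) f1 (2 * m) le_rfl
    have g2 := telescope (y := fun k : ℕ => (z (k : ℕ)).2) f2 (2 * m - 1) le_rfl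
    have g3 := (norm_snd_le _).trans (hclose (2 * m - 1))
    rw [show 2 * m - 1 + 1 = 2 * m by omega] at g3
    have e1 : ((2 * m : ℕ) : ℝ) * h ^ 2 = 2 * h := by push_cast; linear_combination 2 * h * mh'
    have e2 : ((2 * m - 1 : ℕ) : ℝ) * h ^ 2 ≤ 2 * h := by
      rw [← e1]
      have : ((2 * m - 1 : ℕ) : ℝ) ≤ ((2 * m : ℕ) : ℝ) := by exact_mod_cast Nat.sub_le _ _
      gcongr
    simp only [Nat.cast_zero] at g1 g2
    rw [Prod.norm_def, max_le_iff]
    refine ⟨(g1.trans_eq e1).trans (by nlinarith), ?_⟩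
    have g4 := norm_sub_le_norm_sub_add_norm_sub (z (2 * m : ℕ)).2 (z (2 * m - 1 : ℕ)).2 (z 0).2
    rw [Prod.snd_sub] at g3 ⊢
    nlinarith
  -- the last slot follows the flow of `H`
  set w := z (2 * m : ℕ) with hw
  have hE := euler_error (X := fun _ x => τ • hamVF H x) (B := B) (D := 4 * B ^ 2)
    (γ := fun t => φ (τ * t) w) (y := fun k => z (2 * m + k : ℕ)) (h := h) hB
    (fun t ht x => by
      rw [norm_smul, Real.norm_of_nonneg hτ1.1]
      have := hH.X_le hs0 x
      exact (mul_le_mul hτ1.2 this (norm_nonneg _) zero_le_one).trans_eq (one_mul _))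
    (fun t ht t' ht' x x' => by
      rw [← smul_sub, norm_smul, Real.norm_of_nonneg hτ1.1]
      exact (mul_le_mul hτ1.2 (hH.X_lip ht ht' x x') (norm_nonneg _) zero_le_one).trans_eq
        (one_mul _))
    (fun t ht => by
      have := (hφ.2 w (τ * t)).scomp t ((hasDerivAt_id t).const_mul τ)
      rw [mul_one] at this
      exact this)
    hmp mh' (by positivity) (by simp [hφ.1, hw]; positivity)
    (fun k hk => by
      have := step_three hK hH hs0 hr1 hτ1 hz hk
      rw [← hhdef] at this
      exact this)
    (by
      have := hclose (2 * m + (m - 1))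
      rw [show 2 * m + (m - 1) + 1 = 2 * m + m by omega] at this
      exact this.trans (mul_le_mul_of_nonneg_right (by nlinarith) hp.le))
  have hlast : ‖φ τ w - w‖ ≤ ρ := by
    have e1 := hE m le_rfl
    simp only [mh', mul_one] at e1
    rw [show ((2 * m + m : ℕ) : ZMod (3 * m)) = 0 by
      rw [show 2 * m + m = 3 * m by ring]; exact ZMod.natCast_self _] at e1
    change _ ≤ C₀ * h at e1
    have e2 := norm_sub_le_norm_sub_add_norm_sub (φ τ w) (z 0) w
    rw [norm_sub_rev (φ τ w) (z 0), norm_sub_rev (z 0) w] at e2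
    nlinarith
  have hX := hsmall τ hτ w hlast
  have hX' : ∀ k < m, ‖hamVF H (z (2 * m + k : ℕ))‖ ≤ ε / (2 * W) + B * (C₀ * h) := by
    intro k hk
    have e1 := hE k hk.le
    change _ ≤ C₀ * h at e1
    have e2 := hH.X_lip hs0 hs0 (z (2 * m + k : ℕ)) (φ (τ * (k * h)) w)
    rw [sub_self, abs_zero, zero_add] at e2
    have tk := kh_mem (m := m) hk.le
    rw [← hhdef] at tk
    have e3 := hX (τ * (k * h)) ⟨mul_nonneg hτ1.1 tk.1, mul_le_one₀ hτ1.2 tk.1 tk.2⟩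
    have e4 := norm_sub_norm_le (hamVF H (z (2 * m + k : ℕ))) (hamVF H (φ (τ * (k * h)) w))
    have e5 : B * ‖z (2 * m + k : ℕ) - φ (τ * (k * h)) w‖ ≤ B * (C₀ * h) := by gcongr
    linarith
  set η := ε / (2 * W) + B * (C₀ * h) with hη
  have hη0 : 0 ≤ η := by positivity
  have hstepx : ∀ j, ‖(z (j + 1)).1 - (z j).1‖ ≤ h ^ 2 + h * η := by
    intro j
    have e1 := hfst j
    have e2 : ‖hamVF (Gs K H m 0 1 τ j.val) (z j)‖ ≤ η := by
      rcases lt_or_ge j.val (2 * m) with hj | hj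
      · rw [hX0 _ hj, norm_zero]; exact hη0
      · obtain ⟨k, hk⟩ := Nat.exists_eq_add_of_le hj
        have hk' : k < m := by have := ZMod.val_lt j; omega
        have hzj : z j = z (2 * m + k : ℕ) := by rw [← hk, ZMod.natCast_zmod_val]
        rw [hk, Gs_three, hamVF_const_mul (hH.gb hs0).diff, norm_smul, Real.norm_of_nonneg hτ1.1, hzj]
        exact (mul_le_mul hτ1.2 (hX' k hk') (norm_nonneg _) zero_le_one).trans_eq (one_mul _)
    have e3 : ‖h • (hamVF (Gs K H m 0 1 τ j.val) (z j)).1‖ ≤ h * η := by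
      rw [norm_smul, Real.norm_of_nonneg hp.le]
      have := (norm_fst_le _).trans e2
      gcongr
    have e4 := norm_add_le ((z (j + 1)).1 - (z j).1 - h • (hamVF (Gs K H m 0 1 τ j.val) (z j)).1)
      (h • (hamVF (Gs K H m 0 1 τ j.val) (z j)).1)
    rw [sub_add_cancel] at e4
    linarith
  have hdisp : ∀ j, ‖z j - z 0‖ ≤ 6 * B := by
    intro j
    have e1 := telescope (y := fun k : ℕ => z (k : ℕ)) (N := 3 * m) (fun k _ => hclose k)
      j.val (ZMod.val_lt j).le
    simp only [ZMod.natCast_zmod_val, Nat.cast_zero] at e1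
    have e2 : (j.val : ℝ) ≤ 3 * m := by exact_mod_cast (ZMod.val_lt j).le
    calc _ ≤ (j.val : ℝ) * (2 * B * h) := e1
      _ ≤ 3 * m * (2 * B * h) := by gcongr
      _ = 6 * B * (m * h) := by ring
      _ = 6 * B := by rw [mh', mul_one]
  refine (abs_Qact_le hdisp hstepx).trans ?_
  have e0 : ((3 * m : ℕ) : ℝ) * (n * (6 * B * (h ^ 2 + h * η))) = 18 * n * B * (h + η) := by
    push_cast; linear_combination 18 * n * B * (h + η) * mh'
  rw [e0]
  have e1 : 18 * n * B * (h + η) ≤ W * (h + η) := by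
    have : 0 ≤ h + η := by positivity
    nlinarith
  refine e1.trans ?_
  have e2 : W * (ε / (2 * W)) = ε / 2 := by field_simp
  rw [hη]
  nlinarith

end tau

/-! ### Growing the coefficient of the autonomous Hamiltonian -/

lemma abs_avg_le {m : ℕ} (hm : 0 < m) {u : ℕ → ℝ} {c : ℝ} (hu : ∀ k < m, |u k| ≤ c) :
    |(1 / m : ℝ) * ∑ k ∈ Finset.range m, u k| ≤ c := by
  have hm' : (0 : ℝ) < m := by exact_mod_cast hm
  rw [abs_mul, abs_of_pos (by positivity : (0 : ℝ) < 1 / m)]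
  have h1 : |∑ k ∈ Finset.range m, u k| ≤ m * c :=
    (Finset.abs_sum_le_sum_abs _ _).trans ((Finset.sum_le_sum (g := fun _ => c) fun k hk =>
      hu k (Finset.mem_range.1 hk)).trans_eq (by simp))
  calc _ ≤ (1 / m : ℝ) * (m * c) := by gcongr
    _ = c := by field_simp

lemma abs_avg_sub_le {m : ℕ} (hm : 0 < m) {u v : ℕ → ℝ} {c : ℝ} (hu : ∀ k < m, |u k - v k| ≤ c) :
    |(1 / m : ℝ) * ∑ k ∈ Finset.range m, u k - (1 / m : ℝ) * ∑ k ∈ Finset.range m, v k| ≤ c := by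
  rw [← mul_sub, ← Finset.sum_sub_distrib]
  exact abs_avg_le hm hu

section stages

variable {n : ℕ} {K : ℝ → Esp n → ℝ} {H : Esp n → ℝ} {B : ℝ}

/-- The homotopy growing the coefficient of `H` from `a` to `b < 1`: almost no height is lost
relative to the constant chain at a maximum. -/
lemma tau_stage (hK : HB K B) (hH : HB (fun _ => H) B)
    (hno : ∀ γ : ℝ → Esp n, (∀ t, HasDerivAt γ (hamVF H (γ t)) t) →
      ∀ T, 0 < T → T < 1 → γ T = γ 0 → ∀ t, γ t = γ 0)
    {φ : ℝ → Esp n → Esp n} (hφ : IsHamIsotopyOf (fun _ => H) φ) {a b c M : ℝ} (ha : 0 < a)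
    (hab : a ≤ b) (hb : b < 1) (hc : 0 < c) (hM : M ≤ B) :
    ∃ h₀ > 0, ∀ m : ℕ, ∀ [NeZero (3 * m)], (1 / m : ℝ) ≤ h₀ →
      ∃ Θ : (ZMod (3 * m) → Esp n) → (ZMod (3 * m) → Esp n), Adm Θ ∧
        ∀ z, a * M ≤ Act K H m 0 1 a z → b * (M - c * (b - a)) ≤ Act K H m 0 1 b (Θ z) := by
  have hB := hK.one_le
  obtain ⟨h₀, hh₀, hQ⟩ := Q_small hK hH hno hφ ha hb (ε := c * a ^ 2) (by positivity)
  refine ⟨h₀, hh₀, fun m _ hm => ?_⟩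
  have hs0 : (0 : ℝ) ∈ Icc (0 : ℝ) 1 := ⟨le_rfl, zero_le_one⟩
  have hact : ∀ τ z, Act K H m 0 1 τ z = Qact z
      + τ * ((1 / m) * ∑ k ∈ Finset.range m, H (z ((2 * m + k : ℕ)))) := by
    intro τ z
    rw [Act_eq]
    simp [sc_zero]
  have hG : ∀ z : ZMod (3 * m) → Esp n,
      |(1 / m : ℝ) * ∑ k ∈ Finset.range m, H (z ((2 * m + k : ℕ)))| ≤ B := fun z =>
    abs_avg_le (mpos m) fun k _ => hH.bdd 0 hs0 _
  obtain ⟨Θ, hΘ, h⟩ := push_slots (m := m) hK hH hab (S := fun _ => 0) (R := fun _ => 1)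
    (C := fun τ => τ)
    (fun _ _ => hs0) (fun _ _ => ⟨zero_le_one, le_rfl⟩)
    (fun τ hτ => ⟨ha.le.trans hτ.1, hτ.2.trans hb.le⟩)
    (ℓ := fun τ => τ * (M - c * (τ - a))) (c := B) (κ₁ := 1) (by linarith) one_pos
    (fun τ hτ τ' hτ' hle z => by
      have := (abs_le.1 (hG z)).1
      rw [hact, hact]
      nlinarith)
    (fun τ hτ τ' hτ' hle => by
      have h1 : 0 ≤ τ + τ' - a := by linarith [hτ.1, hτ'.1]
      have h2 : 0 ≤ τ' - τ := by linarith
      have h3 : 0 ≤ (τ' - τ) * (c * (τ + τ' - a)) := by positivity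
      have h4 : (τ' - τ) * M ≤ (τ' - τ) * B := by gcongr
      nlinarith)
    (fun τ hτ τ' hτ' hle _ z hz hℓ => by
      have hq := (abs_le.1 (hQ m hm τ' hτ' z hz)).2
      simp only [hact] at hℓ ⊢
      set G := (1 / m : ℝ) * ∑ k ∈ Finset.range m, H (z ((2 * m + k : ℕ)))
      have hτ0 : 0 < τ := ha.trans_le hτ.1
      -- multiply the claim by `τ`
      have h1 : c * a ^ 2 ≤ c * (τ * τ') := by
        have : a ^ 2 ≤ τ * τ' := by rw [sq]; exact mul_le_mul hτ.1 hτ'.1 ha.le hτ0.le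
        gcongr
      have h2 : 0 ≤ (τ' - τ) * (c * (τ * τ') - Qact z) := mul_nonneg (by linarith) (by linarith)
      have h3 : 0 ≤ τ' * (Qact z + τ * G - τ * (M - c * (τ - a))) :=
        mul_nonneg (by linarith) (by linarith)
      have h4 : 0 ≤ τ * (Qact z + τ' * G - τ' * (M - c * (τ' - a))) := by
        linear_combination h2 + h3
      exact le_of_sub_nonneg (nonneg_of_mul_nonneg_right h4 hτ0))
  refine ⟨Θ, hΘ, fun z hz => h z (by simpa using hz)⟩

/-- The derivative of the rescaled Hamiltonian in the scale is `eact`, up to the factor `2 u`. -/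
lemma hasDerivAt_sc {f : Esp n → ℝ} (hf : Differentiable ℝ f) {u : ℝ} (hu : u ≠ 0) (x : Esp n) :
    HasDerivAt (fun u => sc u f x) (2 * u * eact f (u⁻¹ • x)) u := by
  have h1 : HasDerivAt (fun u : ℝ => u⁻¹ • x) ((-(u ^ 2)⁻¹) • x) u :=
    (hasDerivAt_inv hu).smul_const x
  have h2 := (hf (u⁻¹ • x)).hasFDerivAt.comp_hasDerivAt u h1
  have h3 := (hasDerivAt_pow 2 u).mul h2
  refine h3.congr_deriv ?_
  simp only [eact, map_smul, smul_eq_mul, Function.comp]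
  field_simp
  ring

/-- Increments of the rescaled Hamiltonian in the scale, to second order and uniformly in `x`. -/
lemma sc_increment (hK : HB K B) {s₀ : ℝ} (hs₀ : 0 < s₀) {s s' t : ℝ} (hs : s₀ ≤ s) (hss : s ≤ s')
    (hs' : s' ≤ 1) (ht : t ∈ Icc (0 : ℝ) 1) (x : Esp n) :
    |sc s' (K t) x - sc s (K t) x - (s' - s) * (2 * s' * eact (K t) (s'⁻¹ • x))|
      ≤ (2 * B + 2 * B ^ 2 / s₀ ^ 2) * (s' - s) ^ 2 := by
  have hB := hK.one_le
  have hs'0 : 0 < s' := by linarith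
  set e := eact (K t) with he
  have key : ∀ u ∈ Icc s s', ‖2 * u * e (u⁻¹ • x) - 2 * s' * e (s'⁻¹ • x)‖
      ≤ (2 * B + 2 * B ^ 2 / s₀ ^ 2) * (s' - s) := by
    intro u hu
    have hu0 : 0 < u := by linarith [hu.1]
    have hd : |u - s'| ≤ s' - s := by rw [abs_le]; constructor <;> linarith [hu.1, hu.2]
    have h1 : |e (u⁻¹ • x) - e (s'⁻¹ • x)| ≤ B ^ 2 / s₀ ^ 2 * (s' - s) := by
      by_cases hx : ‖x‖ ≤ B
      · have h2 := hK.elip t ht t ht (u⁻¹ • x) (s'⁻¹ • x)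
        rw [sub_self, abs_zero, zero_add, ← sub_smul, norm_smul, Real.norm_eq_abs] at h2
        have h3 : |u⁻¹ - s'⁻¹| ≤ (s' - s) / s₀ ^ 2 := by
          rw [inv_sub_inv hu0.ne' hs'0.ne', abs_div, abs_of_pos (mul_pos hu0 hs'0), abs_sub_comm]
          have : s₀ ^ 2 ≤ u * s' := by
            rw [sq]; exact mul_le_mul (by linarith [hu.1]) (by linarith) hs₀.le hu0.le
          have h0 : 0 ≤ s' - s := by linarith
          gcongr
        calc _ ≤ B * (|u⁻¹ - s'⁻¹| * ‖x‖) := h2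
          _ ≤ B * ((s' - s) / s₀ ^ 2 * B) := by gcongr
          _ = _ := by ring
      · have hfar : ∀ u : ℝ, 0 < u → u ≤ 1 → e (u⁻¹ • x) = 0 := by
          intro u hu0 hu1
          refine hK.efar t ht _ ?_
          rw [norm_smul, norm_inv, Real.norm_of_nonneg hu0.le]
          have : 1 ≤ u⁻¹ := (one_le_inv₀ hu0).2 hu1
          have hx' : B < ‖x‖ := not_le.1 hx
          nlinarith [norm_nonneg x]
        rw [hfar u hu0 (by linarith [hu.2]), hfar s' hs'0 hs', sub_zero, abs_zero]
        have : 0 ≤ s' - s := by linarith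
        positivity
    have h2 : |e (u⁻¹ • x)| ≤ B := hK.ebdd t ht _
    rw [Real.norm_eq_abs, show 2 * u * e (u⁻¹ • x) - 2 * s' * e (s'⁻¹ • x) =
      2 * ((u - s') * e (u⁻¹ • x)) + 2 * (s' * (e (u⁻¹ • x) - e (s'⁻¹ • x))) by ring]
    refine (abs_add_le _ _).trans ?_
    rw [abs_mul, abs_mul, abs_mul, abs_mul, abs_two, abs_of_pos hs'0]
    have h3 : |u - s'| * |e (u⁻¹ • x)| ≤ (s' - s) * B :=
      mul_le_mul hd h2 (abs_nonneg _) (by linarith)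
    have h4 : s' * |e (u⁻¹ • x) - e (s'⁻¹ • x)| ≤ 1 * (B ^ 2 / s₀ ^ 2 * (s' - s)) :=
      mul_le_mul hs' h1 (abs_nonneg _) zero_le_one
    calc _ ≤ 2 * ((s' - s) * B) + 2 * (1 * (B ^ 2 / s₀ ^ 2 * (s' - s))) := by gcongr
      _ = _ := by ring
  have hmv := (convex_Icc s s').norm_image_sub_le_of_norm_hasDerivWithin_le
    (f := fun u => sc u (K t) x - u * (2 * s' * e (s'⁻¹ • x)))
    (fun u hu => ((hasDerivAt_sc (hK.gb ht).diff (by linarith [hu.1] : u ≠ 0) x).sub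
      ((hasDerivAt_id u).mul_const (2 * s' * e (s'⁻¹ • x)))).hasDerivWithinAt)
    (C := (2 * B + 2 * B ^ 2 / s₀ ^ 2) * (s' - s))
    (fun u hu => by rw [one_mul]; exact key u hu) (left_mem_Icc.2 hss) (right_mem_Icc.2 hss)
  rw [Real.norm_eq_abs, Real.norm_eq_abs, abs_of_nonneg (by linarith : 0 ≤ s' - s)] at hmv
  calc _ = _ := by congr 1; ring
    _ ≤ _ := hmv
    _ = _ := by ring

end stages

/-! ### Rescaling homotopy -/

section stages

variable {n : ℕ} {K : ℝ → Esp n → ℝ} {H : Esp n → ℝ} {B : ℝ}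

/-- Averages of `eact` along an Euler scheme that shadows `γ` approximate the action integral
along `γ`. -/
lemma avg_eact_close (hK : HB K B) {γ : ℝ → Esp n} {m : ℕ} (hm : 0 < m) {y : ℕ → Esp n} {C : ℝ}
    (hγ : ∀ s ∈ Icc (0 : ℝ) 1, ∀ t ∈ Icc (0 : ℝ) 1, ‖γ s - γ t‖ ≤ B * |s - t|)
    (hy : ∀ k ≤ m, ‖y k - γ (k * (1 / m))‖ ≤ C * (1 / m)) :
    |(1 / m : ℝ) * ∑ k ∈ Finset.range m, eact (K (k * (1 / m))) (y k)
      - ∫ t in (0 : ℝ)..1, eact (K t) (γ t)| ≤ (B * C + 2 * B ^ 2) * (1 / m) := by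
  have hB := hK.one_le
  have : NeZero (3 * m) := ⟨by omega⟩
  have h1 := riemann_sum (u := fun t => eact (K t) (γ t)) (L := 2 * B ^ 2)
    (lip_comp (g := fun t x => eact (K t) x) hB hK.elip hγ) hm
  have h2 := abs_avg_sub_le hm (u := fun k => eact (K (k * (1 / m))) (y k))
    (v := fun k => eact (K (k * (1 / m))) (γ (k * (1 / m)))) (c := B * (C * (1 / m)))
    fun k hk => by
      have h := hK.elip _ (kh_mem (m := m) hk.le) _ (kh_mem (m := m) hk.le) (y k) (γ (k * (1 / m)))
      rw [sub_self, abs_zero, zero_add] at h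
      exact h.trans (mul_le_mul_of_nonneg_left (hy k hk.le) (by linarith))
  have h3 := abs_add_le ((1 / m : ℝ) * ∑ k ∈ Finset.range m, eact (K (k * (1 / m))) (y k)
    - (1 / m : ℝ) * ∑ k ∈ Finset.range m, eact (K (k * (1 / m))) (γ (k * (1 / m))))
    ((1 / m : ℝ) * ∑ k ∈ Finset.range m, eact (K (k * (1 / m))) (γ (k * (1 / m)))
      - ∫ t in (0 : ℝ)..1, eact (K t) (γ t))
  rw [sub_add_sub_cancel] at h3
  calc _ ≤ _ := h3
    _ ≤ B * (C * (1 / m)) + 2 * B ^ 2 * (1 / m) := add_le_add h2 h1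
    _ = _ := by ring

/-- Almost critical chains of the rescaled problem follow the flow of `K` and then the flow of `H`
backwards; since the time-one maps agree, the two contributions to the derivative cancel. -/
lemma s_near (hn : 0 < n) (hK : HB K B) (hH : HB (fun _ => H) B)
    {φ ψ : ℝ → Esp n → Esp n} (hφ : IsHamIsotopyOf (fun _ => H) φ) (hψ : IsHamIsotopyOf K ψ)
    (hφψ : ∀ x, ψ 1 x = φ 1 x) {s₀ ε : ℝ} (hs₀ : 0 < s₀) (hε : 0 < ε) :
    ∃ h₀ > 0, ∀ m : ℕ, ∀ [NeZero (3 * m)], (1 / m : ℝ) ≤ h₀ → ∀ s ∈ Icc s₀ 1,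
      ∀ z : ZMod (3 * m) → Esp n, NAct K H m s 1 1 z ≤ (1 / m) ^ 4 →
      |(1 / m : ℝ) * ∑ k ∈ Finset.range m, eact (K (k * (1 / m))) (s⁻¹ • z (k : ℕ))
        - (1 / m : ℝ) * ∑ k ∈ Finset.range m, eact H (s⁻¹ • z (m + k : ℕ))| ≤ ε := by
  have hB := hK.one_le
  set A : ℝ := 4 * B ^ 2 / s₀ with hA
  have hA0 : 0 ≤ A := by positivity
  set C := eulC B A with hC
  have hC0 : 0 < C := eulC_pos hB hA0
  set C' := eulC B (A + C) with hC'
  have hC'0 : 0 < C' := eulC_pos hB (by positivity)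
  set W := B * C + 2 * B ^ 2 + (B * C' + 2 * B ^ 2) with hW
  refine ⟨ε / W, by positivity, fun m _ hm s hs z hz => ?_⟩
  have hs1 : s ∈ Icc (0 : ℝ) 1 := ⟨hs₀.le.trans hs.1, hs.2⟩
  have h1' : (1 : ℝ) ∈ Icc (0 : ℝ) 1 := ⟨zero_le_one, le_rfl⟩
  have h0' : (0 : ℝ) ∈ Icc (0 : ℝ) 1 := ⟨le_rfl, zero_le_one⟩
  have hs0 : 0 < s := hs₀.trans_le hs.1
  have hsinv : s⁻¹ ≤ s₀⁻¹ := inv_anti₀ hs₀ hs.1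
  have hp := hpos m
  have scale : ∀ (v : Esp n) (e : ℝ), ‖v‖ ≤ 4 * B ^ 2 * e → ‖s⁻¹ • v‖ ≤ A * e := by
    intro v e hv
    have he : 0 ≤ 4 * B ^ 2 * e := (norm_nonneg _).trans hv
    rw [norm_smul, norm_inv, Real.norm_of_nonneg hs0.le]
    calc _ ≤ s₀⁻¹ * (4 * B ^ 2 * e) := mul_le_mul hsinv hv (norm_nonneg _) (by positivity)
      _ = _ := by rw [hA]; ring
  have hlast : ∀ k : ℕ, ‖s⁻¹ • z (k + 1 : ℕ) - s⁻¹ • z (k : ℕ)‖ ≤ A * (1 / m) := by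
    intro k
    rw [← smul_sub]
    refine scale _ _ ((near_close_nat hK hH hs1 h1' h1' hz k).trans ?_)
    exact mul_le_mul_of_nonneg_right (by nlinarith) hp.le
  set w := s⁻¹ • z (0 : ℕ) with hw
  have hE1 := euler_error (X := fun t x => hamVF (K t) x) (B := B) (D := A)
    (γ := fun t => ψ t w) (y := fun k => s⁻¹ • z (k : ℕ)) (h := 1 / m) hB
    (fun t ht x => hK.X_le ht x) (fun t ht t' ht' x x' => hK.X_lip ht ht' x x')
    (fun t _ => hψ.2 w t) (mpos m) (mh m) hA0 (by
      simp only [hψ.1, hw, sub_self, norm_zero]; positivity)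
    (fun k hk => by
      have := scale _ _ (step_one hK hH hs1 h1' h1' hz hk)
      rw [smul_sub, smul_sub, smul_comm (1 / m : ℝ) s, inv_smul_smul₀ hs0.ne'] at this
      exact this)
    (by
      have := hlast (m - 1)
      rwa [show m - 1 + 1 = m by have := mpos m; omega] at this)
  change ∀ k ≤ m, _ ≤ C * (1 / m : ℝ) at hE1
  have hE2 := euler_error (X := fun _ x => -hamVF H x) (B := B) (D := A + C)
    (γ := fun t => φ (1 - t) w) (y := fun k => s⁻¹ • z (m + k : ℕ)) (h := 1 / m) hB
    (fun t ht x => by rw [norm_neg]; exact hH.X_le ht x)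
    (fun t ht t' ht' x x' => by
      rw [neg_sub_neg, norm_sub_rev]; exact hH.X_lip ht ht' x x')
    (fun t _ => by
      have := (hφ.2 w (1 - t)).scomp t ((hasDerivAt_id t).const_sub 1)
      rw [neg_one_smul] at this
      exact this) (mpos m) (mh m) (by positivity) (by
      have := hE1 m le_rfl
      simp only [mh m, hφψ] at this
      simp only [sub_zero, add_zero]
      exact this.trans (mul_le_mul_of_nonneg_right (by linarith) hp.le))
    (fun k hk => by
      have := scale _ _ (step_two hK hH hs1 h1' h1' hz hk)
      rw [smul_sub, smul_sub, smul_comm (1 / m : ℝ) (-1 : ℝ), smul_comm (1 / m : ℝ) s,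
        smul_comm (-1 : ℝ) s, inv_smul_smul₀ hs0.ne', smul_comm, neg_one_smul] at this
      exact this.trans (mul_le_mul_of_nonneg_right (by linarith) (by positivity)))
    (by
      have := hlast (m + (m - 1))
      rw [show m + (m - 1) + 1 = m + m by have := mpos m; omega] at this
      exact this.trans (mul_le_mul_of_nonneg_right (by linarith) hp.le))
  change ∀ k ≤ m, _ ≤ C' * (1 / m : ℝ) at hE2
  have i1 := avg_eact_close hK (mpos m) (γ := fun t => ψ t w)
    (fun s hs t ht => hK.speed hψ w hs ht) hE1
  have i2 := avg_eact_close hH (mpos m) (γ := fun t => φ (1 - t) w)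
    (fun s hs t ht => by
      have := hH.speed hφ w (s := 1 - s) (t := 1 - t) ⟨by linarith [hs.2], by linarith [hs.1]⟩
        ⟨by linarith [ht.2], by linarith [ht.1]⟩
      rwa [sub_sub_sub_cancel_left, abs_sub_comm] at this) hE2
  have i3 : ∫ t in (0 : ℝ)..1, eact H (φ (1 - t) w) = ∫ t in (0 : ℝ)..1, eact H (φ t w) := by
    have := intervalIntegral.integral_comp_sub_left (a := 0) (b := 1)
      (fun t => eact H (φ t w)) 1
    simpa using this
  have i4 := action_eq hn hK hH hψ hφ hφψ w
  rw [i3, ← i4] at i2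
  rw [le_div_iff₀ (by positivity)] at hm
  rw [abs_le] at i1 i2 ⊢
  rw [hW] at hm
  constructor <;> nlinarith [i1.1, i1.2, i2.1, i2.2]

/-- The homotopy turning on `K` forwards and `H` backwards by rescaling. -/
lemma s_stage (hn : 0 < n) (hK : HB K B) (hH : HB (fun _ => H) B)
    {φ ψ : ℝ → Esp n → Esp n} (hφ : IsHamIsotopyOf (fun _ => H) φ) (hψ : IsHamIsotopyOf K ψ)
    (hφψ : ∀ x, ψ 1 x = φ 1 x) {s₀ ε : ℝ} (hs₀ : 0 < s₀) (hs₁ : s₀ ≤ 1) (hε : 0 < ε) :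
    ∃ h₀ > 0, ∀ m : ℕ, ∀ [NeZero (3 * m)], (1 / m : ℝ) ≤ h₀ → ∀ ℓ₀ : ℝ,
      ∃ Θ : (ZMod (3 * m) → Esp n) → (ZMod (3 * m) → Esp n), Adm Θ ∧
        ∀ z, ℓ₀ ≤ Act K H m s₀ 1 1 z → ℓ₀ - ε ≤ Act K H m 1 1 1 (Θ z) := by
  have hB := hK.one_le
  obtain ⟨h₀, hh₀, hN⟩ := s_near hn hK hH hφ hψ hφψ hs₀ (ε := ε / 4) (by positivity)
  refine ⟨h₀, hh₀, fun m _ hm ℓ₀ => ?_⟩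
  have h1' : (1 : ℝ) ∈ Icc (0 : ℝ) 1 := ⟨zero_le_one, le_rfl⟩
  have h0' : (0 : ℝ) ∈ Icc (0 : ℝ) 1 := ⟨le_rfl, zero_le_one⟩
  set C₁ := 2 * B + 2 * B ^ 2 / s₀ ^ 2 with hC₁
  have hC₁0 : 0 < C₁ := by positivity
  have hincr : ∀ s ∈ Icc s₀ 1, ∀ s' ∈ Icc s₀ 1, s ≤ s' → ∀ z : ZMod (3 * m) → Esp n,
      |Act K H m s' 1 1 z - Act K H m s 1 1 z - (s' - s) * (2 * s' *
        ((1 / m : ℝ) * ∑ k ∈ Finset.range m, eact (K (k * (1 / m))) (s'⁻¹ • z (k : ℕ))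
        - (1 / m : ℝ) * ∑ k ∈ Finset.range m, eact H (s'⁻¹ • z (m + k : ℕ))))|
      ≤ 2 * (C₁ * (s' - s) ^ 2) := by
    intro s hs s' hs' hle z
    have e1 := abs_avg_le (mpos m) (u := fun k => sc s' (K (k * (1 / m))) (z (k : ℕ))
      - sc s (K (k * (1 / m))) (z (k : ℕ))
      - (s' - s) * (2 * s' * eact (K (k * (1 / m))) (s'⁻¹ • z (k : ℕ))))
      fun k hk => sc_increment hK hs₀ hs.1 hle hs'.2 (kh_mem (m := m) hk.le) (z (k : ℕ))
    have e2 := abs_avg_le (mpos m) (u := fun k => sc s' H (z (m + k : ℕ))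
      - sc s H (z (m + k : ℕ)) - (s' - s) * (2 * s' * eact H (s'⁻¹ • z (m + k : ℕ))))
      fun k hk => sc_increment hH hs₀ hs.1 hle hs'.2 h0' (z (m + k : ℕ))
    have e3 := (abs_sub _ _).trans (add_le_add e1 e2)
    rw [← two_mul] at e3
    refine le_trans (le_of_eq ?_) e3
    rw [Act_eq, Act_eq]
    simp only [Finset.sum_sub_distrib, ← Finset.mul_sum]
    congr 1
    ring
  have hgen : ∀ s ∈ Icc s₀ 1, ∀ z : ZMod (3 * m) → Esp n,
      |(1 / m : ℝ) * ∑ k ∈ Finset.range m, eact (K (k * (1 / m))) (s⁻¹ • z (k : ℕ))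
        - (1 / m : ℝ) * ∑ k ∈ Finset.range m, eact H (s⁻¹ • z (m + k : ℕ))| ≤ 2 * B := by
    intro s _ z
    refine (abs_sub _ _).trans ?_
    have e1 := abs_avg_le (mpos m) (u := fun k => eact (K (k * (1 / m))) (s⁻¹ • z (k : ℕ)))
      fun k hk => hK.ebdd _ (kh_mem (m := m) hk.le) _
    have e2 := abs_avg_le (mpos m) (u := fun k => eact H (s⁻¹ • z (m + k : ℕ)))
      fun k hk => hH.ebdd 0 h0' _
    linarith
  obtain ⟨Θ, hΘ, h⟩ := push_slots (m := m) hK hH hs₁ (S := fun s => s) (R := fun _ => 1)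
    (C := fun _ => 1) (fun s hs => ⟨hs₀.le.trans hs.1, hs.2⟩) (fun _ _ => h1') (fun _ _ => h1')
    (ℓ := fun s => ℓ₀ - ε * (s - s₀)) (c := 4 * B + 2 * C₁) (κ₁ := ε / (4 * C₁))
    (by positivity) (by positivity)
    (fun s hs s' hs' hle z => by
      have e1 := (abs_le.1 (hincr s hs s' hs' hle z)).1
      have e2 := (abs_le.1 (hgen s' hs' z)).1
      set E := (1 / m : ℝ) * ∑ k ∈ Finset.range m, eact (K (k * (1 / m))) (s'⁻¹ • z (k : ℕ))
        - (1 / m : ℝ) * ∑ k ∈ Finset.range m, eact H (s'⁻¹ • z (m + k : ℕ))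
      have d0 : 0 ≤ s' - s := by linarith
      have d1 : s' - s ≤ 1 := by linarith [hs'.2, hs.1]
      have p0 : 0 ≤ s' := hs₀.le.trans hs'.1
      have e3 : -(4 * B) ≤ 2 * s' * E := by nlinarith [hs'.2]
      have e4 : (s' - s) * (-(4 * B)) ≤ (s' - s) * (2 * s' * E) := by gcongr
      have e5 : C₁ * (s' - s) ^ 2 ≤ C₁ * (s' - s) := by
        gcongr; nlinarith
      nlinarith)
    (fun s hs s' hs' hle => by
      have d0 : 0 ≤ s' - s := by linarith
      have d1 : 0 ≤ (4 * B + 2 * C₁) * (s' - s) := by positivity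
      nlinarith)
    (fun s hs s' hs' hle hκ z hz hℓ => by
      have e1 := (abs_le.1 (hincr s hs s' hs' hle z)).1
      have e2 := (abs_le.1 (hN m hm s' hs' z hz)).1
      set E := (1 / m : ℝ) * ∑ k ∈ Finset.range m, eact (K (k * (1 / m))) (s'⁻¹ • z (k : ℕ))
        - (1 / m : ℝ) * ∑ k ∈ Finset.range m, eact H (s'⁻¹ • z (m + k : ℕ))
      have d0 : 0 ≤ s' - s := by linarith
      have p0 : 0 ≤ s' := hs₀.le.trans hs'.1
      have e3 : -(ε / 2) ≤ 2 * s' * E := by nlinarith [hs'.2]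
      have e4 : (s' - s) * (-(ε / 2)) ≤ (s' - s) * (2 * s' * E) := by gcongr
      have d1 : s' - s ≤ ε / (4 * C₁) := by linarith
      rw [le_div_iff₀ (by positivity)] at d1
      have e5 : 2 * (C₁ * (s' - s) ^ 2) ≤ (s' - s) * (ε / 2) := by nlinarith
      nlinarith)
  refine ⟨Θ, hΘ, fun z hz => ?_⟩
  have := h z (by simpa using hz)
  have h2 : ε * (1 - s₀) ≤ ε := by nlinarith
  linarith

end stages

/-! ### Removing the autonomous Hamiltonian; the starting level -/

section stages

variable {n : ℕ} {K : ℝ → Esp n → ℝ} {H : Esp n → ℝ} {B : ℝ}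

/-- An autonomous Hamiltonian is almost preserved by one step of an almost critical chain. -/
lemma H_step (hH : HB (fun _ => H) B) {x y : Esp n} {h r : ℝ}
    (h1 : ‖y - x‖ ≤ 2 * B * h) (h2 : ‖y - x - h • r • hamVF H x‖ ≤ 4 * B ^ 2 * h ^ 2) :
    |H y - H x| ≤ 8 * B ^ 3 * h ^ 2 := by
  have hB := hH.one_le
  have h0' : (0 : ℝ) ∈ Icc (0 : ℝ) 1 := ⟨le_rfl, zero_le_one⟩
  have hG := hH.gb h0'
  have h3 := taylor_bound hG.diff hG.dlip x (y - x)
  rw [add_sub_cancel] at h3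
  have h4 : fderiv ℝ H x (y - x) = fderiv ℝ H x (y - x - h • r • hamVF H x) := by
    rw [map_sub _ (y - x), map_smul, map_smul, fderiv_eq_omega H x (hamVF H x), omega0_self]
    simp
  have h5 : |fderiv ℝ H x (y - x)| ≤ B * (4 * B ^ 2 * h ^ 2) := by
    rw [h4, ← Real.norm_eq_abs]
    refine (ContinuousLinearMap.le_opNorm _ _).trans ?_
    exact mul_le_mul (hG.dbdd x) h2 (norm_nonneg _) (by linarith)
  have h6 : B * ‖y - x‖ ^ 2 ≤ B * (2 * B * h) ^ 2 := by gcongr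
  have h7 := abs_add_le (H y - H x - fderiv ℝ H x (y - x)) (fderiv ℝ H x (y - x))
  rw [sub_add_cancel] at h7
  calc _ ≤ _ := h7
    _ ≤ B * (2 * B * h) ^ 2 + B * (4 * B ^ 2 * h ^ 2) := add_le_add (h3.trans h6) h5
    _ = _ := by ring

/-- The homotopy removing both copies of `H`: they have almost equal contributions along almost
critical chains, by conservation of energy. -/
lemma r_stage (hK : HB K B) (hH : HB (fun _ => H) B) {ε : ℝ} (hε : 0 < ε) :
    ∃ h₀ > 0, ∀ m : ℕ, ∀ [NeZero (3 * m)], (1 / m : ℝ) ≤ h₀ → ∀ ℓ₀ : ℝ,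
      ∃ Θ : (ZMod (3 * m) → Esp n) → (ZMod (3 * m) → Esp n), Adm Θ ∧
        ∀ z, ℓ₀ ≤ Act K H m 1 1 1 z → ℓ₀ - ε ≤ Act K H m 1 0 0 (Θ z) := by
  have hB := hK.one_le
  refine ⟨ε / (26 * B ^ 3), by positivity, fun m _ hm ℓ₀ => ?_⟩
  have h1' : (1 : ℝ) ∈ Icc (0 : ℝ) 1 := ⟨zero_le_one, le_rfl⟩
  have h0' : (0 : ℝ) ∈ Icc (0 : ℝ) 1 := ⟨le_rfl, zero_le_one⟩
  have hmp := mpos m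
  have hp := hpos m
  have mh' := mh m
  rw [le_div_iff₀ (by positivity)] at hm
  have hdiff : ∀ r r' : ℝ, ∀ z : ZMod (3 * m) → Esp n, Act K H m 1 r' r' z =
      Act K H m 1 r r z - (r' - r) *
        ((1 / m : ℝ) * ∑ k ∈ Finset.range m, H (z (m + k : ℕ))
        - (1 / m : ℝ) * ∑ k ∈ Finset.range m, H (z (2 * m + k : ℕ))) := by
    intro r r' z
    rw [Act_eq, Act_eq, sc_one]
    ring
  have hgen : ∀ z : ZMod (3 * m) → Esp n, |(1 / m : ℝ) * ∑ k ∈ Finset.range m, H (z (m + k : ℕ))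
        - (1 / m : ℝ) * ∑ k ∈ Finset.range m, H (z (2 * m + k : ℕ))| ≤ 2 * B := by
    intro z
    have e1 := abs_avg_le hmp (u := fun k => H (z (m + k : ℕ))) fun k hk => hH.bdd 0 h0' _
    have e2 := abs_avg_le hmp (u := fun k => H (z (2 * m + k : ℕ))) fun k hk => hH.bdd 0 h0' _
    have := abs_sub ((1 / m : ℝ) * ∑ k ∈ Finset.range m, H (z (m + k : ℕ)))
      ((1 / m : ℝ) * ∑ k ∈ Finset.range m, H (z (2 * m + k : ℕ)))
    linarith
  have hnear : ∀ r ∈ Icc (0 : ℝ) 1, ∀ z : ZMod (3 * m) → Esp n,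
      NAct K H m 1 r r z ≤ (1 / m) ^ 4 →
      |(1 / m : ℝ) * ∑ k ∈ Finset.range m, H (z (m + k : ℕ))
        - (1 / m : ℝ) * ∑ k ∈ Finset.range m, H (z (2 * m + k : ℕ))| ≤ ε := by
    intro r hr z hz
    have hclose := near_close_nat hK hH h1' hr hr hz
    have s2 := fun (k : ℕ) (hk : k + 1 < m) => step_two hK hH h1' hr hr hz hk
    have s3 := fun (k : ℕ) (hk : k + 1 < m) => step_three hK hH h1' hr hr hz hk
    simp only [inv_one, one_smul] at s2
    set h : ℝ := 1 / m with hh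
    have q2 := telescope (y := fun k : ℕ => H (z (m + k : ℕ))) (N := m - 1)
      (c := 8 * B ^ 3 * h ^ 2)
      (fun k hk => H_step hH (hclose (m + k)) (s2 k (by omega)))
    have q3 := telescope (y := fun k : ℕ => H (z (2 * m + k : ℕ))) (N := m - 1)
      (c := 8 * B ^ 3 * h ^ 2)
      (fun k hk => H_step hH (hclose (2 * m + k)) (s3 k (by omega)))
    have bd : ∀ k : ℕ, k < m → (k : ℝ) * (8 * B ^ 3 * h ^ 2) ≤ 8 * B ^ 3 * h := by
      intro k hk
      have : (k : ℝ) ≤ m := by exact_mod_cast hk.le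
      calc _ ≤ (m : ℝ) * (8 * B ^ 3 * h ^ 2) := by gcongr
        _ = _ := by linear_combination (8 * B ^ 3 * h) * mh'
    have a2 := abs_avg_sub_le hmp (u := fun k => H (z (m + k : ℕ)))
      (v := fun _ => H (z (m + 0 : ℕ))) (c := 8 * B ^ 3 * h)
      fun k hk => (q2 k (by omega)).trans (bd k hk)
    have a3 := abs_avg_sub_le hmp (u := fun k => H (z (2 * m + k : ℕ)))
      (v := fun _ => H (z (2 * m + 0 : ℕ))) (c := 8 * B ^ 3 * h)
      fun k hk => (q3 k (by omega)).trans (bd k hk)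
    have j1 : |H (z (m + (m - 1) : ℕ)) - H (z (m + 0 : ℕ))| ≤ 8 * B ^ 3 * h :=
      (q2 (m - 1) le_rfl).trans (bd (m - 1) (by omega))
    have j2 : |H (z (2 * m + 0 : ℕ)) - H (z (m + (m - 1) : ℕ))| ≤ 2 * B ^ 3 * h := by
      have e1 := hH.lip 0 h0' 0 h0' (z (2 * m + 0 : ℕ)) (z (m + (m - 1) : ℕ))
      have e2 := hclose (m + (m - 1))
      rw [show m + (m - 1) + 1 = 2 * m + 0 by omega] at e2
      rw [sub_self, abs_zero, zero_add] at e1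
      calc _ ≤ B * ‖z (2 * m + 0 : ℕ) - z (m + (m - 1) : ℕ)‖ := e1
        _ ≤ B * (2 * B * h) := by gcongr
        _ = 2 * B ^ 2 * h := by ring
        _ ≤ _ := by gcongr <;> first | assumption | norm_num
    simp only [Finset.sum_const, Finset.card_range, nsmul_eq_mul, ← mul_assoc] at a2 a3
    rw [mul_comm h (m : ℝ), mh', one_mul] at a2 a3
    rw [abs_le] at a2 a3 j1 j2 ⊢
    constructor <;> linarith [a2.1, a2.2, a3.1, a3.2, j1.1, j1.2, j2.1, j2.2]
  obtain ⟨Θ, hΘ, h⟩ := push_slots (m := m) hK hH (a := 0) (b := 1) zero_le_one (S := fun _ => 1)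
    (R := fun σ => 1 - σ) (C := fun σ => 1 - σ) (fun _ _ => h1')
    (fun σ hσ => ⟨by linarith [hσ.2], by linarith [hσ.1]⟩)
    (fun σ hσ => ⟨by linarith [hσ.2], by linarith [hσ.1]⟩)
    (ℓ := fun σ => ℓ₀ - ε * σ) (c := 2 * B) (κ₁ := 1) (by positivity) one_pos
    (fun σ hσ σ' hσ' hle z => by
      have e := (abs_le.1 (hgen z)).1
      rw [hdiff (1 - σ) (1 - σ')]
      have d : 0 ≤ σ' - σ := by linarith
      nlinarith)
    (fun σ hσ σ' hσ' hle => by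
      have d : 0 ≤ σ' - σ := by linarith
      have d1 : 0 ≤ 2 * B * (σ' - σ) := by positivity
      nlinarith)
    (fun σ hσ σ' hσ' hle _ z hz hℓ => by
      have e := (abs_le.1 (hnear (1 - σ') ⟨by linarith [hσ'.2], by linarith [hσ'.1]⟩ z hz)).1
      rw [hdiff (1 - σ) (1 - σ')]
      have d : 0 ≤ σ' - σ := by linarith
      nlinarith)
  refine ⟨Θ, hΘ, fun z hz => ?_⟩
  have := h z (by simpa using hz)
  simpa using this

/-- Comparison of the end of the first homotopy with the beginning of the second: turning on `K` and
`H` at a small scale `s`, and moving the last coefficient from `b` to `1`, changes the action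
little. -/
lemma jump (hK : HB K B) (hH : HB (fun _ => H) B) {m : ℕ} [NeZero (3 * m)] {s b : ℝ}
    (hb : b ≤ 1) (z : ZMod (3 * m) → Esp n) :
    Act K H m 0 1 b z - 2 * (s ^ 2 * B) - (1 - b) * B ≤ Act K H m s 1 1 z := by
  have hB := hK.one_le
  have h0' : (0 : ℝ) ∈ Icc (0 : ℝ) 1 := ⟨le_rfl, zero_le_one⟩
  have hsc : ∀ (f : Esp n → ℝ) x, (∀ y, |f y| ≤ B) → |sc s f x| ≤ s ^ 2 * B := by
    intro f x hf
    rw [sc, abs_mul, abs_of_nonneg (sq_nonneg s)]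
    exact mul_le_mul_of_nonneg_left (hf _) (sq_nonneg s)
  have e1 := abs_avg_le (mpos m) (u := fun k => sc s (K (k * (1 / m))) (z (k : ℕ)))
    fun k hk => hsc _ _ fun y => hK.bdd _ (kh_mem (m := m) hk.le) y
  have e2 := abs_avg_le (mpos m) (u := fun k => sc s H (z (m + k : ℕ)))
    fun k hk => hsc _ _ fun y => hH.bdd 0 h0' y
  have e3 := abs_avg_le (mpos m) (u := fun k => H (z (2 * m + k : ℕ)))
    fun k hk => hH.bdd 0 h0' _
  rw [abs_le] at e1 e2 e3
  rw [Act_eq, Act_eq]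
  simp only [sc_zero, Finset.sum_const_zero, mul_zero]
  nlinarith [e1.1, e2.2, e3.1]

/-- On the affine subspace through a maximum of `H`, the action with a small coefficient of `H`
is bounded below by its value at the constant chain. -/
lemma start {a : ℝ} (hH : HB (fun _ => H) B) {p : Esp n}
    (hp : ∀ x, H x ≤ H p) (ha : 0 ≤ a) (haB : 4 * a * B ≤ 1) {m : ℕ} [NeZero (3 * m)]
    {q : ZMod (3 * m) → Fin n → ℝ} (hq : q 0 = 0) :
    a * H p ≤ Act K H m 0 1 a (fun j => p + iotaL (3 * m) n m q j) := by
  have hB := hH.one_le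
  have h0' : (0 : ℝ) ∈ Icc (0 : ℝ) 1 := ⟨le_rfl, zero_le_one⟩
  have hG := hH.gb h0'
  have hmp := mpos m
  have hm0 : (0 : ℝ) < m := by exact_mod_cast hmp
  set D : ℝ := ∑ j, ∑ i, (q (j + 1) i - q j i) ^ 2 with hD
  have hD0 : 0 ≤ D := Finset.sum_nonneg fun j _ => Finset.sum_nonneg fun i _ => sq_nonneg _
  have hQ : Qact (fun j => p + iotaL (3 * m) n m q j) = m * D := by
    rw [← Qact_iotaL]
    have h2 : ∑ j, ∑ i, p.2 i * (q (j + 1) i - q j i) = 0 := by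
      rw [Finset.sum_comm]
      refine Finset.sum_eq_zero fun i _ => ?_
      rw [← Finset.mul_sum, sum_diff_eq_zero fun j => q j i, mul_zero]
    simp only [Qact]
    rw [← add_zero (∑ j, ∑ i, ((iotaL (3 * m) n m) q j).2 i * _), ← h2, ← Finset.sum_add_distrib]
    refine Finset.sum_congr rfl fun j _ => ?_
    rw [← Finset.sum_add_distrib]
    refine Finset.sum_congr rfl fun i _ => ?_
    simp [iotaL]
    ring
  -- squared norms of the steps
  have hstep : ∀ j, ‖q (j + 1) - q j‖ ^ 2 ≤ ∑ i, (q (j + 1) i - q j i) ^ 2 := by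
    intro j
    have h1 : ‖q (j + 1) - q j‖ ≤ √(∑ i, (q (j + 1) i - q j i) ^ 2) := by
      rw [pi_norm_le_iff_of_nonneg (Real.sqrt_nonneg _)]
      intro i
      rw [Real.norm_eq_abs]
      refine Real.abs_le_sqrt ?_
      exact Finset.single_le_sum (f := fun i => (q (j + 1) i - q j i) ^ 2)
        (fun i _ => sq_nonneg _) (Finset.mem_univ i)
    calc _ ≤ √(∑ i, (q (j + 1) i - q j i) ^ 2) ^ 2 := by gcongr
      _ = _ := Real.sq_sqrt (Finset.sum_nonneg fun i _ => sq_nonneg _)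
  have hsum : ∑ k ∈ Finset.range (3 * m), ‖q ((k : ℕ) + 1) - q (k : ℕ)‖ ^ 2 ≤ D := by
    rw [hD, ← sum_zmod fun j => ‖q (j + 1) - q j‖ ^ 2]
    exact Finset.sum_le_sum fun j _ => hstep j
  have hdisp : ∀ k ≤ 3 * m, ‖q (k : ℕ)‖ ^ 2 ≤ 3 * m * D := by
    intro k hk
    have h1 : ‖q (k : ℕ)‖ ≤ ∑ i ∈ Finset.range k, ‖q ((i : ℕ) + 1) - q (i : ℕ)‖ := by
      have := dist_le_range_sum_dist (fun k : ℕ => q (k : ℕ)) k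
      simp only [Nat.cast_zero, hq, dist_comm (0 : Fin n → ℝ), dist_zero_right] at this
      refine this.trans (le_of_eq (Finset.sum_congr rfl fun i _ => ?_))
      rw [dist_comm, dist_eq_norm]; push_cast; rfl
    have h2 := sq_sum_le_card_mul_sum_sq (s := Finset.range k)
      (f := fun i : ℕ => ‖q ((i : ℕ) + 1) - q (i : ℕ)‖)
    rw [Finset.card_range] at h2
    have h3 : ∑ i ∈ Finset.range k, ‖q ((i : ℕ) + 1) - q (i : ℕ)‖ ^ 2 ≤ D :=
      (Finset.sum_le_sum_of_subset_of_nonneg (Finset.range_mono hk)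
        fun i _ _ => sq_nonneg _).trans hsum
    have h4 : (k : ℝ) ≤ 3 * m := by exact_mod_cast hk
    calc _ ≤ (∑ i ∈ Finset.range k, ‖q ((i : ℕ) + 1) - q (i : ℕ)‖) ^ 2 := by gcongr
      _ ≤ _ := h2
      _ ≤ 3 * m * D := by
        have := Finset.sum_nonneg (s := Finset.range k) (f := fun i : ℕ =>
          ‖q ((i : ℕ) + 1) - q (i : ℕ)‖ ^ 2) fun i _ => sq_nonneg _
        gcongr
  have hmax : fderiv ℝ H p = 0 := IsLocalMax.fderiv_eq_zero (Filter.Eventually.of_forall hp)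
  have hHk : ∀ k ∈ Finset.range m, H p - B * (3 * m * D)
      - B * (m ^ 2 * ‖q ((2 * m + k : ℕ) + 1) - q (2 * m + k : ℕ)‖ ^ 2)
      ≤ H (p + iotaL (3 * m) n m q (2 * m + k : ℕ)) := by
    intro k hk
    have hk' := Finset.mem_range.1 hk
    set v := iotaL (3 * m) n m q (2 * m + k : ℕ) with hv
    have h1 := (abs_le.1 (taylor_bound hG.diff hG.dlip p v)).1
    rw [hmax] at h1
    have h2 : ‖v‖ ^ 2 ≤ ‖q (2 * m + k : ℕ)‖ ^ 2
        + m ^ 2 * ‖q ((2 * m + k : ℕ) + 1) - q (2 * m + k : ℕ)‖ ^ 2 := by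
      have e1 : ‖v.2‖ = m * ‖q ((2 * m + k : ℕ) + 1) - q (2 * m + k : ℕ)‖ := by
        simp only [hv, iotaL, LinearMap.coe_mk, AddHom.coe_mk]
        rw [norm_smul, Real.norm_of_nonneg hm0.le]
      have e2 : v.1 = q (2 * m + k : ℕ) := rfl
      rw [Prod.norm_def, ← mul_pow, ← e1, ← e2]
      rcases max_cases ‖v.1‖ ‖v.2‖ with h | h <;> rw [h.1] <;>
        nlinarith [sq_nonneg ‖v.1‖, sq_nonneg ‖v.2‖]
    have h3 := hdisp (2 * m + k) (by omega)
    have h4 : B * ‖v‖ ^ 2 ≤ B * (3 * m * D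
        + m ^ 2 * ‖q ((2 * m + k : ℕ) + 1) - q (2 * m + k : ℕ)‖ ^ 2) := by
      gcongr; linarith
    simp only [zero_apply] at h1
    linarith
  have htail : ∑ k ∈ Finset.range m, ‖q ((2 * m + k : ℕ) + 1) - q (2 * m + k : ℕ)‖ ^ 2 ≤ D := by
    have h2 : 3 * m = 2 * m + m := by ring
    rw [show Finset.range (3 * m) = Finset.range (2 * m + m) by rw [← h2],
      Finset.sum_range_add] at hsum
    refine le_trans ?_ hsum
    exact le_add_of_nonneg_left (Finset.sum_nonneg fun k _ => sq_nonneg _)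
  have hS := Finset.sum_le_sum hHk
  rw [Finset.sum_sub_distrib, Finset.sum_const, Finset.card_range, nsmul_eq_mul,
    ← Finset.mul_sum, ← Finset.mul_sum] at hS
  have hS' : m * (H p - 4 * B * m * D) ≤
      ∑ k ∈ Finset.range m, H (p + iotaL (3 * m) n m q (2 * m + k : ℕ)) := by
    have : B * (m ^ 2 * ∑ k ∈ Finset.range m,
      ‖q ((2 * m + k : ℕ) + 1) - q (2 * m + k : ℕ)‖ ^ 2) ≤ B * (m ^ 2 * D) := by gcongr
    nlinarith
  rw [Act_eq, hQ]
  simp only [sc_zero, Finset.sum_const_zero, mul_zero, add_zero, sub_zero]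
  have hav : H p - 4 * B * m * D ≤ (1 / m) *
      ∑ k ∈ Finset.range m, H (p + iotaL (3 * m) n m q (2 * m + k : ℕ)) := by
    calc _ = (1 / m) * (m * (H p - 4 * B * m * D)) := by field_simp
      _ ≤ _ := by gcongr
  have h1 : 4 * a * B * (m * D) ≤ 1 * (m * D) := by gcongr
  nlinarith [mul_le_mul_of_nonneg_left hav ha]

end stages

/-! ### The estimate for the maximum -/

section core

variable {n : ℕ} {K : ℝ → Esp n → ℝ} {H : Esp n → ℝ} {B : ℝ}

lemma HB.bddAbove (hK : HB K B) {t : ℝ} (ht : t ∈ Icc (0 : ℝ) 1) : BddAbove (range (K t)) :=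
  ⟨B, by rintro _ ⟨x, rfl⟩; exact (abs_le.1 (hK.bdd t ht x)).2⟩

lemma HB.sup_lip (hK : HB K B) : ∀ s ∈ Icc (0 : ℝ) 1, ∀ t ∈ Icc (0 : ℝ) 1,
    |sSup (range (K s)) - sSup (range (K t))| ≤ B * |s - t| := by
  have key : ∀ s ∈ Icc (0 : ℝ) 1, ∀ t ∈ Icc (0 : ℝ) 1,
      sSup (range (K s)) ≤ sSup (range (K t)) + B * |s - t| := by
    intro s hs t ht
    refine csSup_le (range_nonempty _) ?_
    rintro _ ⟨x, rfl⟩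
    have h1 := hK.lip s hs t ht x x
    rw [sub_self, norm_zero, add_zero] at h1
    have h2 := le_csSup (hK.bddAbove ht) (mem_range_self x)
    linarith [(abs_le.1 h1).2]
  intro s hs t ht
  have h1 := key s hs t ht
  have h2 := key t ht s hs
  rw [abs_sub_comm t s] at h2
  rw [abs_le]; constructor <;> linarith

/-- The maximum of `H` is at most the positive part of the Hofer length of any `K` generating the
same time-one map. The four stages lift the value of the action, on the linked half-dimensional
family, from `a * H p` in the easy range to almost `H p` for the action of `K` alone; the linking
property then produces a point where the quadratic part is nonpositive. -/
lemma max_le_integral (hn : 0 < n) (hK : HB K B) (hH : HB (fun _ => H) B)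
    (hno : ∀ γ : ℝ → Esp n, (∀ t, HasDerivAt γ (hamVF H (γ t)) t) →
      ∀ T, 0 < T → T < 1 → γ T = γ 0 → ∀ t, γ t = γ 0)
    {φ ψ : ℝ → Esp n → Esp n} (hφ : IsHamIsotopyOf (fun _ => H) φ) (hψ : IsHamIsotopyOf K ψ)
    (hφψ : ∀ x, ψ 1 x = φ 1 x) {p : Esp n} (hp : ∀ x, H x ≤ H p) :
    H p ≤ ∫ t in (0 : ℝ)..1, sSup (range (K t)) := by
  have hB := hK.one_le
  have hB0 : 0 < B := by linarith
  have hM : H p ≤ B := (abs_le.1 (hH.bdd 0 ⟨le_rfl, zero_le_one⟩ p)).2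
  set I := ∫ t in (0 : ℝ)..1, sSup (range (K t)) with hI
  have main : ∀ ε : ℝ, 0 < ε → ε ≤ 1 / 2 → H p ≤ I + ε * (3 + 5 * B) := by
    intro ε hε hε2
    -- `tau_stage` runs from the coefficient `1 / (4 B)`, the largest admissible in `start`, up to
    -- `1 - ε`; the rescaling parameter of `s_stage` starts at `ε`.
    have ha : 0 < 1 / (4 * B) := by positivity
    have ha4 : 1 / (4 * B) ≤ 1 / 4 := one_div_le_one_div_of_le (by norm_num) (by linarith)
    obtain ⟨h₁, hh₁, T₁⟩ := tau_stage hK hH hno hφ ha (b := 1 - ε) (by linarith) (by linarith)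
      hε hM
    obtain ⟨h₂, hh₂, T₂⟩ := s_stage hn hK hH hφ hψ hφψ hε (by linarith) hε
    obtain ⟨h₃, hh₃, T₃⟩ := r_stage hK hH hε
    have hmin : 0 < min (min h₁ h₂) (min h₃ ε) :=
      lt_min (lt_min hh₁ hh₂) (lt_min hh₃ hε)
    obtain ⟨k, hk⟩ := exists_nat_one_div_lt hmin
    obtain ⟨m, hm⟩ : ∃ m, m = k + 1 := ⟨_, rfl⟩
    have : NeZero (3 * m) := ⟨by omega⟩
    have hm0 := mpos m
    have hkm : (1 / m : ℝ) < min (min h₁ h₂) (min h₃ ε) := by rw [hm]; exact_mod_cast hk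
    rw [lt_min_iff, lt_min_iff, lt_min_iff] at hkm
    obtain ⟨⟨hk1, hk2⟩, hk3, hk4⟩ := hkm
    obtain ⟨Θ₁, A₁, T₁⟩ := T₁ m hk1.le
    obtain ⟨Θ₂, A₂, T₂⟩ := T₂ m hk2.le (H p - 2 * ε - ε * (4 * B) + ε)
    obtain ⟨Θ₃, A₃, T₃⟩ := T₃ m hk3.le (H p - 2 * ε - ε * (4 * B))
    obtain ⟨q, hq0, hq⟩ := linking (A₃.comp (A₂.comp A₁)) p
      (m := (m : ℝ)) (by exact_mod_cast hm0)
    have e0 := T₁ _ (start hH hp ha.le (by field_simp; rfl) hq0)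
    set z₁ := Θ₁ (fun j => p + iotaL (3 * m) n m q j)
    have e1 := jump hK hH (b := 1 - ε) (s := ε) (by linarith) z₁
    have e2 := T₂ z₁ (by
      refine le_trans ?_ e1
      have f1 : ε * H p ≤ ε * B := by gcongr
      have f2 : ε ^ 2 * B ≤ ε * B / 2 := by nlinarith [mul_pos hε hB0]
      have f3 : (1 - ε) * (ε * (1 - ε - 1 / (4 * B))) ≤ ε := by
        have g1 : ε * (1 - ε - 1 / (4 * B)) ≤ ε := by nlinarith
        have g2 : 0 ≤ ε * (1 - ε - 1 / (4 * B)) := mul_nonneg hε.le (by linarith)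
        nlinarith
      nlinarith [mul_pos hε hB0])
    have e3 := T₃ (Θ₂ z₁) (by linarith)
    rw [Act_eq] at e3
    set z := Θ₃ (Θ₂ z₁)
    have hR := riemann_sum hK.sup_lip hm0
    have hS : (1 / m : ℝ) * ∑ k ∈ Finset.range m, sc 1 (K (k * (1 / m))) (z (k : ℕ))
        ≤ (1 / m : ℝ) * ∑ k ∈ Finset.range m, sSup (range (K (k * (1 / m)))) := by
      refine mul_le_mul_of_nonneg_left (Finset.sum_le_sum fun k hk => ?_) (hpos m).le
      rw [sc_one]
      exact le_csSup (hK.bddAbove (kh_mem (Finset.mem_range.1 hk).le)) (mem_range_self _)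
    have hBm : B * (1 / m : ℝ) ≤ B * ε := by gcongr
    have := (abs_le.1 hR).2
    -- At the linked chain the action is at most the Riemann sum of the suprema of `K`.
    have hq' : Qact z ≤ 0 := hq
    linarith
  by_contra hlt
  push Not at hlt
  have hd : 0 < H p - I := by linarith
  set ε := min (1 / 2) ((H p - I) / (2 * (3 + 5 * B))) with hεd
  have h1 := main ε (lt_min (by norm_num) (by positivity)) (min_le_left _ _)
  have h2 : ε * (3 + 5 * B) ≤ (H p - I) / 2 := by
    calc ε * (3 + 5 * B) ≤ (H p - I) / (2 * (3 + 5 * B)) * (3 + 5 * B) := by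
          gcongr; exact min_le_right _ _
      _ = _ := by field_simp
  linarith

end core

/-! ### Coordinate swap and conclusion -/

section final

variable {n : ℕ} {K : ℝ → Esp n → ℝ} {H : Esp n → ℝ} {B : ℝ}

/-- The conjugate of `-f` by the anti-symplectic exchange of the `x` and `y` coordinates. -/
def flipH {n : ℕ} (f : Esp n → ℝ) (x : Esp n) : ℝ := -f x.swap

lemma hasDerivAt_swap {γ : ℝ → Esp n} {v : Esp n} {t : ℝ} (h : HasDerivAt γ v t) :
    HasDerivAt (fun s => (γ s).swap) v.swap t := by
  have h1 : HasDerivAt (fun s => (γ s).1) v.1 t := h.fst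
  have h2 : HasDerivAt (fun s => (γ s).2) v.2 t := h.snd
  exact h2.prodMk h1

lemma contDiff_swap : ContDiff ℝ (⊤ : ℕ∞) (fun x : Esp n => x.swap) :=
  contDiff_snd.prodMk contDiff_fst

lemma hamVF_flipH {f : Esp n → ℝ} (hf : Differentiable ℝ f) (x : Esp n) :
    hamVF (flipH f) x = (hamVF f x.swap).swap := by
  have h1 : HasFDerivAt (fun x : Esp n => x.swap)
      ((ContinuousLinearMap.snd ℝ (Fin n → ℝ) (Fin n → ℝ)).prod
        (ContinuousLinearMap.fst ℝ (Fin n → ℝ) (Fin n → ℝ))) x :=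
    hasFDerivAt_snd.prodMk hasFDerivAt_fst
  have h2 := ((hf x.swap).hasFDerivAt.comp x h1).neg
  have h3 : fderiv ℝ (flipH f) x = _ := h2.fderiv
  unfold hamVF
  rw [h3]
  ext i <;> simp

lemma isHamIsotopyOf_flip {φ : ℝ → Esp n → Esp n} (hK : ∀ t, Differentiable ℝ (K t))
    (hφ : IsHamIsotopyOf K φ) :
    IsHamIsotopyOf (fun t => flipH (K t)) (fun t x => (φ t x.swap).swap) := by
  refine ⟨fun x => by simp [hφ.1], fun x t => ?_⟩
  rw [hamVF_flipH (hK t), Prod.swap_swap]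
  exact hasDerivAt_swap (hφ.2 x.swap t)

lemma isCompactlySupported_flip (h : IsCompactlySupported K) :
    IsCompactlySupported fun t => flipH (K t) := by
  obtain ⟨C, hC, h0⟩ := h
  refine ⟨Prod.swap '' C, hC.image continuous_swap, fun t x hx => ?_⟩
  have : x.swap ∉ C := fun hx' => hx ⟨x.swap, hx', Prod.swap_swap x⟩
  simp [flipH, h0 t _ this]

lemma sSup_range_flip (f : Esp n → ℝ) : sSup (range (flipH f)) = -sInf (range f) := by
  rw [Real.sInf_def, neg_neg]
  congr 1
  ext y
  simp only [mem_range, Set.mem_neg, flipH]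
  constructor
  · rintro ⟨x, rfl⟩; exact ⟨x.swap, by simp⟩
  · rintro ⟨x, hx⟩; exact ⟨x.swap, by simp [hx]⟩

lemma exists_max (hH : Continuous H) (hs : HasCompactSupport H) :
    ∃ p, ∀ x, H x ≤ H p :=
  hH.exists_forall_ge_of_hasCompactSupport hs

/-- The total variation of `H` bounds from below the Hofer length of every `K` generating the same
time-one map: `max_le_integral` for `H`, and for its conjugate by the coordinate swap, whose maximum
is `-min H`. -/
lemma totVar_le_hoferLength (hHsm : ContDiff ℝ (⊤ : ℕ∞) H) (hHsupp : HasCompactSupport H)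
    (hno : ∀ γ : ℝ → Esp n, (∀ t, HasDerivAt γ (hamVF H (γ t)) t) →
      ∀ T, 0 < T → T < 1 → γ T = γ 0 → ∀ t, γ t = γ 0)
    {φ ψ : ℝ → Esp n → Esp n} (hφ : IsHamIsotopyOf (fun _ => H) φ)
    (hKsm : ContDiff ℝ (⊤ : ℕ∞) fun q : ℝ × Esp n => K q.1 q.2) (hKs : IsCompactlySupported K)
    (hψ : IsHamIsotopyOf K ψ) (hφψ : ∀ x, ψ 1 x = φ 1 x) : totVar H ≤ hoferLength K := by
  rcases Nat.eq_zero_or_pos n with rfl | hn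
  -- In dimension zero every total variation vanishes.
  · have hc : ∀ f : Esp 0 → ℝ, totVar f = 0 := fun f => by
      have : range f = {f 0} := by
        ext y; simp only [mem_range, mem_singleton_iff]
        exact ⟨fun ⟨x, hx⟩ => by rw [← hx, Subsingleton.elim x 0], fun h => ⟨0, h.symm⟩⟩
      simp [totVar, this]
    simp [hoferLength, hc]
  have hHs : IsCompactlySupported fun _ : ℝ => H :=
    ⟨tsupport H, hHsupp, fun _ x hx => image_eq_zero_of_notMem_tsupport hx⟩
  have hHsm' : ContDiff ℝ (⊤ : ℕ∞) fun q : ℝ × Esp n => (fun _ : ℝ => H) q.1 q.2 :=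
    hHsm.comp contDiff_snd
  have hKt : ∀ t, Differentiable ℝ (K t) := fun t =>
    (hKsm.comp (contDiff_const.prodMk contDiff_id : ContDiff ℝ (⊤ : ℕ∞)
      fun x : Esp n => (t, x))).differentiable (by simp)
  have hHd : Differentiable ℝ H := hHsm.differentiable (by simp)
  have flip_sm : ∀ {L : ℝ → Esp n → ℝ}, (ContDiff ℝ (⊤ : ℕ∞) fun q : ℝ × Esp n => L q.1 q.2) →
      ContDiff ℝ (⊤ : ℕ∞) fun q : ℝ × Esp n => (fun t => flipH (L t)) q.1 q.2 := fun hL =>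
    (hL.comp (contDiff_fst.prodMk (contDiff_swap.comp contDiff_snd) : ContDiff ℝ (⊤ : ℕ∞)
      fun q : ℝ × Esp n => (q.1, q.2.swap))).neg
  obtain ⟨B₁, h₁⟩ := exists_HB hKsm hKs
  obtain ⟨B₂, h₂⟩ := exists_HB hHsm' hHs
  obtain ⟨B₃, h₃⟩ := exists_HB (K := fun t => flipH (K t)) (flip_sm hKsm)
    (isCompactlySupported_flip hKs)
  obtain ⟨B₄, h₄⟩ := exists_HB (K := fun _ => flipH H) (flip_sm (L := fun _ => H) hHsm')
    (isCompactlySupported_flip hHs)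
  set B := max (max B₁ B₂) (max B₃ B₄)
  have hK := h₁ B (by simp [B])
  have hH := h₂ B (by simp [B])
  have hK' := h₃ B (by simp [B])
  have hH' := h₄ B (by simp [B])
  obtain ⟨p, hp⟩ := exists_max hHsm.continuous hHsupp
  have hf : HasCompactSupport (flipH H) := by
    obtain ⟨C, hC, h0⟩ := isCompactlySupported_flip hHs
    exact HasCompactSupport.intro hC fun x hx => h0 0 x hx
  obtain ⟨p', hp'⟩ := exists_max (H := flipH H)
    (hHsm.continuous.comp continuous_swap).neg hf
  have hno' : ∀ γ : ℝ → Esp n, (∀ t, HasDerivAt γ (hamVF (flipH H) (γ t)) t) →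
      ∀ T, 0 < T → T < 1 → γ T = γ 0 → ∀ t, γ t = γ 0 := by
    intro γ hγ T hT hT1 hc t
    have := hno (fun s => (γ s).swap) (fun s => by
      have := hasDerivAt_swap (hγ s)
      rwa [hamVF_flipH hHd, Prod.swap_swap] at this) T hT hT1 (congrArg Prod.swap hc) t
    exact Prod.swap_injective this
  have e1 := max_le_integral hn hK hH hno hφ hψ hφψ hp
  have e2 := max_le_integral hn hK' hH' hno' (isHamIsotopyOf_flip (fun _ => hHd) hφ)
    (isHamIsotopyOf_flip hKt hψ) (fun x => by rw [hφψ]) hp'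
  have m1 : sSup (range H) = H p :=
    IsGreatest.csSup_eq ⟨mem_range_self p, by rintro _ ⟨x, rfl⟩; exact hp x⟩
  have m2 : sSup (range (flipH H)) = flipH H p' :=
    IsGreatest.csSup_eq ⟨mem_range_self p', by rintro _ ⟨x, rfl⟩; exact hp' x⟩
  have i1 : IntervalIntegrable (fun t => sSup (range (K t))) MeasureTheory.volume 0 1 :=
    ContinuousOn.intervalIntegrable (by
      rw [uIcc_of_le zero_le_one]; exact continuousOn_of_lip hK.sup_lip)
  have i2 : IntervalIntegrable (fun t => sSup (range (flipH (K t)))) MeasureTheory.volume 0 1 :=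
    ContinuousOn.intervalIntegrable (by
      rw [uIcc_of_le zero_le_one]; exact continuousOn_of_lip hK'.sup_lip)
  have hL : hoferLength K = (∫ t in (0 : ℝ)..1, sSup (range (K t)))
      + ∫ t in (0 : ℝ)..1, sSup (range (flipH (K t))) := by
    rw [← intervalIntegral.integral_add i1 i2]
    simp only [hoferLength, totVar, sSup_range_flip, sub_eq_add_neg]
  have hV : totVar H = sSup (range H) + sSup (range (flipH H)) := by
    rw [sSup_range_flip, totVar, sub_eq_add_neg]
  rw [hL, hV, m1, m2]
  exact add_le_add e1 e2

end final

/-- (Hofer's criterion, Corollary 1.8 of the paper for `M = ℝ^{2n}`.)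
If `H` is a compactly supported autonomous Hamiltonian on `ℝ^{2n}` with no non-constant
closed trajectory in time less than `1`, and `φ` is its flow, then the Hofer norm of the
time-1 map `φ 1` equals the total variation of `H`. -/
theorem statement1 {n : ℕ} (H : Esp n → ℝ)
    (hHsm : ContDiff ℝ (⊤ : ℕ∞) H) (hHsupp : HasCompactSupport H)
    (hno : ∀ γ : ℝ → Esp n, (∀ t, HasDerivAt γ (hamVF H (γ t)) t) →
      ∀ T, 0 < T → T < 1 → γ T = γ 0 → ∀ t, γ t = γ 0)
    (φ : ℝ → Esp n → Esp n) (hφ : IsHamIsotopyOf (fun _ => H) φ) :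
    sInf {l : ℝ | ∃ (K : ℝ → Esp n → ℝ) (ψ : ℝ → Esp n → Esp n),
        (ContDiff ℝ (⊤ : ℕ∞) fun q : ℝ × Esp n => K q.1 q.2) ∧ IsCompactlySupported K ∧
        IsHamIsotopyOf K ψ ∧ (∀ x, ψ 1 x = φ 1 x) ∧ l = hoferLength K}
      = totVar H := by
  refine IsLeast.csInf_eq ⟨⟨fun _ => H, φ, hHsm.comp contDiff_snd, ⟨tsupport H, hHsupp,
    fun _ x hx => image_eq_zero_of_notMem_tsupport hx⟩, hφ, fun _ => rfl, ?_⟩, ?_⟩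
  · simp [hoferLength]
  · rintro l ⟨K, ψ, hKsm, hKs, hψ, hφψ, rfl⟩
    exact totVar_le_hoferLength hHsm hHsupp hno hφ hKsm hKs hψ hφψ
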